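/- Let n ≥ 3 and let Γ ⊂ ℝⁿ satisfy condition (C) with λ* = (1,−1,…,−1) ∉ closure(Γ) and −λ* = (−1,1,…,1) ∈ Γ. Let B be the open unit ball of ℝⁿ and let u be a positive continuous viscosity solution of λ(A^u) ∈ ∂Γ in B∖{0} satisfying u(x) = o(|x|^{2−n}) as x → 0. Then u can be extended to a positive locally Lipschitz function on B which is a viscosity solution of λ(A^u) ∈ ∂Γ in B. -/

import Mathlib

open Filter Topology MeasureTheory Metric Set
open scoped BigOperators ENNReal NNReal

noncomputable section

/-- `ℝⁿ` with the Euclidean norm. -/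
abbrev Euc (n : ℕ) := EuclideanSpace ℝ (Fin n)

/-- The positive cone `Γₙ = {λ : λᵢ > 0 ∀ i}`. -/
def GammaN (n : ℕ) : Set (Fin n → ℝ) := {lam | ∀ i, 0 < lam i}

/-- Condition (C): `Γ ⊊ ℝⁿ` is a nonempty open symmetric cone with vertex at the origin
satisfying `Γ + Γₙ ⊆ Γ`. -/
def CondC {n : ℕ} (Γ : Set (Fin n → ℝ)) : Prop :=
  Γ.Nonempty ∧ Γ ≠ Set.univ ∧ IsOpen Γ ∧
    (∀ σ : Equiv.Perm (Fin n), ∀ lam ∈ Γ, lam ∘ σ ∈ Γ) ∧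
    (∀ lam ∈ Γ, ∀ t : ℝ, 0 < t → t • lam ∈ Γ) ∧
    (∀ lam ∈ Γ, ∀ mu ∈ GammaN n, lam + mu ∈ Γ)

/-- `λ* = (1, -1, …, -1)`. -/
def lamStar (n : ℕ) : Fin n → ℝ := fun i => if i.val = 0 then 1 else -1

/-- Partial derivative `∂ᵢ v (x)`. -/
def pgrad {n : ℕ} (v : Euc n → ℝ) (x : Euc n) (i : Fin n) : ℝ :=
  fderiv ℝ v x (EuclideanSpace.single i 1)

/-- Second partial derivative `∂ᵢ∂ⱼ v (x)`. -/
def phess {n : ℕ} (v : Euc n → ℝ) (x : Euc n) (i j : Fin n) : ℝ :=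
  fderiv ℝ (fun y => fderiv ℝ v y (EuclideanSpace.single j 1)) x (EuclideanSpace.single i 1)

/-- The Möbius Hessian
`A[v](x) = e^{-2v(x)} (-∇²v + ∇v ⊗ ∇v - ½ |∇v|² I)` as a matrix. -/
def mobius {n : ℕ} (v : Euc n → ℝ) (x : Euc n) : Matrix (Fin n) (Fin n) ℝ :=
  Real.exp (-2 * v x) • Matrix.of fun i j =>
    - phess v x i j + pgrad v x i * pgrad v x j
      - (1 / 2) * (∑ k, (pgrad v x k) ^ 2) * (if i = j then (1 : ℝ) else 0)

/-- The (unordered, permutation-invariant) eigenvalue tuple of the symmetric matrix `M`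
belongs to the (permutation-invariant) set `S`. -/
def EigIn {n : ℕ} (M : Matrix (Fin n) (Fin n) ℝ) (S : Set (Fin n → ℝ)) : Prop :=
  ∃ hM : M.IsHermitian, hM.eigenvalues ∈ S

/-- Viscosity supersolution of `λ(A[v]) ∈ ∂Γ` in `Ω`, i.e. `λ(A[v]) ∈ closure Γ`
in the viscosity sense (for a real-valued `v`). -/
def Supersol {n : ℕ} (Γ : Set (Fin n → ℝ)) (Ω : Set (Euc n)) (v : Euc n → ℝ) : Prop :=
  ∀ x₀ ∈ Ω, ∀ φ : Euc n → ℝ, ContDiff ℝ 2 φ → φ x₀ = v x₀ →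
    (∀ᶠ x in 𝓝[Ω] x₀, φ x ≤ v x) → EigIn (mobius φ x₀) (closure Γ)

/-- Viscosity subsolution of `λ(A[v]) ∈ ∂Γ` in `Ω`, i.e. `λ(A[v]) ∈ ℝⁿ ∖ Γ`
in the viscosity sense (for a real-valued `v`). -/
def Subsol {n : ℕ} (Γ : Set (Fin n → ℝ)) (Ω : Set (Euc n)) (v : Euc n → ℝ) : Prop :=
  ∀ x₀ ∈ Ω, ∀ φ : Euc n → ℝ, ContDiff ℝ 2 φ → φ x₀ = v x₀ →
    (∀ᶠ x in 𝓝[Ω] x₀, v x ≤ φ x) → EigIn (mobius φ x₀) Γᶜ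


/-- The conformal Hessian `A^u(x)` of a positive function `u`, for `n ≥ 3`:
`A^u = -(2/(n-2)) u^{-(n+2)/(n-2)} ∇²u + (2n/(n-2)²) u^{-2n/(n-2)} ∇u⊗∇u
       - (2/(n-2)²) u^{-2n/(n-2)} |∇u|² I`. -/
def confHess {n : ℕ} (u : Euc n → ℝ) (x : Euc n) : Matrix (Fin n) (Fin n) ℝ :=
  Matrix.of fun i j =>
    -(2 / ((n : ℝ) - 2)) * (u x) ^ (-(((n : ℝ) + 2) / ((n : ℝ) - 2))) * phess u x i j
    + (2 * (n : ℝ) / ((n : ℝ) - 2) ^ 2) * (u x) ^ (-(2 * (n : ℝ) / ((n : ℝ) - 2))) *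
        pgrad u x i * pgrad u x j
    - (2 / ((n : ℝ) - 2) ^ 2) * (u x) ^ (-(2 * (n : ℝ) / ((n : ℝ) - 2))) *
        (∑ k, (pgrad u x k) ^ 2) * (if i = j then (1 : ℝ) else 0)

/-- Viscosity supersolution property of `λ(A^u) ∈ ∂Γ` for a positive `u`,
tested with positive `C²` functions. -/
def SupersolU {n : ℕ} (Γ : Set (Fin n → ℝ)) (Ω : Set (Euc n)) (u : Euc n → ℝ) : Prop :=
  ∀ x₀ ∈ Ω, ∀ φ : Euc n → ℝ, ContDiff ℝ 2 φ → (∀ x, 0 < φ x) → φ x₀ = u x₀ →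
    (∀ᶠ x in 𝓝[Ω] x₀, φ x ≤ u x) → EigIn (confHess φ x₀) (closure Γ)

/-- Viscosity subsolution property of `λ(A^u) ∈ ∂Γ` for a positive `u`,
tested with positive `C²` functions. -/
def SubsolU {n : ℕ} (Γ : Set (Fin n → ℝ)) (Ω : Set (Euc n)) (u : Euc n → ℝ) : Prop :=
  ∀ x₀ ∈ Ω, ∀ φ : Euc n → ℝ, ContDiff ℝ 2 φ → (∀ x, 0 < φ x) → φ x₀ = u x₀ →
    (∀ᶠ x in 𝓝[Ω] x₀, u x ≤ φ x) → EigIn (confHess φ x₀) Γᶜ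

/-!
For `u = exp (-(n - 2) / 2 * l)` the conformal Hessian of `u` is `exp (2 * l)` times
`∇²l + ∇l ⊗ ∇l - |∇l|² / 2 I`, so the equation is a closed condition on the second-order superjets
of `l` and of `-l`. Since `±λ*` lie strictly on the right sides of `Γ`, explicit radial functions
are strict barriers on the punctured ball. With `u = o(|x|^(2-n))` they bound `l` on both sides near
the origin, and they exclude superjets at the origin that are not limits of superjets at nearby
points, so the upper semicontinuous extensions of `l` and `-l` satisfy the conditions on the whole
ball. Jensen's maximum principle and doubling of variables, after `exp l` has been perturbed to make
the condition strict, give a comparison principle, which compares `l` with its Kelvin transforms in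
all small spheres. Inversions exchanging `a` and `b` then give `l b - l a ≤ L ‖b - a‖` away from the
origin, so `l` extends to a Lipschitz function, and the conditions hold for it at the origin too.
-/

open scoped InnerProductSpace

section ConvexAnalysis

variable {E : Type*} [NormedAddCommGroup E] [InnerProductSpace ℝ E]

/-- `s` is a global subgradient of `f` at `z`. A function with a subgradient at every point is
convex, and this is how convexity enters below. -/
def HasSubgradient (f : E → ℝ) (z s : E) : Prop := ∀ y, f z + ⟪s, y - z⟫_ℝ ≤ f y

/-- Second-order Peano expansion of `f` at `z` with gradient `s` and Hessian `H`. The operator `H`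
is not required to be symmetric. -/
def HasQuadraticExpansionAt (f : E → ℝ) (z s : E) (H : E →L[ℝ] E) : Prop :=
  (fun y => f y - f z - ⟪s, y - z⟫_ℝ - 1 / 2 * ⟪H (y - z), y - z⟫_ℝ) =o[𝓝 z]
    fun y => ‖y - z‖ ^ 2

theorem HasQuadraticExpansionAt.eventually_abs_le {f : E → ℝ} {z s : E} {H : E →L[ℝ] E}
    (h : HasQuadraticExpansionAt f z s H) {ε : ℝ} (hε : 0 < ε) :
    ∀ᶠ y in 𝓝 z, |f y - f z - ⟪s, y - z⟫_ℝ - 1 / 2 * ⟪H (y - z), y - z⟫_ℝ|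
      ≤ ε * ‖y - z‖ ^ 2 := by
  simpa only [Real.norm_eq_abs, abs_pow, abs_norm] using h.def hε

theorem HasQuadraticExpansionAt.of_eventually_abs_le {f : E → ℝ} {z s : E} {H : E →L[ℝ] E}
    (h : ∀ ε > 0, ∀ᶠ y in 𝓝 z, |f y - f z - ⟪s, y - z⟫_ℝ - 1 / 2 * ⟪H (y - z), y - z⟫_ℝ|
      ≤ ε * ‖y - z‖ ^ 2) :
    HasQuadraticExpansionAt f z s H :=
  Asymptotics.isLittleO_iff.2 fun ε hε => by
    simpa only [Real.norm_eq_abs, abs_pow, abs_norm] using h ε hε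

theorem HasQuadraticExpansionAt.add {f g : E → ℝ} {z s t : E} {H K : E →L[ℝ] E}
    (hf : HasQuadraticExpansionAt f z s H) (hg : HasQuadraticExpansionAt g z t K) :
    HasQuadraticExpansionAt (f + g) z (s + t) (H + K) := by
  refine (Asymptotics.IsLittleO.add hf hg).congr_left fun y => ?_
  simp only [Pi.add_apply, add_apply, inner_add_left]
  ring

theorem HasQuadraticExpansionAt.exists_isSymmetric [CompleteSpace E] {f : E → ℝ} {z s : E}
    {H : E →L[ℝ] E} (h : HasQuadraticExpansionAt f z s H) :
    ∃ S : E →L[ℝ] E, (S : E →ₗ[ℝ] E).IsSymmetric ∧ HasQuadraticExpansionAt f z s S := by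
  refine ⟨(1 / 2 : ℝ) • (H + H.adjoint), fun v w => ?_, h.congr_left fun y => ?_⟩
  · simp only [ContinuousLinearMap.coe_coe, smul_apply, add_apply, real_inner_smul_left,
      real_inner_smul_right, inner_add_left, inner_add_right,
      ContinuousLinearMap.adjoint_inner_left, ContinuousLinearMap.adjoint_inner_right]
    ring
  · rw [smul_apply, add_apply, real_inner_smul_left, inner_add_left,
      ContinuousLinearMap.adjoint_inner_left, real_inner_comm (H (y - z))]
    ring

theorem inner_apply_self_le_of_eventually_le {z : E} {H : E →L[ℝ] E} {c : ℝ}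
    (h : ∀ ε > 0, ∀ᶠ y in 𝓝 z, ⟪H (y - z), y - z⟫_ℝ ≤ (c + ε) * ‖y - z‖ ^ 2) (v : E) :
    ⟪H v, v⟫_ℝ ≤ c * ‖v‖ ^ 2 := by
  suffices hε : ∀ ε > 0, ⟪H v, v⟫_ℝ ≤ (c + ε) * ‖v‖ ^ 2 by
    have hlim : Tendsto (fun ε : ℝ => (c + ε) * ‖v‖ ^ 2) (𝓝[>] 0) (𝓝 ((c + 0) * ‖v‖ ^ 2)) :=
      (Continuous.tendsto (by fun_prop) 0).mono_left nhdsWithin_le_nhds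
    simpa using ge_of_tendsto hlim (eventually_mem_nhdsWithin.mono hε)
  intro ε hε
  have hlim : Tendsto (fun t : ℝ => z + t • v) (𝓝[>] 0) (𝓝 z) := by
    have hc : Continuous fun t : ℝ => z + t • v := by fun_prop
    simpa using (hc.tendsto 0).mono_left nhdsWithin_le_nhds
  obtain ⟨t, hle, ht⟩ := ((hlim.eventually (h ε hε)).and eventually_mem_nhdsWithin).exists
  have ht : 0 < t := ht
  simp only [add_sub_cancel_left, map_smul, real_inner_smul_left, real_inner_smul_right, norm_smul,
    Real.norm_eq_abs, abs_of_pos ht, mul_pow] at hle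
  refine le_of_mul_le_mul_left ?_ (pow_pos ht 2)
  linarith

theorem norm_le_of_inner_le_quadratic {q : E} {C t : ℝ} (hC : 0 < C) (ht : 0 ≤ t)
    (h : ∀ w, ⟪q, w⟫_ℝ ≤ C * (‖w‖ ^ 2 + t ^ 2)) : ‖q‖ ≤ 2 * C * t := by
  have hw := h ((2 * C)⁻¹ • q)
  rw [real_inner_smul_right, real_inner_self_eq_norm_sq, norm_smul, Real.norm_eq_abs,
    abs_of_pos (by positivity), mul_pow] at hw
  refine le_of_sq_le_sq ?_ (by positivity)
  field_simp at hw
  linarith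

section Subgradient

variable {f : E → ℝ}

theorem HasSubgradient.inner_nonneg {z s z' s' : E} (h : HasSubgradient f z s)
    (h' : HasSubgradient f z' s') : 0 ≤ ⟪s' - s, z' - z⟫_ℝ := by
  have hz := h z'
  have hz' := h' z
  rw [← neg_sub z' z, inner_neg_right] at hz'
  rw [inner_sub_left]
  linarith

theorem HasSubgradient.norm_sub_le {z s z' s' : E} (h : HasSubgradient f z s)
    (h' : HasSubgradient f z' s') : ‖z' - z‖ ≤ ‖z' + s' - (z + s)‖ := by
  have hmono := h.inner_nonneg h'
  rw [add_sub_add_comm]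
  refine le_of_sq_le_sq ?_ (norm_nonneg _)
  rw [norm_add_sq_real, real_inner_comm]
  nlinarith [sq_nonneg ‖s' - s‖]

theorem HasSubgradient.add {g : E → ℝ} {z s t : E} (hf : HasSubgradient f z s)
    (hg : HasSubgradient g z t) : HasSubgradient (f + g) z (s + t) := fun y => by
  have h₁ := hf y
  have h₂ := hg y
  rw [inner_add_left]
  simp only [Pi.add_apply]
  linarith

theorem HasSubgradient.fderiv_eq {z s : E} (h : HasSubgradient f z s)
    (hf : DifferentiableAt ℝ f z) : innerSL ℝ s = fderiv ℝ f z := by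
  have hmin : IsLocalMin (fun y => f y - innerSL ℝ s y) z := Eventually.of_forall fun y => by
    have := h y
    simp only [innerSL_apply_apply, inner_sub_right] at this ⊢
    linarith
  have hderiv := hf.hasFDerivAt.sub (innerSL ℝ s).hasFDerivAt
  exact (sub_eq_zero.1 (hmin.hasFDerivAt_eq_zero hderiv)).symm

theorem HasSubgradient.eq_of_differentiableAt {z s t : E} (hs : HasSubgradient f z s)
    (ht : HasSubgradient f z t) (hf : DifferentiableAt ℝ f z) : s = t :=
  innerSL_inj.1 ((hs.fderiv_eq hf).trans (ht.fderiv_eq hf).symm)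

theorem lipschitzWith_of_hasSubgradient {M : ℝ≥0} (h : ∀ z, ∃ s, ‖s‖ ≤ M ∧ HasSubgradient f z s) :
    LipschitzWith M f := by
  refine LipschitzWith.of_le_add_mul M fun x y => ?_
  obtain ⟨s, hs, hf⟩ := h x
  have hinner : -⟪s, y - x⟫_ℝ ≤ M * dist x y :=
    calc -⟪s, y - x⟫_ℝ ≤ ‖s‖ * ‖y - x‖ := (neg_le_abs _).trans (abs_real_inner_le_norm s _)
      _ ≤ M * dist x y := by rw [dist_comm, dist_eq_norm]; gcongr
  linarith [hf y]

theorem continuousAt_subgradient [FiniteDimensional ℝ E] {σ : E → E} {M : ℝ}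
    (hM : ∀ z, ‖σ z‖ ≤ M) (hσ : ∀ z, HasSubgradient f z (σ z)) (hf : Continuous f) {z : E}
    (hz : DifferentiableAt ℝ f z) : ContinuousAt σ z := by
  have : ProperSpace E := FiniteDimensional.proper ℝ E
  refine (isCompact_closedBall (0 : E) M).tendsto_nhds_of_unique_mapClusterPt
    (Eventually.of_forall fun y => by simpa using hM y) fun s _ hs => ?_
  obtain ⟨U, hUz, hUs⟩ := mapClusterPt_iff_ultrafilter.1 hs
  refine HasSubgradient.eq_of_differentiableAt (f := f) (fun y => ?_) (hσ z) hz
  have hlim : Tendsto (fun x => f x + ⟪σ x, y - x⟫_ℝ) U (𝓝 (f z + ⟪s, y - z⟫_ℝ)) :=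
    ((hf.tendsto z).mono_left hUz).add (hUs.inner (tendsto_const_nhds.sub hUz))
  exact le_of_tendsto hlim (Eventually.of_forall fun x => hσ x y)

end Subgradient

theorem abs_sub_le_of_abs_sub_le_add_sq {g : ℝ → ℝ} {A C : ℝ}
    (h : ∀ a b, 0 ≤ a → a ≤ b → b ≤ 1 → |g b - g a| ≤ A * (b - a) + C * (b - a) ^ 2) :
    |g 1 - g 0| ≤ A := by
  have hN : ∀ N : ℕ, |g 1 - g 0| ≤ A + C * (1 / ((N : ℝ) + 1)) := fun N => by
    set x : ℕ → ℝ := fun i => i / ((N : ℝ) + 1) with hx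
    have hstep : ∀ i ∈ Finset.range (N + 1), |g (x (i + 1)) - g (x i)|
        ≤ A * (1 / ((N : ℝ) + 1)) + C * (1 / ((N : ℝ) + 1)) ^ 2 := fun i hi => by
      have hi' : (i : ℝ) + 1 ≤ N + 1 := by exact_mod_cast Finset.mem_range.1 hi
      have hsub : x (i + 1) - x i = 1 / ((N : ℝ) + 1) := by simp only [hx]; push_cast; ring
      rw [← hsub]
      refine h _ _ (by positivity) (sub_nonneg.1 (by rw [hsub]; positivity)) ?_
      rw [hx, div_le_one (by positivity)]
      exact_mod_cast hi'
    calc |g 1 - g 0| = |∑ i ∈ Finset.range (N + 1), (g (x (i + 1)) - g (x i))| := by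
          rw [Finset.sum_range_sub fun i => g (x i)]
          simp [hx, div_self (Nat.cast_add_one_ne_zero N : (N : ℝ) + 1 ≠ 0)]
      _ ≤ ∑ i ∈ Finset.range (N + 1), |g (x (i + 1)) - g (x i)| := Finset.abs_sum_le_sum_abs _ _
      _ ≤ ∑ _i ∈ Finset.range (N + 1), (A * (1 / ((N : ℝ) + 1)) + C * (1 / ((N : ℝ) + 1)) ^ 2) :=
          Finset.sum_le_sum hstep
      _ = A + C * (1 / ((N : ℝ) + 1)) := by
          rw [Finset.sum_const, Finset.card_range, nsmul_eq_mul]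
          push_cast
          field_simp
  have hlim : Tendsto (fun N : ℕ => A + C * (1 / ((N : ℝ) + 1))) atTop (𝓝 (A + C * 0)) :=
    (tendsto_one_div_add_atTop_nhds_zero_nat.const_mul C).const_add A
  simpa using ge_of_tendsto' hlim hN

-- Both differences `f b - f a` and `f a - f b` along a segment are controlled by a subgradient,
-- so the Peano remainder telescopes although `σ` is only differentiable at the single point `z`.
theorem hasQuadraticExpansionAt_of_hasFDerivAt_subgradient {f : E → ℝ} {σ : E → E}
    (hσ : ∀ z, HasSubgradient f z (σ z)) {z : E} {H : E →L[ℝ] E} (hH : HasFDerivAt σ H z) :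
    HasQuadraticExpansionAt f z (σ z) H := by
  refine .of_eventually_abs_le fun η hη => ?_
  obtain ⟨r, hr, hσr⟩ := Metric.eventually_nhds_iff.1 (hH.isLittleO.def hη)
  refine Metric.eventually_nhds_iff.2 ⟨r, hr, fun y hy => ?_⟩
  set v := y - z with hv
  set g : ℝ → ℝ := fun t => f (z + t • v) - t * ⟪σ z, v⟫_ℝ - t ^ 2 / 2 * ⟪H v, v⟫_ℝ with hg
  have hslope : ∀ t : ℝ, 0 ≤ t → t ≤ 1 →
      |⟪σ (z + t • v), v⟫_ℝ - ⟪σ z, v⟫_ℝ - t * ⟪H v, v⟫_ℝ| ≤ η * ‖v‖ ^ 2 := fun t h0 h1 => by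
    have htv : ‖t • v‖ ≤ ‖v‖ := by
      rw [norm_smul, Real.norm_of_nonneg h0]
      exact mul_le_of_le_one_left (norm_nonneg v) h1
    have hσt := hσr (y := z + t • v) (by
      rw [dist_self_add_left]
      exact htv.trans_lt (by rwa [hv, ← dist_eq_norm]))
    rw [add_sub_cancel_left, map_smul] at hσt
    calc |⟪σ (z + t • v), v⟫_ℝ - ⟪σ z, v⟫_ℝ - t * ⟪H v, v⟫_ℝ|
        = |⟪σ (z + t • v) - σ z - t • H v, v⟫_ℝ| := by
          rw [inner_sub_left, inner_sub_left, real_inner_smul_left]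
      _ ≤ ‖σ (z + t • v) - σ z - t • H v‖ * ‖v‖ := abs_real_inner_le_norm _ _
      _ ≤ η * ‖v‖ * ‖v‖ := by gcongr; exact hσt.trans (by gcongr)
      _ = η * ‖v‖ ^ 2 := by ring
  have hincr : |g 1 - g 0| ≤ η * ‖v‖ ^ 2 := by
    refine abs_sub_le_of_abs_sub_le_add_sq (C := |⟪H v, v⟫_ℝ|) fun a b h0 hab h1 => ?_
    have ha := abs_le.1 (hslope a h0 (hab.trans h1))
    have hb := abs_le.1 (hslope b (h0.trans hab) h1)
    have hfa := hσ (z + a • v) (z + b • v)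
    have hfb := hσ (z + b • v) (z + a • v)
    rw [add_sub_add_left_eq_sub, ← sub_smul, real_inner_smul_right] at hfa hfb
    have hba : 0 ≤ b - a := sub_nonneg.2 hab
    have hq₁ := mul_le_mul_of_nonneg_left ha.1 hba
    have hq₂ := mul_le_mul_of_nonneg_left hb.2 hba
    have hq₃ := mul_le_mul_of_nonneg_left (neg_abs_le ⟪H v, v⟫_ℝ) (sq_nonneg (b - a))
    have hq₄ := mul_le_mul_of_nonneg_left (le_abs_self ⟪H v, v⟫_ℝ) (sq_nonneg (b - a))
    simp only [hg, abs_le]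
    constructor <;> nlinarith
  have hend : g 1 - g 0 = f y - f z - ⟪σ z, v⟫_ℝ - 1 / 2 * ⟪H v, v⟫_ℝ := by
    simp [hg, hv]
    ring
  rwa [← hend]

end ConvexAnalysis

section Alexandrov

variable {E : Type*} [NormedAddCommGroup E] [InnerProductSpace ℝ E] [FiniteDimensional ℝ E]
  [MeasurableSpace E] [BorelSpace E] {μ : Measure E} [μ.IsAddHaarMeasure]

theorem addHaar_image_eq_zero_of_lipschitzOnWith {P : E → E} {s : Set E} {K : ℝ≥0}
    (hP : LipschitzOnWith K P s) (hs : μ s = 0) : μ (P '' s) = 0 := by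
  set ν : Measure E := μH[Module.finrank ℝ E]
  have hνμ : ν ≪ μ := by
    rw [Measure.isAddLeftInvariant_eq_smul ν μ]
    exact Measure.smul_absolutelyContinuous
  have hμν : μ ≪ ν := by
    rw [Measure.isAddLeftInvariant_eq_smul μ ν]
    exact Measure.smul_absolutelyContinuous
  have hle := hP.hausdorffMeasure_image_le (d := Module.finrank ℝ E) (Nat.cast_nonneg _)
  rw [hνμ hs, mul_zero] at hle
  exact hμν (nonpos_iff_eq_zero.1 hle)

variable {f : E → ℝ} {σ : E → E}

-- The resolvent `P`, the left inverse of `z ↦ z + σ z`, is 1-Lipschitz on its domain `Y`. Hence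
-- the `P`-images of the points where `P` is not differentiable (Rademacher) and of those where
-- its derivative is singular (Sard) are null; elsewhere the inverse of `P` is differentiable.
theorem ae_exists_hasFDerivAt_subgradient (hσ : ∀ z, HasSubgradient f z (σ z))
    (hcont : ∀ᵐ z ∂μ, ContinuousAt σ z) : ∀ᵐ z ∂μ, ∃ H : E →L[ℝ] E, HasFDerivAt σ H z := by
  set φ : E → E := fun z => z + σ z with hφ
  have hexp : ∀ a b, ‖b - a‖ ≤ ‖φ b - φ a‖ := fun a b => (hσ a).norm_sub_le (hσ b)
  have hinj : Function.Injective φ := fun a b hab => by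
    have hba := hexp a b
    rw [hab, sub_self, norm_zero] at hba
    exact (sub_eq_zero.1 (norm_le_zero_iff.1 hba)).symm
  set P := Function.invFun φ
  have hPφ : ∀ z, P (φ z) = z := Function.leftInverse_invFun hinj
  set Y := range φ
  have hPlip : LipschitzOnWith 1 P Y := by
    refine LipschitzOnWith.of_dist_le_mul ?_
    rintro _ ⟨a, rfl⟩ _ ⟨b, rfl⟩
    simpa [hPφ, dist_eq_norm] using hexp b a
  have hrademacher : μ (P '' {y ∈ Y | ¬ DifferentiableWithinAt ℝ P Y y}) = 0 := by
    refine addHaar_image_eq_zero_of_lipschitzOnWith (hPlip.mono (sep_subset _ _)) ?_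
    simpa [ae_iff, and_comm] using hPlip.ae_differentiableWithinAt_of_mem (μ := μ)
  have hsard : μ (P '' {y ∈ Y | DifferentiableWithinAt ℝ P Y y ∧
      (fderivWithin ℝ P Y y).det = 0}) = 0 :=
    addHaar_image_eq_zero_of_det_fderivWithin_eq_zero μ
      (fun y hy => hy.2.1.hasFDerivWithinAt.mono (sep_subset _ _)) fun y hy => hy.2.2
  filter_upwards [hcont, measure_eq_zero_iff_ae_notMem.1 hrademacher,
    measure_eq_zero_iff_ae_notMem.1 hsard] with z hσz hdiff hdet
  replace hdiff : DifferentiableWithinAt ℝ P Y (φ z) := by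
    by_contra hcon
    exact hdiff ⟨φ z, ⟨⟨z, rfl⟩, hcon⟩, hPφ z⟩
  replace hdet : (fderivWithin ℝ P Y (φ z)).det ≠ 0 := fun hcon =>
    hdet ⟨φ z, ⟨⟨z, rfl⟩, hdiff, hcon⟩, hPφ z⟩
  set L := (fderivWithin ℝ P Y (φ z)).toContinuousLinearEquivOfDetNeZero hdet
  have hPL : HasFDerivWithinAt P (L : E →L[ℝ] E) Y (φ z) := hdiff.hasFDerivWithinAt
  have hφlim : Tendsto φ (𝓝[univ] z) (𝓝[Y] (φ z)) := by
    rw [nhdsWithin_univ]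
    exact tendsto_nhdsWithin_iff.2
      ⟨continuousAt_id.add hσz, Eventually.of_forall fun y => ⟨y, rfl⟩⟩
  have hφ' : HasFDerivAt φ (L.symm : E →L[ℝ] E) z := hasFDerivWithinAt_univ.1
    (HasFDerivWithinAt.of_local_left_inverse hφlim hPL (mem_univ z) (Eventually.of_forall hPφ))
  refine ⟨L.symm - ContinuousLinearMap.id ℝ E, (hφ'.sub (hasFDerivAt_id z)).congr_of_eventuallyEq
    (Eventually.of_forall fun y => ?_)⟩
  simp [hφ]

theorem ae_exists_hasQuadraticExpansionAt {M : ℝ≥0} (hM : ∀ z, ‖σ z‖ ≤ M)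
    (hσ : ∀ z, HasSubgradient f z (σ z)) :
    ∀ᵐ z ∂μ, ∃ H : E →L[ℝ] E, (H : E →ₗ[ℝ] E).IsSymmetric ∧
      HasQuadraticExpansionAt f z (σ z) H := by
  have hlip : LipschitzWith M f := lipschitzWith_of_hasSubgradient fun z => ⟨σ z, hM z, hσ z⟩
  have hcont : ∀ᵐ z ∂μ, ContinuousAt σ z := hlip.ae_differentiableAt.mono fun z hz =>
    continuousAt_subgradient hM hσ hlip.continuous hz
  filter_upwards [ae_exists_hasFDerivAt_subgradient hσ hcont] with z ⟨H, hH⟩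
  exact (hasQuadraticExpansionAt_of_hasFDerivAt_subgradient hσ hH).exists_isSymmetric

end Alexandrov

section Jensen

variable {E : Type*} [NormedAddCommGroup E] [InnerProductSpace ℝ E]

/-- The paraboloid of opening `2C` and slope `q` through `(z, g z)` lies above the graph of `g`. -/
def IsTouchedAbove (g : E → ℝ) (C : ℝ) (z q : E) : Prop :=
  ∀ y, g y ≤ g z + ⟪q, y - z⟫_ℝ + C * ‖y - z‖ ^ 2

variable {g : E → ℝ} {C : ℝ}

theorem IsTouchedAbove.eq_of_hasSubgradient {z q s : E} (hC : 0 < C) (h : IsTouchedAbove g C z q)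
    (hs : HasSubgradient g z s) : s = q := by
  refine sub_eq_zero.1 (norm_le_zero_iff.1 ?_)
  simpa using norm_le_of_inner_le_quadratic (q := s - q) hC le_rfl fun w => by
    have h₁ := h (z + w)
    have h₂ := hs (z + w)
    rw [add_sub_cancel_left] at h₁ h₂
    rw [inner_sub_left]
    linarith

theorem IsTouchedAbove.norm_sub_le {z z' q q' : E} (hC : 0 < C) (h : IsTouchedAbove g C z q)
    (h' : IsTouchedAbove g C z' q') (hq : HasSubgradient g z q) :
    ‖q - q'‖ ≤ 2 * C * ‖z - z'‖ := by
  refine norm_le_of_inner_le_quadratic hC (norm_nonneg _) fun w => ?_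
  have h₁ := h z'
  have h₂ := h' (z' + w)
  have h₃ := hq (z' + w)
  rw [add_sub_cancel_left] at h₂
  rw [add_sub_right_comm, inner_add_right] at h₃
  rw [inner_sub_left, norm_sub_rev z z']
  linarith

theorem IsTouchedAbove.inner_apply_self_le {z q : E} {H : E →L[ℝ] E} (h : IsTouchedAbove g C z q)
    (hH : HasQuadraticExpansionAt g z q H) (v : E) : ⟪H v, v⟫_ℝ ≤ 2 * C * ‖v‖ ^ 2 := by
  refine inner_apply_self_le_of_eventually_le (z := z) (fun ε hε => ?_) v
  filter_upwards [hH.eventually_abs_le (half_pos hε)] with y hy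
  have hy' := (abs_le.1 hy).1
  have := h y
  linarith

theorem exists_isTouchedAbove [FiniteDimensional ℝ E] {M : ℝ≥0} (hg : LipschitzWith M g)
    (hC : 0 < C) (p : E) : ∃ z, IsTouchedAbove g C z (p + (2 * C) • z) := by
  have : ProperSpace E := FiniteDimensional.proper ℝ E
  obtain ⟨z, hz⟩ : ∃ z, ∀ y, g y - C * ‖y‖ ^ 2 - ⟪p, y⟫_ℝ ≤ g z - C * ‖z‖ ^ 2 - ⟪p, z⟫_ℝ := by
    have hcont : Continuous fun y => g y - C * ‖y‖ ^ 2 - ⟪p, y⟫_ℝ := by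
      have := hg.continuous
      fun_prop
    refine hcont.exists_forall_ge' 0 ?_
    filter_upwards [(tendsto_norm_cocompact_atTop (E := E)).eventually_gt_atTop ((M + ‖p‖) / C)]
      with y hy
    have hgy : g y - g 0 ≤ M * ‖y‖ := by
      simpa using (le_abs_self _).trans (hg.dist_le_mul y 0)
    have hpy : -⟪p, y⟫_ℝ ≤ ‖p‖ * ‖y‖ := (neg_le_abs _).trans (abs_real_inner_le_norm p y)
    have hCy : (M + ‖p‖) * ‖y‖ ≤ ‖y‖ * C * ‖y‖ :=
      mul_le_mul_of_nonneg_right ((div_lt_iff₀ hC).1 hy).le (norm_nonneg y)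
    simp only [norm_zero, inner_zero_right]
    nlinarith
  refine ⟨z, fun y => ?_⟩
  have hzy := hz y
  have hsq := norm_add_sq_real z (y - z)
  rw [add_sub_cancel] at hsq
  rw [inner_add_left, real_inner_smul_left, inner_sub_right p]
  linear_combination hzy + C * hsq

variable [FiniteDimensional ℝ E] [MeasurableSpace E] [BorelSpace E] {μ : Measure E}
  [μ.IsAddHaarMeasure]

-- Jensen's lemma: `z ↦ σ z - 2C z` maps the contact points Lipschitz-continuously onto a ball,
-- so they cannot form a null set.
theorem exists_isTouchedAbove_of_ae {σ : E → E} {M : ℝ≥0} {η : ℝ} {p : E → Prop}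
    (hM : ∀ z, ‖σ z‖ ≤ M) (hσ : ∀ z, HasSubgradient g z (σ z)) (hC : 0 < C) (hη : 0 < η)
    (hp : ∀ᵐ z ∂μ, p z) :
    ∃ z, IsTouchedAbove g C z (σ z) ∧ ‖σ z - (2 * C) • z‖ ≤ η ∧ p z := by
  set K : Set E := {z | IsTouchedAbove g C z (σ z) ∧ ‖σ z - (2 * C) • z‖ ≤ η}
  have hlip : LipschitzOnWith (4 * C).toNNReal (fun z => σ z - (2 * C) • z) K := by
    refine LipschitzOnWith.of_dist_le_mul fun z hz z' hz' => ?_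
    rw [dist_eq_norm, dist_eq_norm, Real.coe_toNNReal _ (by positivity)]
    calc ‖σ z - (2 * C) • z - (σ z' - (2 * C) • z')‖ = ‖σ z - σ z' - (2 * C) • (z - z')‖ := by
          rw [smul_sub]; abel_nf
      _ ≤ ‖σ z - σ z'‖ + ‖(2 * C) • (z - z')‖ := norm_sub_le _ _
      _ ≤ 2 * C * ‖z - z'‖ + 2 * C * ‖z - z'‖ := by
          rw [norm_smul, Real.norm_of_nonneg (by positivity : 0 ≤ 2 * C)]
          gcongr
          exact hz.1.norm_sub_le hC hz'.1 (hσ z)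
      _ = 4 * C * ‖z - z'‖ := by ring
  have hsurj : closedBall (0 : E) η ⊆ (fun z => σ z - (2 * C) • z) '' K := fun q hq => by
    have hg : LipschitzWith M g := lipschitzWith_of_hasSubgradient fun z => ⟨σ z, hM z, hσ z⟩
    obtain ⟨z, hz⟩ := exists_isTouchedAbove hg hC q
    have hσz := hz.eq_of_hasSubgradient hC (hσ z)
    refine ⟨z, ⟨hσz ▸ hz, ?_⟩, ?_⟩
    · simpa [hσz] using hq
    · simp [hσz]
  by_contra! hcon
  have hnull : μ K = 0 := measure_mono_null (fun z hz hpz => hcon z hz.1 hz.2 hpz) hp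
  exact (measure_closedBall_pos μ (0 : E) hη).ne'
    (measure_mono_null hsurj (addHaar_image_eq_zero_of_lipschitzOnWith hlip hnull))

end Jensen

section Doubling

variable {E : Type*} [NormedAddCommGroup E]

/-- `x` attains the sup-convolution `sup_{y ∈ D} (c y - N / 2 * ‖y - z‖ ^ 2)` at `z`. -/
def IsProximalPoint (D : Set E) (c : E → ℝ) (N : ℝ) (z x : E) : Prop :=
  x ∈ D ∧ ∀ y ∈ D, c y - N / 2 * ‖y - z‖ ^ 2 ≤ c x - N / 2 * ‖x - z‖ ^ 2

/-- The sup-convolution of `c`, read off from a selection `X` of proximal points, plus the square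
`N / 2 * ‖z‖ ^ 2` that makes it convex. -/
def proximalEnvelope (c : E → ℝ) (N : ℝ) (X : E → E) (z : E) : ℝ :=
  c (X z) - N / 2 * ‖X z - z‖ ^ 2 + N / 2 * ‖z‖ ^ 2

variable {D : Set E} {c : E → ℝ} {N : ℝ}

theorem IsProximalPoint.le_proximalEnvelope {X : E → E} {z : E}
    (hX : IsProximalPoint D c N z (X z)) {y : E} (hy : y ∈ D) :
    c y - N / 2 * ‖y - z‖ ^ 2 + N / 2 * ‖z‖ ^ 2 ≤ proximalEnvelope c N X z :=
  add_le_add_left (hX.2 y hy) _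

theorem exists_isProximalPoint (hD : IsCompact D) (hne : D.Nonempty)
    (hc : UpperSemicontinuousOn c D) (z : E) : ∃ x, IsProximalPoint D c N z x := by
  have hquad : Continuous fun x : E => -(N / 2 * ‖x - z‖ ^ 2) := by fun_prop
  obtain ⟨x, hx, hmax⟩ :=
    (hc.add hquad.continuousOn.upperSemicontinuousOn).exists_isMaxOn hne hD
  refine ⟨x, hx, fun y hy => ?_⟩
  have hle : c y + -(N / 2 * ‖y - z‖ ^ 2) ≤ c x + -(N / 2 * ‖x - z‖ ^ 2) := hmax hy
  linarith

variable [InnerProductSpace ℝ E]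

/-- `(p, X)` is a second-order superjet of `m` at `x` relative to `D`. -/
def IsSuperjetWithin (D : Set E) (m : E → ℝ) (x p : E) (X : E →L[ℝ] E) : Prop :=
  ∀ τ > 0, ∀ᶠ y in 𝓝[D] x,
    m y ≤ m x + ⟪p, y - x⟫_ℝ + 1 / 2 * ⟪X (y - x), y - x⟫_ℝ + τ * ‖y - x‖ ^ 2

theorem hasSubgradient_proximalEnvelope {X : E → E} (hX : ∀ z, IsProximalPoint D c N z (X z))
    (z : E) : HasSubgradient (proximalEnvelope c N X) z (N • X z) := fun y => by
  have hy := (hX y).le_proximalEnvelope (hX z).1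
  have h₁ := norm_sub_sq_real (X z) y
  have h₂ := norm_sub_sq_real (X z) z
  rw [real_inner_smul_left, inner_sub_right]
  simp only [proximalEnvelope] at hy ⊢
  linear_combination hy + N / 2 * h₁ - N / 2 * h₂

theorem isSuperjetWithin_of_proximalEnvelope {X : E → E} {H : E →L[ℝ] E}
    (hX : ∀ z, IsProximalPoint D c N z (X z)) {z : E}
    (hH : HasQuadraticExpansionAt (proximalEnvelope c N X) z (N • X z) H) :
    IsSuperjetWithin D c (X z) (N • (X z - z)) (H - N • ContinuousLinearMap.id ℝ E) := by
  intro τ hτ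
  have hshift : Tendsto (fun y => z + (y - X z)) (𝓝[D] (X z)) (𝓝 z) := by
    have hcont : Continuous fun y => z + (y - X z) := by fun_prop
    simpa using (hcont.tendsto (X z)).mono_left nhdsWithin_le_nhds
  filter_upwards [hshift.eventually (hH.eventually_abs_le hτ), self_mem_nhdsWithin] with y hy hyD
  set v := y - X z with hv
  have henv := (hX (z + v)).le_proximalEnvelope hyD
  have hexp := (abs_le.1 hy).2
  have hyv : y - (z + v) = X z - z := by rw [hv]; abel
  have hsq := norm_add_sq_real z v
  rw [hyv] at henv
  rw [add_sub_cancel_left] at hexp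
  simp only [proximalEnvelope, real_inner_smul_left, inner_sub_left, sub_apply, smul_apply,
    ContinuousLinearMap.id_apply, real_inner_self_eq_norm_sq] at henv hexp ⊢
  linear_combination henv + hexp - N / 2 * hsq

/-- The output of doubling variables for `a + b` on `D` with penalty
`N / 2 * (‖x - z‖ ^ 2 + ‖y - z‖ ^ 2)` and tilt `η`: an almost maximum of the penalized function
together with superjets `(N • (x - z), X)` of `a` and `(N • (y - z), Y)` of `b`. -/
structure IsDoublingPoint (D : Set E) (a b : E → ℝ) (N η : ℝ) (x y z : E) (X Y : E →L[ℝ] E) :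
    Prop where
  left_mem : x ∈ D
  right_mem : y ∈ D
  add_sub_le : ∀ t ∈ D, a t + b t - η * ‖t - z‖
    ≤ a x + b y - N / 2 * (‖x - z‖ ^ 2 + ‖y - z‖ ^ 2)
  norm_gradient_add_le : ‖N • (x - z) + N • (y - z)‖ ≤ η
  isSymmetric_left : (X : E →ₗ[ℝ] E).IsSymmetric
  isSymmetric_right : (Y : E →ₗ[ℝ] E).IsSymmetric
  hessian_add_nonpos : ∀ v, ⟪X v, v⟫_ℝ + ⟪Y v, v⟫_ℝ ≤ 0
  superjet_left : IsSuperjetWithin D a x (N • (x - z)) X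
  superjet_right : IsSuperjetWithin D b y (N • (y - z)) Y

theorem exists_isDoublingPoint [FiniteDimensional ℝ E] (hD : IsCompact D) (hne : D.Nonempty)
    {a b : E → ℝ} (ha : UpperSemicontinuousOn a D) (hb : UpperSemicontinuousOn b D) {η : ℝ}
    (hN : 0 < N) (hη : 0 < η) : ∃ x y z X Y, IsDoublingPoint D a b N η x y z X Y := by
  borelize E
  choose A hA using exists_isProximalPoint (N := N) hD hne ha
  choose B hB using exists_isProximalPoint (N := N) hD hne hb
  obtain ⟨R, hR⟩ := hD.isBounded.exists_norm_le
  have hbound : ∀ x ∈ D, ‖N • x‖ ≤ (N * R).toNNReal := fun x hx => by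
    rw [norm_smul, Real.norm_of_nonneg hN.le]
    exact (mul_le_mul_of_nonneg_left (hR x hx) hN.le).trans (Real.le_coe_toNNReal _)
  have hsubA := hasSubgradient_proximalEnvelope hA
  have hsubB := hasSubgradient_proximalEnvelope hB
  have hexpA := ae_exists_hasQuadraticExpansionAt (μ := μH[Module.finrank ℝ E])
    (fun z => hbound _ (hA z).1) hsubA
  have hexpB := ae_exists_hasQuadraticExpansionAt (μ := μH[Module.finrank ℝ E])
    (fun z => hbound _ (hB z).1) hsubB
  obtain ⟨z, htouch, hslope, ⟨H, hHs, hH⟩, K, hKs, hK⟩ :=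
    exists_isTouchedAbove_of_ae (M := (N * R).toNNReal + (N * R).toNNReal)
      (fun z => norm_add_le_of_le (hbound _ (hA z).1) (hbound _ (hB z).1))
      (fun z => (hsubA z).add (hsubB z)) hN hη (hexpA.and hexpB)
  have hgrad : N • (A z - z) + N • (B z - z) = N • A z + N • B z - (2 * N) • z := by
    rw [smul_sub, smul_sub, two_mul, add_smul]; abel
  have hid : ((N • ContinuousLinearMap.id ℝ E : E →L[ℝ] E) : E →ₗ[ℝ] E).IsSymmetric :=
    LinearMap.IsSymmetric.id.smul rfl
  refine ⟨A z, B z, z, H - N • ContinuousLinearMap.id ℝ E, K - N • ContinuousLinearMap.id ℝ E,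
    (hA z).1, (hB z).1, fun t ht => ?_, hgrad ▸ hslope, hHs.sub hid, hKs.sub hid, fun v => ?_,
    isSuperjetWithin_of_proximalEnvelope hA hH, isSuperjetWithin_of_proximalEnvelope hB hK⟩
  · have htouch := htouch t
    have htA := (hA t).le_proximalEnvelope ht
    have htB := (hB t).le_proximalEnvelope ht
    have hinner := (real_inner_le_norm (N • A z + N • B z - (2 * N) • z) (t - z)).trans
      (mul_le_mul_of_nonneg_right hslope (norm_nonneg _))
    have hsq := norm_add_sq_real z (t - z)
    rw [add_sub_cancel] at hsq
    rw [inner_sub_left, real_inner_smul_left] at hinner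
    simp only [Pi.add_apply, proximalEnvelope, sub_self, norm_zero] at htouch htA htB
    linear_combination htouch + htA + htB + hinner - N * hsq
  · have hHK := htouch.inner_apply_self_le (hH.add hK) v
    simp only [add_apply, sub_apply, smul_apply, ContinuousLinearMap.id_apply, inner_add_left,
      inner_sub_left, real_inner_smul_left, real_inner_self_eq_norm_sq] at hHK ⊢
    linarith

end Doubling

section SecondOrderJets

variable {E : Type*} [NormedAddCommGroup E] [InnerProductSpace ℝ E]

/-- `ψ` is differentiable near `x` and twice differentiable at `x`, with gradient `p` and Hessian
`X` there. -/
def HasTwoJetAt (ψ : E → ℝ) (x p : E) (X : E →L[ℝ] E) : Prop :=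
  ∃ G : E → E, (∀ᶠ y in 𝓝 x, HasFDerivAt ψ (innerSL ℝ (G y)) y) ∧ G x = p ∧ HasFDerivAt G X x

/-- `(p, X)` is a second-order superjet of `m` at `x`. -/
def IsSuperjet (m : E → ℝ) (x p : E) (X : E →L[ℝ] E) : Prop :=
  ∀ τ > 0, ∀ᶠ y in 𝓝 x,
    m y ≤ m x + ⟪p, y - x⟫_ℝ + 1 / 2 * ⟪X (y - x), y - x⟫_ℝ + τ * ‖y - x‖ ^ 2

/-- The quadratic polynomial with value `a`, gradient `p` and Hessian `X` at `x`. -/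
def quadratic (a : ℝ) (x p : E) (X : E →L[ℝ] E) (y : E) : ℝ :=
  a + ⟪p, y - x⟫_ℝ + 1 / 2 * ⟪X (y - x), y - x⟫_ℝ

variable {m ψ ψ' : E → ℝ} {x p p' : E} {X X' : E →L[ℝ] E}

theorem quadratic_self (a : ℝ) (x p : E) (X : E →L[ℝ] E) : quadratic a x p X x = a := by
  simp [quadratic]

theorem isSymmetric_smul_id (t : ℝ) :
    ((t • ContinuousLinearMap.id ℝ E : E →L[ℝ] E) : E →ₗ[ℝ] E).IsSymmetric :=
  LinearMap.IsSymmetric.id.smul rfl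

theorem isSymmetric_neg (hX : (X : E →ₗ[ℝ] E).IsSymmetric) :
    ((-X : E →L[ℝ] E) : E →ₗ[ℝ] E).IsSymmetric := fun v w => by
  simpa using congrArg Neg.neg (hX v w)

theorem hasFDerivAt_quadratic (a : ℝ) (x p : E) (hX : (X : E →ₗ[ℝ] E).IsSymmetric) (y : E) :
    HasFDerivAt (quadratic a x p X) (innerSL ℝ (p + X (y - x))) y := by
  have hsub : HasFDerivAt (fun y : E => y - x) (ContinuousLinearMap.id ℝ E) y :=
    (hasFDerivAt_id y).sub_const x
  have hlin := (hasFDerivAt_const p y).inner ℝ hsub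
  have hquad := (X.hasFDerivAt.comp y hsub).inner ℝ hsub
  refine ((hlin.const_add a).add (hquad.const_mul (1 / 2))).congr_fderiv ?_
  ext v
  have hXv : ⟪X v, y - x⟫_ℝ = ⟪X (y - x), v⟫_ℝ := (hX v (y - x)).trans (real_inner_comm _ _)
  simp only [innerSL_apply_apply, add_apply, smul_apply, ContinuousLinearMap.comp_apply,
    ContinuousLinearMap.prod_apply, fderivInnerCLM_apply, ContinuousLinearMap.id_apply,
    zero_apply, inner_zero_left, inner_add_left, smul_eq_mul, Function.comp_apply, hXv]
  ring

theorem hasTwoJetAt_quadratic (a : ℝ) (x p : E) (hX : (X : E →ₗ[ℝ] E).IsSymmetric) (y : E) :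
    HasTwoJetAt (quadratic a x p X) y (p + X (y - x)) X :=
  ⟨fun y => p + X (y - x), .of_forall (hasFDerivAt_quadratic a x p hX), rfl,
    (X.hasFDerivAt.comp y ((hasFDerivAt_id y).sub_const x)).const_add p⟩

theorem contDiff_quadratic (a : ℝ) (x p : E) (X : E →L[ℝ] E) :
    ContDiff ℝ 2 (quadratic a x p X) := by
  have hsub : ContDiff ℝ 2 fun y : E => y - x := contDiff_id.sub contDiff_const
  exact (contDiff_const.add (contDiff_const.inner ℝ hsub)).add
    (contDiff_const.mul ((X.contDiff.comp hsub).inner ℝ hsub))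

namespace HasTwoJetAt

theorem hasFDerivAt (h : HasTwoJetAt ψ x p X) : HasFDerivAt ψ (innerSL ℝ p) x := by
  obtain ⟨G, hG, rfl, -⟩ := h
  exact hG.self_of_nhds

theorem fderiv_fderiv_apply (h : HasTwoJetAt ψ x p X) (v w : E) :
    fderiv ℝ (fun y => fderiv ℝ ψ y w) x v = ⟪X v, w⟫_ℝ := by
  obtain ⟨G, hG, -, hGX⟩ := h
  have hinner := hGX.inner ℝ (hasFDerivAt_const w x)
  have heq : (fun y => fderiv ℝ ψ y w) =ᶠ[𝓝 x] fun y => ⟪G y, w⟫_ℝ := by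
    filter_upwards [hG] with y hy
    rw [hy.fderiv, innerSL_apply_apply]
  rw [heq.fderiv_eq, hinner.fderiv]
  simp

theorem isSymmetric (h : HasTwoJetAt ψ x p X) : (X : E →ₗ[ℝ] E).IsSymmetric := by
  obtain ⟨G, hG, -, hGX⟩ := h
  intro v w
  have hsymm := second_derivative_symmetric_of_eventually hG
    ((innerSL ℝ : E →L[ℝ] E →L[ℝ] ℝ).hasFDerivAt.comp x hGX) v w
  exact (hsymm : ⟪X v, w⟫_ℝ = ⟪X w, v⟫_ℝ).trans (real_inner_comm _ _)

theorem hasQuadraticExpansionAt (h : HasTwoJetAt ψ x p X) : HasQuadraticExpansionAt ψ x p X := by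
  have hX := h.isSymmetric
  obtain ⟨G, hG, rfl, hGX⟩ := h
  obtain ⟨r, hr, hball⟩ := Metric.eventually_nhds_iff_ball.1 hG
  have hderiv : ∀ y ∈ ball x r, HasFDerivWithinAt (fun y => ψ y - quadratic 0 x (G x) X y)
      (innerSL ℝ (G y - G x - X (y - x))) (ball x r) y := fun y hy => by
    refine ((hball y hy).sub (hasFDerivAt_quadratic 0 x (G x) hX y)).hasFDerivWithinAt.congr_fderiv
      ?_
    rw [← map_sub, sub_add_eq_sub_sub]
  have hlittle : (fun y => innerSL ℝ (G y - G x - X (y - x))) =o[𝓝[ball x r] x]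
      fun y => ‖y - x‖ ^ 1 :=
    (Asymptotics.isLittleO_norm_norm.1 <| by
      simpa only [innerSL_apply_norm, pow_one, norm_norm] using hGX.isLittleO.norm_norm).mono
        nhdsWithin_le_nhds
  have hpeano := (convex_ball x r).isLittleO_pow_succ (mem_ball_self hr) hderiv hlittle
  rw [nhdsWithin_eq_nhds.2 (ball_mem_nhds x hr)] at hpeano
  refine hpeano.congr_left fun y => ?_
  simp only [quadratic, sub_self, map_zero, inner_zero_right]
  ring

theorem comp (h : HasTwoJetAt ψ x p X) {F F' : ℝ → ℝ} {F'' : ℝ}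
    (hF : ∀ᶠ t in 𝓝 (ψ x), HasDerivAt F (F' t) t) (hF' : HasDerivAt F' F'' (ψ x)) :
    HasTwoJetAt (fun y => F (ψ y)) x (F' (ψ x) • p)
      (F' (ψ x) • X + F'' • InnerProductSpace.rankOne ℝ p p) := by
  have hψ := h.hasFDerivAt
  obtain ⟨G, hG, rfl, hGX⟩ := h
  refine ⟨fun y => F' (ψ y) • G y, ?_, rfl, ?_⟩
  · filter_upwards [hG, hψ.continuousAt.eventually hF] with y hGy hFy
    exact (hFy.comp_hasFDerivAt y hGy).congr_fderiv (map_smul (innerSL ℝ) _ _).symm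
  · refine ((hF'.comp_hasFDerivAt x hψ).smul hGX).congr_fderiv ?_
    ext1 v
    simp [smul_smul]

theorem neg (h : HasTwoJetAt ψ x p X) : HasTwoJetAt (fun y => -ψ y) x (-p) (-X) := by
  obtain ⟨G, hG, rfl, hGX⟩ := h
  exact ⟨fun y => -G y, hG.mono fun y hy => by simpa only [map_neg] using hy.fun_neg, rfl,
    hGX.fun_neg⟩

theorem add (h : HasTwoJetAt ψ x p X) (h' : HasTwoJetAt ψ' x p' X') :
    HasTwoJetAt (fun y => ψ y + ψ' y) x (p + p') (X + X') := by
  obtain ⟨G, hG, rfl, hGX⟩ := h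
  obtain ⟨G', hG', rfl, hGX'⟩ := h'
  refine ⟨fun y => G y + G' y, ?_, rfl, hGX.add hGX'⟩
  filter_upwards [hG, hG'] with y hy hy'
  simpa only [map_add] using hy.fun_add hy'

theorem isSuperjet (h : HasTwoJetAt ψ x p X) (hmax : IsLocalMax (fun y => m y - ψ y) x) :
    IsSuperjet m x p X := fun τ hτ => by
  filter_upwards [h.hasQuadraticExpansionAt.eventually_abs_le hτ, hmax] with y hexp hle
  linear_combination hle + (abs_le.1 hexp).2

end HasTwoJetAt

theorem exists_hasTwoJetAt_of_contDiff [CompleteSpace E] (hψ : ContDiff ℝ 2 ψ) (x : E) :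
    ∃ p X, HasTwoJetAt ψ x p X := by
  have hdiff : Differentiable ℝ ψ := hψ.differentiable two_ne_zero
  have hdiff' : DifferentiableAt ℝ (fderiv ℝ ψ) x :=
    (hψ.fderiv_right (m := 1) le_rfl).differentiable one_ne_zero x
  let riesz : (E →L[ℝ] ℝ) →L[ℝ] E :=
    ((InnerProductSpace.toDual ℝ E).symm.toContinuousLinearEquiv : (E →L[ℝ] ℝ) →L⋆[ℝ] E)
  refine ⟨_, _, fun y => riesz (fderiv ℝ ψ y), .of_forall fun y => ?_, rfl,
    riesz.hasFDerivAt.comp x hdiff'.hasFDerivAt⟩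
  exact (hdiff y).hasFDerivAt.congr_fderiv
    ((InnerProductSpace.toDual ℝ E).apply_symm_apply (fderiv ℝ ψ y)).symm

theorem IsSuperjet.eventually_le_quadratic (h : IsSuperjet m x p X) {τ : ℝ} (hτ : 0 < τ) :
    ∀ᶠ y in 𝓝 x, m y ≤ quadratic (m x) x p (X + τ • ContinuousLinearMap.id ℝ E) y := by
  filter_upwards [h (τ / 2) (half_pos hτ)] with y hy
  simp only [quadratic, add_apply, smul_apply, ContinuousLinearMap.id_apply, inner_add_left,
    real_inner_smul_left, real_inner_self_eq_norm_sq]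
  linear_combination hy

theorem IsSuperjetWithin.isSuperjet {D : Set E} (h : IsSuperjetWithin D m x p X)
    (hD : D ∈ 𝓝 x) : IsSuperjet m x p X := fun τ hτ => by
  simpa only [nhdsWithin_eq_nhds.2 hD] using h τ hτ

end SecondOrderJets

section Spectrum

variable {E : Type*} [NormedAddCommGroup E] [InnerProductSpace ℝ E] {n : ℕ}

/-- `b` is an orthonormal basis of eigenvectors of `T` with eigenvalues `d`. -/
def IsEigenbasis (T : E →L[ℝ] E) (b : OrthonormalBasis (Fin n) ℝ E) (d : Fin n → ℝ) : Prop :=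
  ∀ i, T (b i) = d i • b i

theorem IsEigenbasis.inner_apply_self {T : E →L[ℝ] E} {b : OrthonormalBasis (Fin n) ℝ E}
    {d : Fin n → ℝ} (h : IsEigenbasis T b d) (x : E) :
    ⟪T x, x⟫_ℝ = ∑ i, d i * ⟪b i, x⟫_ℝ ^ 2 := by
  have hx : T x = ∑ i, ⟪b i, x⟫_ℝ • d i • b i := by
    conv_lhs => rw [← b.sum_repr' x]
    simp only [map_sum, map_smul, h _]
  rw [hx, sum_inner]
  refine Finset.sum_congr rfl fun i _ => ?_
  rw [real_inner_smul_left, real_inner_smul_left]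
  ring

theorem IsEigenbasis.reindex {T : E →L[ℝ] E} {b : OrthonormalBasis (Fin n) ℝ E}
    {d : Fin n → ℝ} (h : IsEigenbasis T b d) (σ : Equiv.Perm (Fin n)) :
    IsEigenbasis T (b.reindex σ.symm) (d ∘ σ) := fun i => by
  simpa using h (σ i)

theorem exists_ne_zero_forall_inner_eq_zero (b b' : OrthonormalBasis (Fin n) ℝ E) (k : Fin n) :
    ∃ x ≠ 0, (∀ i < k, ⟪b i, x⟫_ℝ = 0) ∧ ∀ i, k < i → ⟪b' i, x⟫_ℝ = 0 := by
  let L : E →ₗ[ℝ] Fin n → ℝ := LinearMap.pi fun i =>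
    if i < k then innerSL ℝ (b i) else if k < i then innerSL ℝ (b' i) else 0
  have hsurj : ¬ Function.Surjective L := fun hs => by
    obtain ⟨x, hx⟩ := hs (Pi.single k 1)
    simpa [L] using congrFun hx k
  have : FiniteDimensional ℝ E := b.toBasis.finiteDimensional_of_finite
  have hinj : ¬ Function.Injective L := fun hi =>
    hsurj <| (LinearMap.injective_iff_surjective_of_finrank_eq_finrank
      (by simp [Module.finrank_eq_card_basis b.toBasis])).1 hi
  rw [injective_iff_map_eq_zero] at hinj
  push Not at hinj
  obtain ⟨x, hLx, hx⟩ := hinj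
  refine ⟨x, hx, fun i hi => ?_, fun i hi => ?_⟩
  · simpa [L, hi] using congrFun hLx i
  · simpa [L, hi, hi.not_gt] using congrFun hLx i

/-- The idea is the Courant-Fischer comparison: some `x ≠ 0` lies both in the span of the
eigenvectors of `T` from `k` on and in the span of those of `T'` up to `k`. -/
theorem IsEigenbasis.le_of_monotone {T T' : E →L[ℝ] E} {b b' : OrthonormalBasis (Fin n) ℝ E}
    {d d' : Fin n → ℝ} (h : IsEigenbasis T b d) (h' : IsEigenbasis T' b' d') (hd : Monotone d)
    (hd' : Monotone d') (hle : ∀ x, ⟪T x, x⟫_ℝ ≤ ⟪T' x, x⟫_ℝ) : d ≤ d' := by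
  intro k
  obtain ⟨x, hx, hlow, hhigh⟩ := exists_ne_zero_forall_inner_eq_zero b b' k
  have hT : d k * ‖x‖ ^ 2 ≤ ⟪T x, x⟫_ℝ := by
    rw [h.inner_apply_self, ← b.sum_sq_inner_right, Finset.mul_sum]
    refine Finset.sum_le_sum fun i _ => ?_
    rcases lt_or_ge i k with hi | hi
    · simp [hlow i hi]
    · exact mul_le_mul_of_nonneg_right (hd hi) (sq_nonneg _)
  have hT' : ⟪T' x, x⟫_ℝ ≤ d' k * ‖x‖ ^ 2 := by
    rw [h'.inner_apply_self, ← b'.sum_sq_inner_right, Finset.mul_sum]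
    refine Finset.sum_le_sum fun i _ => ?_
    rcases lt_or_ge k i with hi | hi
    · simp [hhigh i hi]
    · exact mul_le_mul_of_nonneg_right (hd' hi) (sq_nonneg _)
  exact le_of_mul_le_mul_right (hT.trans ((hle x).trans hT')) (pow_pos (norm_pos_iff.2 hx) 2)

theorem IsEigenbasis.exists_comp_perm_le {T T' : E →L[ℝ] E}
    {b b' : OrthonormalBasis (Fin n) ℝ E} {d d' : Fin n → ℝ} (h : IsEigenbasis T b d)
    (h' : IsEigenbasis T' b' d') (hle : ∀ x, ⟪T x, x⟫_ℝ ≤ ⟪T' x, x⟫_ℝ) :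
    ∃ σ : Equiv.Perm (Fin n), d ∘ σ ≤ d' := by
  refine ⟨(Tuple.sort d').symm.trans (Tuple.sort d), fun i => ?_⟩
  simpa using (h.reindex _).le_of_monotone (h'.reindex _) (Tuple.monotone_sort d)
    (Tuple.monotone_sort d') hle ((Tuple.sort d').symm i)

theorem IsEigenbasis.exists_comp_perm_eq {T : E →L[ℝ] E} {b b' : OrthonormalBasis (Fin n) ℝ E}
    {d d' : Fin n → ℝ} (h : IsEigenbasis T b d) (h' : IsEigenbasis T b' d') :
    ∃ σ : Equiv.Perm (Fin n), d ∘ σ = d' := by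
  have hsort : d ∘ Tuple.sort d = d' ∘ Tuple.sort d' :=
    le_antisymm
      ((h.reindex _).le_of_monotone (h'.reindex _) (Tuple.monotone_sort d)
        (Tuple.monotone_sort d') fun _ => le_rfl)
      ((h'.reindex _).le_of_monotone (h.reindex _) (Tuple.monotone_sort d')
        (Tuple.monotone_sort d) fun _ => le_rfl)
  exact ⟨(Tuple.sort d').symm.trans (Tuple.sort d),
    funext fun i => by simpa using congrFun hsort ((Tuple.sort d').symm i)⟩

/-- `S` is invariant under permutations of the coordinates. -/
def IsPermInvariant (S : Set (Fin n → ℝ)) : Prop :=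
  ∀ σ : Equiv.Perm (Fin n), ∀ d ∈ S, d ∘ σ ∈ S

variable {S : Set (Fin n → ℝ)}

theorem IsPermInvariant.compl (hS : IsPermInvariant S) : IsPermInvariant Sᶜ :=
  fun σ d hd hσ => hd <| by simpa [Function.comp_assoc] using hS σ⁻¹ _ hσ

theorem IsPermInvariant.closure (hS : IsPermInvariant S) : IsPermInvariant (closure S) :=
  fun σ _ hd => map_mem_closure (f := fun d : Fin n → ℝ => d ∘ σ) (by fun_prop) hd (hS σ)

/-- The symmetric operator `T` is orthogonally diagonalizable with eigenvalue tuple in `S`: the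
coordinate-free form of `EigIn`. -/
def HasSpectrumIn (T : E →L[ℝ] E) (S : Set (Fin n → ℝ)) : Prop :=
  ∃ (b : OrthonormalBasis (Fin n) ℝ E) (d : Fin n → ℝ), IsEigenbasis T b d ∧ d ∈ S

theorem IsEigenbasis.hasSpectrumIn_iff {T : E →L[ℝ] E} {b : OrthonormalBasis (Fin n) ℝ E}
    {d : Fin n → ℝ} (h : IsEigenbasis T b d) (hS : IsPermInvariant S) :
    HasSpectrumIn T S ↔ d ∈ S := by
  refine ⟨fun ⟨b', d', h', hd'⟩ => ?_, fun hd => ⟨b, d, h, hd⟩⟩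
  obtain ⟨σ, rfl⟩ := h'.exists_comp_perm_eq h
  exact hS σ d' hd'

theorem IsEigenbasis.add_smul_id {T : E →L[ℝ] E} {b : OrthonormalBasis (Fin n) ℝ E}
    {d : Fin n → ℝ} (h : IsEigenbasis T b d) (t : ℝ) :
    IsEigenbasis (T + t • ContinuousLinearMap.id ℝ E) b fun i => d i + t := fun i => by
  simp [h i, add_smul]

theorem HasSpectrumIn.smul {T : E →L[ℝ] E} {t : ℝ} (hS : ∀ d ∈ S, t • d ∈ S)
    (h : HasSpectrumIn T S) : HasSpectrumIn (t • T) S := by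
  obtain ⟨b, d, hb, hd⟩ := h
  exact ⟨b, t • d, fun i => by simp [hb i, smul_smul], hS d hd⟩

theorem hasSpectrumIn_smul_iff {T : E →L[ℝ] E} (hS : ∀ r : ℝ, 0 < r → ∀ d ∈ S, r • d ∈ S) {t : ℝ}
    (ht : 0 < t) : HasSpectrumIn (t • T) S ↔ HasSpectrumIn T S := by
  refine ⟨fun h => ?_, .smul (hS t ht)⟩
  simpa [smul_smul, ht.ne'] using h.smul (hS t⁻¹ (inv_pos.2 ht))

theorem HasSpectrumIn.map {T T' : E →L[ℝ] E} (h : HasSpectrumIn T S) (R : E ≃ₗᵢ[ℝ] E)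
    (hR : ∀ x, T' (R x) = R (T x)) : HasSpectrumIn T' S := by
  obtain ⟨b, d, hb, hd⟩ := h
  exact ⟨b.map R, d, fun i => by simp [hR, hb i], hd⟩

variable {T T' : Euc n →L[ℝ] Euc n}

theorem exists_isEigenbasis (hT : (T : Euc n →ₗ[ℝ] Euc n).IsSymmetric) :
    ∃ b d, IsEigenbasis (n := n) T b d :=
  ⟨hT.eigenvectorBasis (by simp), hT.eigenvalues (by simp), hT.apply_eigenvectorBasis (by simp)⟩

theorem hasSpectrumIn_compl_iff (hT : (T : Euc n →ₗ[ℝ] Euc n).IsSymmetric)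
    (hS : IsPermInvariant S) : HasSpectrumIn T Sᶜ ↔ ¬ HasSpectrumIn T S := by
  obtain ⟨b, d, hb⟩ := exists_isEigenbasis hT
  rw [hb.hasSpectrumIn_iff hS, hb.hasSpectrumIn_iff hS.compl, mem_compl_iff]

theorem HasSpectrumIn.mono (hT' : (T' : Euc n →ₗ[ℝ] Euc n).IsSymmetric)
    (hS : IsPermInvariant S) (hup : IsUpperSet S) (hle : ∀ x, ⟪T x, x⟫_ℝ ≤ ⟪T' x, x⟫_ℝ)
    (h : HasSpectrumIn T S) : HasSpectrumIn T' S := by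
  obtain ⟨b, d, hb, hd⟩ := h
  obtain ⟨b', d', hb'⟩ := exists_isEigenbasis hT'
  obtain ⟨σ, hσ⟩ := hb.exists_comp_perm_le hb' hle
  exact ⟨b', d', hb', hup hσ (hS σ d hd)⟩

theorem isClosed_setOf_hasSpectrumIn (hS : IsClosed S) :
    IsClosed {T : Euc n →L[ℝ] Euc n | HasSpectrumIn T S} := by
  let K : Set (Fin n → Euc n) := {b | Orthonormal ℝ b}
  let Z : Set (K × (Euc n →L[ℝ] Euc n)) := {q | (∀ i, q.2 (q.1.1 i) =
    ⟪q.2 (q.1.1 i), q.1.1 i⟫_ℝ • q.1.1 i) ∧ (fun i => ⟪q.2 (q.1.1 i), q.1.1 i⟫_ℝ) ∈ S}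
  have hK : IsCompact K := by
    have hclosed : IsClosed K := by
      simp only [K, orthonormal_iff_ite, ofPred_forall]
      exact isClosed_iInter fun i => isClosed_iInter fun j =>
        isClosed_eq (by fun_prop) continuous_const
    refine (isCompact_univ_pi fun _ => isCompact_closedBall (0 : Euc n) 1).of_isClosed_subset
      hclosed fun b hb i _ => ?_
    simpa using (hb.1 i).le
  have hZ : IsClosed Z := by
    have hfst : ∀ i, Continuous fun q : K × (Euc n →L[ℝ] Euc n) => q.1.1 i := fun i =>
      (continuous_apply i).comp (continuous_subtype_val.comp continuous_fst)
    have hinner := fun i => ((continuous_snd.clm_apply (hfst i)).inner (𝕜 := ℝ) (hfst i))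
    simp only [Z, ofPred_and, ofPred_forall]
    exact (isClosed_iInter fun i => isClosed_eq (continuous_snd.clm_apply (hfst i))
      ((hinner i).smul (hfst i))).inter (hS.preimage (continuous_pi hinner))
  have := isCompact_iff_compactSpace.1 hK
  convert isClosedMap_snd_of_compactSpace Z hZ using 1
  ext T
  constructor
  · rintro ⟨b, d, hb, hd⟩
    have hdi : ∀ i, ⟪T (b i), b i⟫_ℝ = d i := fun i => by
      simp [hb i, real_inner_smul_left]
    exact ⟨(⟨b, b.orthonormal⟩, T), ⟨fun i => by simpa only [hdi] using hb i, by simpa only [hdi]⟩,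
      rfl⟩
  · rintro ⟨⟨⟨b, hb⟩, T⟩, ⟨hbT, hd⟩, rfl⟩
    have hspan : ⊤ ≤ Submodule.span ℝ (range b) :=
      (hb.linearIndependent.span_eq_top_of_card_eq_finrank' (by simp)).ge
    exact ⟨OrthonormalBasis.mk hb hspan, _, fun i => by simpa using hbT i, hd⟩

theorem eigIn_iff_hasSpectrumIn {M : Matrix (Fin n) (Fin n) ℝ} (hM : M.IsHermitian)
    (hS : IsPermInvariant S) :
    EigIn M S ↔ HasSpectrumIn (Matrix.toEuclideanCLM (𝕜 := ℝ) M) S := by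
  have hb : IsEigenbasis (Matrix.toEuclideanCLM (𝕜 := ℝ) M) hM.eigenvectorBasis
      hM.eigenvalues := fun i => by
    ext j
    simpa [Matrix.ofLp_toEuclideanCLM] using congrFun (hM.mulVec_eigenvectorBasis i) j
  rw [hb.hasSpectrumIn_iff hS]
  exact ⟨fun ⟨_, h⟩ => h, fun h => ⟨hM, h⟩⟩

/-- The tuple `(a, c, …, c)`. -/
def axialTuple (n : ℕ) (a c : ℝ) : Fin n → ℝ := fun i => if i.val = 0 then a else c

theorem axialTuple_mono {a a' c c' : ℝ} (ha : a ≤ a') (hc : c ≤ c') :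
    axialTuple n a c ≤ axialTuple n a' c' := fun i => by
  unfold axialTuple
  split_ifs <;> assumption

theorem hasSpectrumIn_smul_id_add_smul_rankOne (hn : 0 < n) {θ : Euc n} (hθ : ‖θ‖ = 1) (α β : ℝ)
    (hS : axialTuple n (α + β) α ∈ S) :
    HasSpectrumIn
      (α • ContinuousLinearMap.id ℝ (Euc n) + β • InnerProductSpace.rankOne ℝ θ θ) S := by
  have hortho : Orthonormal ℝ (({⟨0, hn⟩} : Set (Fin n)).domRestrict fun _ : Fin n => θ) :=
    ⟨fun _ => hθ, fun i j hij => absurd (Subsingleton.elim i j) hij⟩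
  obtain ⟨b, hb⟩ := hortho.exists_orthonormalBasis_extension_of_card_eq (by simp)
  have hb₀ : b ⟨0, hn⟩ = θ := hb _ rfl
  refine ⟨b, _, fun i => ?_, hS⟩
  rcases eq_or_ne i ⟨0, hn⟩ with rfl | hi
  · simp [hb₀, hθ, axialTuple, add_smul]
  · have hθi : ⟪θ, b i⟫_ℝ = 0 := hb₀ ▸ b.orthonormal.2 hi.symm
    have hi' : i.val ≠ 0 := fun h => hi (Fin.ext h)
    simp [axialTuple, hi', hθi]

end Spectrum

section Cone

variable {n : ℕ} {Γ : Set (Fin n → ℝ)}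

namespace CondC

theorem isOpen (hΓ : CondC Γ) : IsOpen Γ := hΓ.2.2.1

theorem isPermInvariant (hΓ : CondC Γ) : IsPermInvariant Γ := hΓ.2.2.2.1

theorem smul_mem (hΓ : CondC Γ) (t : ℝ) (ht : 0 < t) (d : Fin n → ℝ) (hd : d ∈ Γ) : t • d ∈ Γ :=
  hΓ.2.2.2.2.1 d hd t ht

theorem smul_mem_closure (hΓ : CondC Γ) (t : ℝ) (ht : 0 < t) (d : Fin n → ℝ)
    (hd : d ∈ closure Γ) : t • d ∈ closure Γ :=
  map_mem_closure (continuous_const_smul t) hd (hΓ.smul_mem t ht)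

theorem smul_mem_compl (hΓ : CondC Γ) (t : ℝ) (ht : 0 < t) (d : Fin n → ℝ) (hd : d ∈ Γᶜ) :
    t • d ∈ Γᶜ := fun htd =>
  hd <| by simpa [smul_smul, ht.ne'] using hΓ.smul_mem t⁻¹ (inv_pos.2 ht) _ htd

theorem isUpperSet (hΓ : CondC Γ) : IsUpperSet Γ := by
  intro d d' hle hd
  have hcont : Continuous fun t : ℝ => fun i => d i - t := by fun_prop
  have hnear : ∀ᶠ t in 𝓝 (0 : ℝ), (fun i => d i - t) ∈ Γ :=
    hcont.continuousAt.eventually_mem (by simpa using hΓ.isOpen.mem_nhds hd)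
  obtain ⟨t, hmem, ht⟩ :=
    ((hnear.filter_mono nhdsWithin_le_nhds).and (eventually_mem_nhdsWithin (s := Ioi 0))).exists
  have ht : 0 < t := ht
  have hpos : d' - (fun i => d i - t) ∈ GammaN n := fun i => by
    have hi : d i ≤ d' i := hle i
    rw [Pi.sub_apply]
    linarith
  exact add_sub_cancel (fun i => d i - t) d' ▸ hΓ.2.2.2.2.2 _ hmem _ hpos

theorem mem_of_mem_closure_of_lt (hΓ : CondC Γ) {d d' : Fin n → ℝ} (hd : d ∈ closure Γ)
    (hlt : ∀ i, d i < d' i) : d' ∈ Γ :=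
  interior_subset (hΓ.isUpperSet.mem_interior_of_forall_lt hd hlt)

theorem hasSpectrumIn_of_closure (hΓ : CondC Γ) {T T' : Euc n →L[ℝ] Euc n}
    (hT' : (T' : Euc n →ₗ[ℝ] Euc n).IsSymmetric) {t : ℝ} (ht : 0 < t)
    (hle : ∀ x, ⟪T x, x⟫_ℝ + t * ‖x‖ ^ 2 ≤ ⟪T' x, x⟫_ℝ) (h : HasSpectrumIn T (closure Γ)) :
    HasSpectrumIn T' Γ := by
  obtain ⟨b, d, hb, hd⟩ := h
  refine HasSpectrumIn.mono hT' hΓ.isPermInvariant hΓ.isUpperSet (fun x => ?_)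
    ⟨b, _, hb.add_smul_id t, hΓ.mem_of_mem_closure_of_lt hd fun i => lt_add_of_pos_right _ ht⟩
  simpa [inner_add_left, real_inner_smul_left] using hle x

end CondC

end Cone

section ConformalOperator

variable {E : Type*} [NormedAddCommGroup E] [InnerProductSpace ℝ E]

/-- The conformal Hessian of `e ^ (-(n - 2) / 2 * ℓ)`, up to the factor `e ^ (2 * ℓ)`, in terms of
the gradient `p` and the Hessian `X` of `ℓ`. -/
def conformalOperator (p : E) (X : E →L[ℝ] E) : E →L[ℝ] E :=
  X + InnerProductSpace.rankOne ℝ p p - (1 / 2 * ‖p‖ ^ 2) • ContinuousLinearMap.id ℝ E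

theorem conformalOperator_apply (p : E) (X : E →L[ℝ] E) (v : E) :
    conformalOperator p X v = X v + ⟪p, v⟫_ℝ • p - (1 / 2 * ‖p‖ ^ 2) • v := by
  simp [conformalOperator]

theorem inner_conformalOperator_apply (p : E) (X : E →L[ℝ] E) (v w : E) :
    ⟪conformalOperator p X v, w⟫_ℝ =
      ⟪X v, w⟫_ℝ + ⟪p, v⟫_ℝ * ⟪p, w⟫_ℝ - 1 / 2 * ‖p‖ ^ 2 * ⟪v, w⟫_ℝ := by
  simp only [conformalOperator_apply, inner_sub_left, inner_add_left, real_inner_smul_left]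

theorem inner_conformalOperator_apply_self (p : E) (X : E →L[ℝ] E) (v : E) :
    ⟪conformalOperator p X v, v⟫_ℝ =
      ⟪X v, v⟫_ℝ + ⟪p, v⟫_ℝ ^ 2 - 1 / 2 * ‖p‖ ^ 2 * ‖v‖ ^ 2 := by
  rw [inner_conformalOperator_apply, real_inner_self_eq_norm_sq, sq ⟪p, v⟫_ℝ]

theorem isSymmetric_conformalOperator (p : E) {X : E →L[ℝ] E}
    (hX : (X : E →ₗ[ℝ] E).IsSymmetric) : (conformalOperator p X : E →ₗ[ℝ] E).IsSymmetric :=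
  (hX.add (InnerProductSpace.isSymmetric_rankOne_self p)).sub (isSymmetric_smul_id _)

theorem conformalOperator_neg_left (p : E) (X : E →L[ℝ] E) :
    conformalOperator (-p) X = conformalOperator p X := by
  simp [conformalOperator]

theorem continuous_conformalOperator :
    Continuous fun q : E × (E →L[ℝ] E) => conformalOperator q.1 q.2 := by
  have hrank : Continuous fun q : E × (E →L[ℝ] E) => InnerProductSpace.rankOne ℝ q.1 q.1 :=
    ((InnerProductSpace.rankOne ℝ).continuous.comp continuous_fst).clm_apply continuous_fst
  unfold conformalOperator
  fun_prop

/-- The viscosity form of `F (∇m) (∇²m)` on `Ω`, tested from above. -/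
def IsViscositySolution (F : E → (E →L[ℝ] E) → Prop) (Ω : Set E) (m : E → ℝ) : Prop :=
  ∀ x ∈ Ω, ∀ (p : E) (X : E →L[ℝ] E), (X : E →ₗ[ℝ] E).IsSymmetric → IsSuperjet m x p X → F p X

/-- The condition at a superjet of `-2 / (n - 2) * log u` expressing `λ(A^u) ∈ closure Γ`. -/
def ClosureCondition {n : ℕ} (Γ : Set (Fin n → ℝ)) (p : Euc n) (X : Euc n →L[ℝ] Euc n) : Prop :=
  HasSpectrumIn (conformalOperator p X) (closure Γ)

/-- The condition at a superjet of `2 / (n - 2) * log u` expressing `λ(A^u) ∈ Γᶜ`. -/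
def ComplCondition {n : ℕ} (Γ : Set (Fin n → ℝ)) (p : Euc n) (X : Euc n →L[ℝ] Euc n) : Prop :=
  HasSpectrumIn (conformalOperator p (-X)) Γᶜ

/-- The set of jets satisfying `F` is closed. -/
def IsClosedCondition (F : E → (E →L[ℝ] E) → Prop) : Prop :=
  IsClosed {q : E × (E →L[ℝ] E) | F q.1 q.2}

variable {n : ℕ} {Γ : Set (Fin n → ℝ)}

theorem isClosedCondition_closureCondition (Γ : Set (Fin n → ℝ)) :
    IsClosedCondition (ClosureCondition Γ) :=
  (isClosed_setOf_hasSpectrumIn isClosed_closure).preimage continuous_conformalOperator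

theorem isClosedCondition_complCondition (hΓ : IsOpen Γ) :
    IsClosedCondition (ComplCondition Γ) :=
  (isClosed_setOf_hasSpectrumIn hΓ.isClosed_compl).preimage
    (continuous_conformalOperator.comp (continuous_fst.prodMk continuous_snd.neg))

theorem IsClosedCondition.of_forall_add_smul_id {F : E → (E →L[ℝ] E) → Prop}
    (hF : IsClosedCondition F) {p : E} {X : E →L[ℝ] E}
    (h : ∀ τ : ℝ, 0 < τ → F p (X + τ • ContinuousLinearMap.id ℝ E)) : F p X := by
  have hcont : Continuous fun τ : ℝ => (p, X + τ • ContinuousLinearMap.id ℝ E) := by fun_prop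
  have hlim := (hcont.tendsto 0).mono_left (nhdsWithin_le_nhds (s := Ioi 0))
  rw [zero_smul, add_zero] at hlim
  exact hF.mem_of_tendsto hlim (eventually_mem_nhdsWithin.mono h)

end ConformalOperator

section ConformalHessian

variable {n : ℕ} {φ q u : Euc n → ℝ} {x p : Euc n} {X : Euc n →L[ℝ] Euc n}

theorem toEuclideanCLM_confHess (h : HasTwoJetAt φ x p X) :
    Matrix.toEuclideanCLM (𝕜 := ℝ) (confHess φ x) =
      -(2 / ((n : ℝ) - 2) * φ x ^ (-(((n : ℝ) + 2) / ((n : ℝ) - 2)))) • X +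
      (2 * (n : ℝ) / ((n : ℝ) - 2) ^ 2 * φ x ^ (-(2 * (n : ℝ) / ((n : ℝ) - 2)))) •
        InnerProductSpace.rankOne ℝ p p -
      (2 / ((n : ℝ) - 2) ^ 2 * φ x ^ (-(2 * (n : ℝ) / ((n : ℝ) - 2))) * ‖p‖ ^ 2) •
        ContinuousLinearMap.id ℝ (Euc n) := by
  have hgrad : ∀ i, pgrad φ x i = p i := fun i => by
    rw [pgrad, h.hasFDerivAt.fderiv, innerSL_apply_apply, EuclideanSpace.inner_single_right]
    simp
  have hhess : ∀ i j, phess φ x i j = X (EuclideanSpace.single j 1) i := fun i j => by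
    rw [phess, h.fderiv_fderiv_apply]
    refine (h.isSymmetric _ _).trans ?_
    rw [EuclideanSpace.inner_single_left]
    simp
  refine ContinuousLinearMap.coe_injective <|
    (EuclideanSpace.basisFun (Fin n) ℝ).toBasis.ext fun j => ?_
  ext i
  simp [Matrix.ofLp_toEuclideanCLM, confHess, hgrad, hhess, EuclideanSpace.norm_sq_eq,
    EuclideanSpace.inner_single_right, mul_assoc, mul_comm (p i)]

theorem toEuclideanCLM_confHess_exp (hn : 2 < n) (h : HasTwoJetAt q x p X) :
    Matrix.toEuclideanCLM (𝕜 := ℝ)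
        (confHess (fun y => Real.exp (-((n - 2) / 2) * q y)) x) =
      Real.exp (2 * q x) • conformalOperator p X := by
  obtain ⟨c, hc, hnc⟩ : ∃ c : ℝ, 0 < c ∧ (n : ℝ) = 2 * c + 2 :=
    ⟨(n - 2) / 2, half_pos (sub_pos.2 (by exact_mod_cast hn)), by ring⟩
  have hderiv : ∀ t, HasDerivAt (fun t => Real.exp (-c * t)) (-c * Real.exp (-c * t)) t :=
    fun t => by simpa [mul_comm] using ((hasDerivAt_id t).const_mul (-c)).exp
  have hjet := h.comp (.of_forall hderiv) ((hderiv (q x)).const_mul (-c))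
  have hX : Real.exp (-c * q x) ^ (-((n + 2) / (n - 2) : ℝ)) * Real.exp (-c * q x) =
      Real.exp (2 * q x) := by
    rw [← Real.exp_mul, ← Real.exp_add, hnc]
    congr 1
    rw [add_sub_cancel_right]
    field_simp
    ring
  have hp : Real.exp (-c * q x) ^ (-(2 * n / (n - 2) : ℝ)) * Real.exp (-c * q x) ^ 2 =
      Real.exp (2 * q x) := by
    rw [← Real.exp_mul, ← Real.exp_nat_mul, ← Real.exp_add, hnc]
    congr 1
    rw [add_sub_cancel_right]
    push_cast
    field_simp
    ring
  have hc' : ((n : ℝ) - 2) / 2 = c := by rw [hnc]; ring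
  rw [hc', toEuclideanCLM_confHess hjet]
  rw [conformalOperator, norm_smul, mul_pow, Real.norm_eq_abs, sq_abs]
  generalize Real.exp (-c * q x) ^ (-((n + 2) / (n - 2) : ℝ)) = a at hX ⊢
  generalize Real.exp (-c * q x) ^ (-(2 * n / (n - 2) : ℝ)) = b at hp ⊢
  have hrank : ∀ t : ℝ, InnerProductSpace.rankOne ℝ (t • p) (t • p) =
      t ^ 2 • InnerProductSpace.rankOne ℝ p p := fun t => by
    ext1 v
    simp [smul_smul, sq, mul_assoc]
  rw [hrank, hnc, add_sub_cancel_right]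
  generalize Real.exp (-c * q x) = e at hX hp ⊢
  match_scalars
  · field_simp
    linear_combination hX
  · field_simp
    linear_combination -c * hX + (c + 1) * hp
  · field_simp
    linear_combination -‖p‖ ^ 2 * hp

/-- For `t = u`, the function `ℓ` with `u = e ^ (-(n - 2) / 2 * ℓ)`. -/
def conformalLog (n : ℕ) (t : ℝ) : ℝ := -(2 / ((n : ℝ) - 2)) * Real.log t

theorem exp_conformalLog (hn : 2 < n) {t : ℝ} (ht : 0 < t) :
    Real.exp (-((n - 2) / 2) * conformalLog n t) = t := by
  have hn' : (0 : ℝ) < n - 2 := sub_pos.2 (by exact_mod_cast hn)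
  rw [conformalLog, show -(((n : ℝ) - 2) / 2) * (-(2 / (n - 2)) * Real.log t) = Real.log t by
    field_simp, Real.exp_log ht]

theorem conformalLog_exp (hn : 2 < n) (s : ℝ) :
    conformalLog n (Real.exp (-((n - 2) / 2) * s)) = s := by
  have hn' : (0 : ℝ) < n - 2 := sub_pos.2 (by exact_mod_cast hn)
  rw [conformalLog, Real.log_exp]
  field_simp

theorem conformalLog_le_iff (hn : 2 < n) {s t : ℝ} (ht : 0 < t) :
    conformalLog n t ≤ s ↔ Real.exp (-((n - 2) / 2) * s) ≤ t := by
  have hn' : (0 : ℝ) < n - 2 := sub_pos.2 (by exact_mod_cast hn)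
  nth_rewrite 2 [← exp_conformalLog hn ht]
  rw [Real.exp_le_exp, mul_le_mul_left_of_neg (by linarith)]

theorem le_conformalLog_iff (hn : 2 < n) {s t : ℝ} (ht : 0 < t) :
    s ≤ conformalLog n t ↔ t ≤ Real.exp (-((n - 2) / 2) * s) := by
  have hn' : (0 : ℝ) < n - 2 := sub_pos.2 (by exact_mod_cast hn)
  nth_rewrite 2 [← exp_conformalLog hn ht]
  rw [Real.exp_le_exp, mul_le_mul_left_of_neg (by linarith)]

theorem conformalLog_le_conformalLog (hn : 2 < n) {s t : ℝ} (hs : 0 < s) (hst : s ≤ t) :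
    conformalLog n t ≤ conformalLog n s :=
  (conformalLog_le_iff hn (hs.trans_le hst)).2 ((exp_conformalLog hn hs).trans_le hst)

theorem eigIn_confHess_exp_iff (hn : 2 < n) (h : HasTwoJetAt q x p X) {S : Set (Fin n → ℝ)}
    (hS : IsPermInvariant S) (hsmul : ∀ r : ℝ, 0 < r → ∀ d ∈ S, r • d ∈ S) :
    EigIn (confHess (fun y => Real.exp (-((n - 2) / 2) * q y)) x) S ↔
      HasSpectrumIn (conformalOperator p X) S := by
  have hherm : (confHess (fun y => Real.exp (-((n - 2) / 2) * q y)) x).IsHermitian := by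
    refine Matrix.isSymmetric_toEuclideanLin_iff.1 ?_
    have hsymm := (isSymmetric_conformalOperator p h.isSymmetric).smul
      (c := Real.exp (2 * q x)) rfl
    rw [← ContinuousLinearMap.toLinearMap_smul, ← toEuclideanCLM_confHess_exp hn h] at hsymm
    exact hsymm
  rw [eigIn_iff_hasSpectrumIn hherm hS, toEuclideanCLM_confHess_exp hn h,
    hasSpectrumIn_smul_iff hsmul (Real.exp_pos _)]

theorem eigIn_confHess_iff (hn : 2 < n) (hφ : ∀ y, 0 < φ y)
    (h : HasTwoJetAt (fun y => conformalLog n (φ y)) x p X) {S : Set (Fin n → ℝ)}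
    (hS : IsPermInvariant S) (hsmul : ∀ r : ℝ, 0 < r → ∀ d ∈ S, r • d ∈ S) :
    EigIn (confHess φ x) S ↔ HasSpectrumIn (conformalOperator p X) S := by
  simpa only [exp_conformalLog hn (hφ _)] using eigIn_confHess_exp_iff hn h hS hsmul

theorem exists_hasTwoJetAt_conformalLog (hφ : ContDiff ℝ 2 φ) (hpos : ∀ y, 0 < φ y)
    (x : Euc n) : ∃ p X, HasTwoJetAt (fun y => conformalLog n (φ y)) x p X :=
  exists_hasTwoJetAt_of_contDiff (contDiff_const.mul (hφ.log fun y => (hpos y).ne')) x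

variable {Γ : Set (Fin n → ℝ)} {Ω : Set (Euc n)}

theorem supersolU_iff (hn : 2 < n) (hΓ : CondC Γ) (hΩ : IsOpen Ω) (hu : ∀ x ∈ Ω, 0 < u x) :
    SupersolU Γ Ω u ↔
      IsViscositySolution (ClosureCondition Γ) Ω fun x => conformalLog n (u x) := by
  constructor
  · intro h x hx p X hX hjet
    refine (isClosedCondition_closureCondition Γ).of_forall_add_smul_id fun τ hτ => ?_
    have hquad := hasTwoJetAt_quadratic (X := X + τ • ContinuousLinearMap.id ℝ (Euc n))
      (conformalLog n (u x)) x p (hX.add (isSymmetric_smul_id τ)) x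
    rw [sub_self, map_zero, add_zero] at hquad
    refine (eigIn_confHess_exp_iff hn hquad hΓ.isPermInvariant.closure hΓ.smul_mem_closure).1
      (h x hx _ (contDiff_const.mul (contDiff_quadratic _ _ _ _)).exp (fun _ => Real.exp_pos _)
        (by rw [quadratic_self, exp_conformalLog hn (hu x hx)]) ?_)
    filter_upwards [nhdsWithin_le_nhds (hjet.eventually_le_quadratic hτ), self_mem_nhdsWithin]
      with y hle hy
    exact (conformalLog_le_iff hn (hu y hy)).1 hle
  · intro h x hx φ hφ hpos hφx hle
    obtain ⟨p, X, hjet⟩ := exists_hasTwoJetAt_conformalLog hφ hpos x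
    refine (eigIn_confHess_iff hn hpos hjet hΓ.isPermInvariant.closure hΓ.smul_mem_closure).2
      (h x hx p X hjet.isSymmetric (hjet.isSuperjet ?_))
    rw [hΩ.nhdsWithin_eq hx] at hle
    filter_upwards [hle] with y hy
    rw [hφx, sub_self]
    exact sub_nonpos.2 (conformalLog_le_conformalLog hn (hpos y) hy)

theorem subsolU_iff (hn : 2 < n) (hΓ : CondC Γ) (hΩ : IsOpen Ω) (hu : ∀ x ∈ Ω, 0 < u x) :
    SubsolU Γ Ω u ↔
      IsViscositySolution (ComplCondition Γ) Ω fun x => -conformalLog n (u x) := by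
  constructor
  · intro h x hx p X hX hjet
    refine (isClosedCondition_complCondition hΓ.isOpen).of_forall_add_smul_id fun τ hτ => ?_
    have hquad := hasTwoJetAt_quadratic (X := X + τ • ContinuousLinearMap.id ℝ (Euc n))
      (-conformalLog n (u x)) x p (hX.add (isSymmetric_smul_id τ)) x
    rw [sub_self, map_zero, add_zero] at hquad
    have heig := h x hx (fun y => Real.exp (-((n - 2) / 2) * -quadratic _ x p
      (X + τ • ContinuousLinearMap.id ℝ (Euc n)) y))
      (contDiff_const.mul (contDiff_quadratic _ _ _ _).neg).exp (fun _ => Real.exp_pos _)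
      (by rw [quadratic_self, neg_neg, exp_conformalLog hn (hu x hx)]) ?_
    · simpa only [ComplCondition, conformalOperator_neg_left] using
        (eigIn_confHess_exp_iff hn hquad.neg hΓ.isPermInvariant.compl hΓ.smul_mem_compl).1 heig
    filter_upwards [nhdsWithin_le_nhds (hjet.eventually_le_quadratic hτ), self_mem_nhdsWithin]
      with y hle hy
    exact (le_conformalLog_iff hn (hu y hy)).1 (neg_le.1 hle)
  · intro h x hx φ hφ hpos hφx hle
    obtain ⟨p, X, hjet⟩ := exists_hasTwoJetAt_conformalLog hφ hpos x
    rw [hΩ.nhdsWithin_eq hx] at hle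
    have hcond := h x hx (-p) (-X) hjet.neg.isSymmetric (hjet.neg.isSuperjet ?_)
    · rw [ComplCondition, conformalOperator_neg_left, neg_neg] at hcond
      exact (eigIn_confHess_iff hn hpos hjet hΓ.isPermInvariant.compl hΓ.smul_mem_compl).2 hcond
    filter_upwards [hle, hΩ.mem_nhds hx] with y hle hy
    rw [hφx, sub_self]
    exact sub_nonpos.2 (neg_le_neg (conformalLog_le_conformalLog hn (hu y hy) hle))

end ConformalHessian

section MaximumPrinciple

variable {E : Type*} [NormedAddCommGroup E] [InnerProductSpace ℝ E]
  {F : E → (E →L[ℝ] E) → Prop} {Ω D : Set E} {m Ψ : E → ℝ} {M r R : ℝ} {x : E}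

theorem HasTwoJetAt.continuousAt {p : E} {X : E →L[ℝ] E} (h : HasTwoJetAt Ψ x p X) :
    ContinuousAt Ψ x :=
  h.hasFDerivAt.continuousAt

theorem IsViscositySolution.mono {Ω' : Set E} (hm : IsViscositySolution F Ω m) (h : Ω' ⊆ Ω) :
    IsViscositySolution F Ω' m := fun x hx => hm x (h hx)

namespace IsViscositySolution

theorem sub_le_of_isCompact (hm : IsViscositySolution F Ω m) (hD : IsCompact D)
    (hmc : ContinuousOn m D) (hΨ : ContinuousOn Ψ D)
    (h : ∀ y ∈ D, m y - Ψ y ≤ M ∨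
      D ∈ 𝓝 y ∧ y ∈ Ω ∧ ∃ p X, HasTwoJetAt Ψ y p X ∧ ¬ F p X) (hx : x ∈ D) :
    m x - Ψ x ≤ M := by
  obtain ⟨z, hz, hmax⟩ := hD.exists_isMaxOn ⟨x, hx⟩ (hmc.sub hΨ)
  refine (hmax hx).trans ((h z hz).resolve_right ?_)
  rintro ⟨hDz, hzΩ, p, X, hjet, hF⟩
  exact hF (hm z hzΩ p X hjet.isSymmetric (hjet.isSuperjet (hmax.isLocalMax hDz)))

theorem sub_le_of_annulus [ProperSpace E] (hm : IsViscositySolution F (ball 0 R \ {0}) m)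
    (hmc : ContinuousOn m (closedBall 0 R \ {0})) (hr : 0 < r)
    (hΨ : ∀ y, r ≤ ‖y‖ → ‖y‖ ≤ R → ∃ p X, HasTwoJetAt Ψ y p X ∧ ¬ F p X)
    (hinner : ∀ y, ‖y‖ = r → m y - Ψ y ≤ M) (houter : ∀ y, ‖y‖ = R → m y - Ψ y ≤ M)
    (hrx : r ≤ ‖x‖) (hxR : ‖x‖ ≤ R) : m x - Ψ x ≤ M := by
  have hmem : ∀ y, y ∈ closedBall (0 : E) R \ ball 0 r ↔ ‖y‖ ≤ R ∧ r ≤ ‖y‖ := fun y => by simp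
  have hne : ∀ y : E, r ≤ ‖y‖ → y ≠ 0 := fun y hy => norm_pos_iff.1 (hr.trans_le hy)
  refine hm.sub_le_of_isCompact (Ψ := Ψ) ((isCompact_closedBall 0 R).diff isOpen_ball)
    (hmc.mono fun y hy => ?_) (fun y hy => ?_) (fun y hy => ?_) ((hmem x).2 ⟨hxR, hrx⟩)
  · exact ⟨hy.1, hne y ((hmem y).1 hy).2⟩
  · obtain ⟨p, X, hjet, -⟩ := hΨ y ((hmem y).1 hy).2 ((hmem y).1 hy).1
    exact hjet.continuousAt.continuousWithinAt
  · obtain ⟨hyR, hry⟩ := (hmem y).1 hy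
    rcases hyR.eq_or_lt with hyR' | hyR'
    · exact .inl (houter y hyR')
    rcases hry.eq_or_lt with hry' | hry'
    · exact .inl (hinner y hry'.symm)
    refine .inr ⟨?_, ⟨mem_ball_zero_iff.2 hyR', hne y hry⟩, hΨ y hry hyR⟩
    filter_upwards [continuous_norm.continuousAt.eventually (lt_mem_nhds hry'),
      continuous_norm.continuousAt.eventually (gt_mem_nhds hyR')] with z hrz hzR
    exact (hmem z).2 ⟨hzR.le, hrz.le⟩

end IsViscositySolution

end MaximumPrinciple

section RadialBarrier

variable {E : Type*} [NormedAddCommGroup E] {x : E}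

/-- The logarithmic barrier `2 / δ * log (1 + b * |x| ^ (-δ))`; it is a strict subsolution for
`b > 0` and its opposite is a strict supersolution for `b < 0`. -/
def radialBarrier (δ b : ℝ) (x : E) : ℝ := 2 / δ * Real.log (1 + b * ‖x‖ ^ (-δ))

theorem tendsto_radialBarrier (δ : ℝ) (x : E) :
    Tendsto (fun b => radialBarrier δ b x) (𝓝 0) (𝓝 0) := by
  have hcont : ContinuousAt (fun b => radialBarrier δ b x) 0 := by
    refine continuousAt_const.mul (ContinuousAt.log (by fun_prop) ?_)
    rw [zero_mul, add_zero]
    exact one_ne_zero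
  simpa [radialBarrier] using hcont.tendsto

theorem radialBarrier_nonneg {δ b : ℝ} (hδ : 0 < δ) (hb : 0 ≤ b) (x : E) :
    0 ≤ radialBarrier δ b x :=
  mul_nonneg (by positivity) (Real.log_nonneg (le_add_of_nonneg_right (by positivity)))

theorem le_radialBarrier {δ b : ℝ} (hδ : 0 < δ) (hb : 0 < b) (hx : x ≠ 0) :
    2 / δ * Real.log b - 2 * Real.log ‖x‖ ≤ radialBarrier δ b x := by
  have hnorm : 0 < ‖x‖ := norm_pos_iff.2 hx
  have hlog := Real.log_le_log (x := b * ‖x‖ ^ (-δ)) (by positivity)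
    (le_add_of_nonneg_left one_pos.le)
  calc 2 / δ * Real.log b - 2 * Real.log ‖x‖ = 2 / δ * Real.log (b * ‖x‖ ^ (-δ)) := by
        rw [Real.log_mul hb.ne' (by positivity), Real.log_rpow hnorm]
        field_simp
        ring
    _ ≤ radialBarrier δ b x := mul_le_mul_of_nonneg_left hlog (by positivity)

theorem radialBarrier_zero (δ : ℝ) (x : E) : radialBarrier δ 0 x = 0 := by
  simp [radialBarrier]

theorem radialBarrier_mono {δ b c : ℝ} (hδ : 0 < δ) (hbc : b ≤ c)
    (hb : 0 < 1 + b * ‖x‖ ^ (-δ)) : radialBarrier δ b x ≤ radialBarrier δ c x :=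
  mul_le_mul_of_nonneg_left (Real.log_le_log hb (by gcongr)) (by positivity)

theorem rpow_mul_rpow_neg {r : ℝ} (hr : 0 < r) (δ : ℝ) : r ^ δ * r ^ (-δ) = 1 := by
  rw [← Real.rpow_add hr, add_neg_cancel, Real.rpow_zero]

theorem one_add_mul_rpow_neg_pos {δ b r : ℝ} (hr : 0 < r) (hb : -r ^ δ < b) :
    0 < 1 + b * r ^ (-δ) := by
  have hmul := mul_lt_mul_of_pos_right hb (Real.rpow_pos_of_pos hr (-δ))
  rw [neg_mul, rpow_mul_rpow_neg hr] at hmul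
  linarith

theorem exists_radialBarrier_le {δ r : ℝ} (hδ : 0 < δ) (hr : 0 < r) (C : ℝ) :
    ∃ b, -r ^ δ < b ∧ b < 0 ∧ ∀ y : E, ‖y‖ = r → radialBarrier δ b y ≤ C := by
  set κ := Real.exp (δ / 2 * (-|C| - 1))
  have hκ : κ < 1 := Real.exp_lt_one_iff.2 (mul_neg_of_pos_of_neg (half_pos hδ)
    (by linarith [abs_nonneg C]))
  have hκ₀ : 0 < κ := Real.exp_pos _
  have hrδ : 0 < r ^ δ := Real.rpow_pos_of_pos hr δ
  refine ⟨-(1 - κ) * r ^ δ, by nlinarith, by nlinarith, fun y hy => ?_⟩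
  have hvalue : 1 + -(1 - κ) * r ^ δ * ‖y‖ ^ (-δ) = κ := by
    rw [hy, mul_assoc, rpow_mul_rpow_neg hr]
    ring
  have hlog : radialBarrier δ (-(1 - κ) * r ^ δ) y = -|C| - 1 := by
    rw [radialBarrier, hvalue, Real.log_exp]
    field_simp
  linarith [neg_abs_le C]

end RadialBarrier

section RadialFunctions

variable {E : Type*} [NormedAddCommGroup E] [InnerProductSpace ℝ E] {x : E}

theorem hasTwoJetAt_norm_sq (x : E) :
    HasTwoJetAt (fun y : E => ‖y‖ ^ 2) x ((2 : ℝ) • x) ((2 : ℝ) • ContinuousLinearMap.id ℝ E) := by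
  have hquad := hasTwoJetAt_quadratic 0 0 0 (isSymmetric_smul_id (E := E) 2) x
  have heq : quadratic 0 0 0 ((2 : ℝ) • ContinuousLinearMap.id ℝ E) = fun y : E => ‖y‖ ^ 2 := by
    ext y
    simp [quadratic, real_inner_smul_left]
  simpa [heq] using hquad

theorem hasTwoJetAt_comp_norm_sq {f f' : ℝ → ℝ} {f'' : ℝ}
    (hf : ∀ᶠ t in 𝓝 (‖x‖ ^ 2), HasDerivAt f (f' t) t) (hf' : HasDerivAt f' f'' (‖x‖ ^ 2)) :
    HasTwoJetAt (fun y => f (‖y‖ ^ 2)) x ((2 * f' (‖x‖ ^ 2)) • x)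
      ((2 * f' (‖x‖ ^ 2)) • ContinuousLinearMap.id ℝ E +
        (4 * f'') • InnerProductSpace.rankOne ℝ x x) := by
  convert (hasTwoJetAt_norm_sq x).comp hf hf' using 1
  · rw [smul_smul, mul_comm]
  · ext1 v
    simp [smul_smul]
    module

theorem conformalOperator_neg_smul_id_add_smul_rankOne (a c : ℝ) (x : E) :
    conformalOperator (a • x)
        (-(a • ContinuousLinearMap.id ℝ E + c • InnerProductSpace.rankOne ℝ x x)) =
      -(a + a ^ 2 * ‖x‖ ^ 2 / 2) • ContinuousLinearMap.id ℝ E +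
        (a ^ 2 - c) • InnerProductSpace.rankOne ℝ x x := by
  ext1 v
  simp only [conformalOperator_apply, neg_apply, add_apply, smul_apply,
    ContinuousLinearMap.id_apply, InnerProductSpace.rankOne_apply, norm_smul, mul_pow,
    Real.norm_eq_abs, sq_abs, real_inner_smul_left]
  module

theorem hasTwoJetAt_radialBarrier {δ b : ℝ} (hδ : 0 < δ) (hx : x ≠ 0)
    (hb : 0 < 1 + b * ‖x‖ ^ (-δ)) :
    HasTwoJetAt (radialBarrier δ b) x
      ((2 * -(b * ‖x‖ ^ (-δ) / (‖x‖ ^ 2 * (1 + b * ‖x‖ ^ (-δ))))) • x)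
      ((2 * -(b * ‖x‖ ^ (-δ) / (‖x‖ ^ 2 * (1 + b * ‖x‖ ^ (-δ))))) • ContinuousLinearMap.id ℝ E +
        (4 * (b * ‖x‖ ^ (-δ) * (1 + δ / 2 + b * ‖x‖ ^ (-δ)) /
          (‖x‖ ^ 2 * (1 + b * ‖x‖ ^ (-δ))) ^ 2)) • InnerProductSpace.rankOne ℝ x x) := by
  have hnorm : ∀ r : ℝ, 0 ≤ r → (r ^ 2) ^ (-(δ / 2)) = r ^ (-δ) := fun r hr => by
    rw [← Real.rpow_natCast_mul hr]
    congr 1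
    push_cast
    ring
  set g : ℝ → ℝ := fun t => t ^ (-(δ / 2))
  have hg : ∀ t : ℝ, 0 < t → HasDerivAt g (-(δ / 2) * (g t / t)) t := fun t ht => by
    simpa only [Real.rpow_sub_one ht.ne'] using
      Real.hasDerivAt_rpow_const (p := -(δ / 2)) (.inl ht.ne')
  have hs : 0 < ‖x‖ ^ 2 := by positivity
  have hbs : 0 < 1 + b * g (‖x‖ ^ 2) := by
    simpa only [g, hnorm _ (norm_nonneg x)] using hb
  have hf : ∀ᶠ t in 𝓝 (‖x‖ ^ 2), HasDerivAt (fun t => 2 / δ * Real.log (1 + b * g t))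
      (-(b * g t / (t * (1 + b * g t)))) t := by
    have hcont := (((hg _ hs).const_mul b).const_add 1).continuousAt
    filter_upwards [lt_mem_nhds hs, hcont.eventually (lt_mem_nhds hbs)] with t ht hbt
    refine (((((hg t ht).const_mul b).const_add 1).log hbt.ne').const_mul (2 / δ)).congr_deriv ?_
    field_simp
  have hf' : HasDerivAt (fun t => -(b * g t / (t * (1 + b * g t))))
      (b * g (‖x‖ ^ 2) * (1 + δ / 2 + b * g (‖x‖ ^ 2)) /
        (‖x‖ ^ 2 * (1 + b * g (‖x‖ ^ 2))) ^ 2) (‖x‖ ^ 2) := by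
    refine (((hg _ hs).const_mul b).fun_div ((hasDerivAt_id' (‖x‖ ^ 2)).fun_mul
      (((hg _ hs).const_mul b).const_add 1)) (mul_pos hs hbs).ne').fun_neg.congr_deriv ?_
    generalize g (‖x‖ ^ 2) = c at hbs
    field_simp
    ring
  have hjet := hasTwoJetAt_comp_norm_sq hf hf'
  simp only [g, hnorm _ (norm_nonneg _)] at hjet
  exact hjet

theorem exists_hasTwoJetAt_radialBarrier {δ b : ℝ} (hδ : 0 < δ) (hx : x ≠ 0)
    (hb : 0 < 1 + b * ‖x‖ ^ (-δ)) :
    ∃ p X, HasTwoJetAt (radialBarrier δ b) x p X ∧ ∃ t : ℝ, 0 < t ∧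
      conformalOperator p (-X) = (t * b) • (ContinuousLinearMap.id ℝ E -
        (2 + δ) • InnerProductSpace.rankOne ℝ (‖x‖⁻¹ • x) (‖x‖⁻¹ • x)) := by
  refine ⟨_, _, hasTwoJetAt_radialBarrier hδ hx hb,
    2 * ‖x‖ ^ (-δ) / ((1 + b * ‖x‖ ^ (-δ)) ^ 2 * ‖x‖ ^ 2), by positivity, ?_⟩
  rw [conformalOperator_neg_smul_id_add_smul_rankOne]
  generalize ‖x‖ ^ (-δ) = c at hb
  ext1 v
  simp only [neg_smul, add_apply, sub_apply, neg_apply, smul_apply, ContinuousLinearMap.id_apply,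
    InnerProductSpace.rankOne_apply, real_inner_smul_left, smul_smul]
  match_scalars
  · field_simp
    ring
  · field_simp
    ring

end RadialFunctions

section SingularBounds

variable {n : ℕ} {Γ : Set (Fin n → ℝ)} {δ b M r R : ℝ} {m : Euc n → ℝ} {x : Euc n}

theorem exists_axialTuple_margin (hΓ : IsOpen Γ) (hstar : lamStar n ∉ closure Γ)
    (hstar' : (fun i => -(lamStar n i)) ∈ Γ) :
    ∃ δ : ℝ, 0 < δ ∧ axialTuple n (1 + δ) (-1 + δ) ∉ closure Γ ∧
      axialTuple n (-1 - δ) (1 - δ) ∈ Γ := by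
  have hcont : ∀ f g : ℝ → ℝ, Continuous f → Continuous g →
      Continuous fun δ => axialTuple n (f δ) (g δ) := fun f g hf hg =>
    continuous_pi fun i => by unfold axialTuple; split_ifs <;> assumption
  have hplus : ∀ᶠ δ in 𝓝 (0 : ℝ), axialTuple n (1 + δ) (-1 + δ) ∈ (closure Γ)ᶜ := by
    refine (hcont _ _ (by fun_prop) (by fun_prop)).continuousAt.eventually_mem
      (isClosed_closure.isOpen_compl.mem_nhds ?_)
    simp only [add_zero]
    exact hstar
  have hminus : ∀ᶠ δ in 𝓝 (0 : ℝ), axialTuple n (-1 - δ) (1 - δ) ∈ Γ := by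
    refine (hcont _ _ (by fun_prop) (by fun_prop)).continuousAt.eventually_mem (hΓ.mem_nhds ?_)
    convert hstar' using 1
    ext i
    simp only [axialTuple, lamStar, sub_zero, apply_ite (Neg.neg : ℝ → ℝ), neg_neg]
  obtain ⟨δ, ⟨hδ, hδ'⟩, hpos⟩ := (((hplus.and hminus).filter_mono nhdsWithin_le_nhds).and
    (eventually_mem_nhdsWithin (s := Ioi 0))).exists
  exact ⟨δ, hpos, hδ, hδ'⟩

theorem exists_hasTwoJetAt_radialBarrier_not_complCondition (hn : 0 < n) (hΓ : CondC Γ)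
    (hδ : 0 < δ) (hmem : axialTuple n (-1 - δ) (1 - δ) ∈ Γ) (hb : 0 < b) (hx : x ≠ 0) :
    ∃ p X, HasTwoJetAt (radialBarrier δ b) x p X ∧ ¬ ComplCondition Γ p X := by
  obtain ⟨p, X, hjet, t, ht, hop⟩ :=
    exists_hasTwoJetAt_radialBarrier hδ hx (b := b) (by positivity)
  refine ⟨p, X, hjet, ?_⟩
  rw [ComplCondition, hasSpectrumIn_compl_iff (isSymmetric_conformalOperator p hjet.neg.isSymmetric)
    hΓ.isPermInvariant, not_not, hop, hasSpectrumIn_smul_iff hΓ.smul_mem (mul_pos ht hb)]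
  rw [sub_eq_add_neg, ← neg_smul, ← one_smul ℝ (ContinuousLinearMap.id ℝ (Euc n))]
  exact hasSpectrumIn_smul_id_add_smul_rankOne hn (norm_smul_inv_norm (𝕜 := ℝ) hx) 1 (-(2 + δ))
    (hΓ.isUpperSet (axialTuple_mono (by linarith) (by linarith)) hmem)

theorem exists_hasTwoJetAt_neg_radialBarrier_not_closureCondition (hn : 0 < n) (hΓ : CondC Γ)
    (hδ : 0 < δ) (hmem : axialTuple n (1 + δ) (-1 + δ) ∉ closure Γ) (hb : b < 0) (hx : x ≠ 0)
    (hbx : 0 < 1 + b * ‖x‖ ^ (-δ)) :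
    ∃ p X, HasTwoJetAt (fun y => -radialBarrier δ b y) x p X ∧ ¬ ClosureCondition Γ p X := by
  obtain ⟨p, X, hjet, t, ht, hop⟩ := exists_hasTwoJetAt_radialBarrier hδ hx hbx
  refine ⟨-p, -X, hjet.neg, ?_⟩
  rw [ClosureCondition, conformalOperator_neg_left, ← hasSpectrumIn_compl_iff
    (isSymmetric_conformalOperator p hjet.neg.isSymmetric) hΓ.isPermInvariant.closure, hop,
    ← neg_neg (t * b), ← mul_neg, neg_smul, ← smul_neg]
  have hcone : ∀ r : ℝ, 0 < r → ∀ d ∈ (closure Γ)ᶜ, r • d ∈ (closure Γ)ᶜ := fun r hr d hd hrd =>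
    hd (by simpa [smul_smul, hr.ne'] using hΓ.smul_mem_closure r⁻¹ (inv_pos.2 hr) _ hrd)
  rw [hasSpectrumIn_smul_iff hcone (mul_pos ht (neg_pos.2 hb)), neg_sub, sub_eq_neg_add,
    ← neg_one_smul ℝ (ContinuousLinearMap.id ℝ (Euc n))]
  exact hasSpectrumIn_smul_id_add_smul_rankOne hn (norm_smul_inv_norm (𝕜 := ℝ) hx) (-1) (2 + δ)
    fun h => hmem (hΓ.isUpperSet.closure (axialTuple_mono (by linarith) (by linarith)) h)

theorem IsViscositySolution.le_of_complCondition (hn : 0 < n) (hΓ : CondC Γ) (hδ : 0 < δ)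
    (hmem : axialTuple n (-1 - δ) (1 - δ) ∈ Γ)
    (hm : IsViscositySolution (ComplCondition Γ) (ball 0 R \ {0}) m)
    (hmc : ContinuousOn m (closedBall 0 R \ {0}))
    (hlim : Tendsto (fun y => m y + 2 * Real.log ‖y‖) (𝓝[≠] 0) atBot)
    (hM : ∀ y, ‖y‖ = R → m y ≤ M) (hx : x ≠ 0) (hxR : ‖x‖ ≤ R) : m x ≤ M := by
  have hbarrier : ∀ b : ℝ, 0 < b → m x - M ≤ radialBarrier δ b x := fun b hb => by
    obtain ⟨ρ, hρ, hsmall⟩ := Metric.eventually_nhds_iff.1 (eventually_nhdsWithin_iff.1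
      (hlim.eventually (eventually_le_atBot (M + 2 / δ * Real.log b))))
    have hr : 0 < min (ρ / 2) ‖x‖ := lt_min (half_pos hρ) (norm_pos_iff.2 hx)
    refine sub_le_comm.1 (hm.sub_le_of_annulus (Ψ := radialBarrier δ b) hmc hr
      (fun y hy _ => exists_hasTwoJetAt_radialBarrier_not_complCondition hn hΓ hδ hmem hb
        (norm_pos_iff.1 (hr.trans_le hy))) (fun y hy => ?_) (fun y hy => ?_)
      (min_le_right _ _) hxR)
    · have hy₀ : y ≠ 0 := norm_pos_iff.1 (hr.trans_eq hy.symm)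
      have hyρ : dist y 0 < ρ := by
        rw [dist_zero_right, hy]
        exact (min_le_left _ _).trans_lt (half_lt_self hρ)
      linarith [hsmall hyρ hy₀, le_radialBarrier hδ hb hy₀]
    · linarith [hM y hy, radialBarrier_nonneg hδ hb.le y]
  exact sub_nonpos.1 (ge_of_tendsto ((tendsto_radialBarrier δ x).mono_left nhdsWithin_le_nhds)
    ((eventually_mem_nhdsWithin (s := Ioi (0 : ℝ))).mono hbarrier))

theorem IsViscositySolution.add_radialBarrier_le (hn : 0 < n) (hΓ : CondC Γ) (hδ : 0 < δ)
    (hmem : axialTuple n (1 + δ) (-1 + δ) ∉ closure Γ)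
    (hm : IsViscositySolution (ClosureCondition Γ) (ball 0 R \ {0}) m)
    (hmc : ContinuousOn m (closedBall 0 R \ {0})) (hM : ∀ y, ‖y‖ = R → m y ≤ M)
    (hr : 0 < r) (hrx : r < ‖x‖) (hxR : ‖x‖ ≤ R) : m x + radialBarrier δ (-r ^ δ) x ≤ M := by
  have hsphere : sphere 0 r ⊆ closedBall (0 : Euc n) R \ {0} := fun y hy => by
    rw [mem_sphere_zero_iff_norm] at hy
    exact ⟨mem_closedBall_zero_iff.2 (by linarith), norm_pos_iff.1 (hr.trans_eq hy.symm)⟩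
  obtain ⟨M', hM'⟩ := (isCompact_sphere (0 : Euc n) r).bddAbove_image (hmc.mono hsphere)
  obtain ⟨b, hrb, hb, hinner⟩ := exists_radialBarrier_le (E := Euc n) hδ hr (M - M')
  have hpow : ∀ y : Euc n, r ≤ ‖y‖ → -‖y‖ ^ δ < b := fun y hy =>
    (neg_le_neg (Real.rpow_le_rpow hr.le hy hδ.le)).trans_lt hrb
  have hpos : ∀ y : Euc n, r ≤ ‖y‖ → 0 < 1 + b * ‖y‖ ^ (-δ) := fun y hy =>
    one_add_mul_rpow_neg_pos (hr.trans_le hy) (hpow y hy)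
  have hcompare : m x - -radialBarrier δ b x ≤ M := by
    refine hm.sub_le_of_annulus (Ψ := fun y => -radialBarrier δ b y) hmc hr (fun y hy _ =>
      exists_hasTwoJetAt_neg_radialBarrier_not_closureCondition hn hΓ hδ hmem hb
        (norm_pos_iff.1 (hr.trans_le hy)) (hpos y hy)) (fun y hy => ?_) (fun y hy => ?_) hrx.le hxR
    · linarith [hinner y hy, hM' (mem_image_of_mem m (mem_sphere_zero_iff_norm.2 hy))]
    · have hanti := radialBarrier_mono hδ hb.le (hpos y (hrx.le.trans (hxR.trans_eq hy.symm)))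
      rw [radialBarrier_zero] at hanti
      linarith [hM y hy]
  have hmono := radialBarrier_mono hδ hrb.le (one_add_mul_rpow_neg_pos (hr.trans hrx)
    (neg_lt_neg (Real.rpow_lt_rpow hr.le hrx hδ)))
  linarith

theorem IsViscositySolution.le_of_closureCondition (hn : 0 < n) (hΓ : CondC Γ) (hδ : 0 < δ)
    (hmem : axialTuple n (1 + δ) (-1 + δ) ∉ closure Γ)
    (hm : IsViscositySolution (ClosureCondition Γ) (ball 0 R \ {0}) m)
    (hmc : ContinuousOn m (closedBall 0 R \ {0})) (hM : ∀ y, ‖y‖ = R → m y ≤ M)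
    (hx : x ≠ 0) (hxR : ‖x‖ ≤ R) : m x ≤ M := by
  have hpow : Tendsto (fun r : ℝ => -r ^ δ) (𝓝[>] 0) (𝓝 0) := by
    have hcont : ContinuousAt (fun r : ℝ => -r ^ δ) 0 :=
      (Real.continuousAt_rpow_const 0 δ (.inr hδ.le)).neg
    simpa [Real.zero_rpow hδ.ne'] using hcont.tendsto.mono_left nhdsWithin_le_nhds
  have hlim := ((tendsto_radialBarrier δ x).comp hpow).const_add (m x)
  rw [add_zero] at hlim
  refine le_of_tendsto hlim ?_
  filter_upwards [Ioo_mem_nhdsGT (norm_pos_iff.2 hx)] with r hr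
  exact hm.add_radialBarrier_le hn hΓ hδ hmem hmc hM hr.1 hr.2 hxR

end SingularBounds

section Congruence

variable {E : Type*} [NormedAddCommGroup E] [InnerProductSpace ℝ E]
  {F : E → (E →L[ℝ] E) → Prop} {m m' : E → ℝ} {x p : E} {X : E →L[ℝ] E}

theorem IsSuperjet.congr (h : m =ᶠ[𝓝 x] m') (hm : IsSuperjet m x p X) :
    IsSuperjet m' x p X := fun τ hτ => by
  filter_upwards [hm τ hτ, h] with y hy heq
  rwa [← heq, ← h.self_of_nhds]

theorem IsViscositySolution.congr {Ω : Set E} (hΩ : IsOpen Ω) (h : EqOn m m' Ω)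
    (hm : IsViscositySolution F Ω m) : IsViscositySolution F Ω m' := fun x hx p X hX hjet =>
  hm x hx p X hX (hjet.congr (h.symm.eventuallyEq_of_mem (hΩ.mem_nhds hx)))

end Congruence

section LogBarrier

variable {E : Type*} [NormedAddCommGroup E] [InnerProductSpace ℝ E]
  {F : E → (E →L[ℝ] E) → Prop} {m : E → ℝ} {x p : E} {X Z : E →L[ℝ] E} {a c δ K r R : ℝ}

theorem hasTwoJetAt_mul_log_norm (hx : x ≠ 0) (t : ℝ) :
    HasTwoJetAt (fun y => t * Real.log ‖y‖) x ((t / ‖x‖ ^ 2) • x)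
      ((t / ‖x‖ ^ 2) • (ContinuousLinearMap.id ℝ E -
        (2 : ℝ) • InnerProductSpace.rankOne ℝ (‖x‖⁻¹ • x) (‖x‖⁻¹ • x))) := by
  have hs : 0 < ‖x‖ ^ 2 := by positivity
  have hlog : ∀ᶠ s in 𝓝 (‖x‖ ^ 2), HasDerivAt (fun s => t / 2 * Real.log s) (t / 2 * s⁻¹) s :=
    (lt_mem_nhds hs).mono fun s hs => (Real.hasDerivAt_log hs.ne').const_mul _
  convert hasTwoJetAt_comp_norm_sq hlog ((hasDerivAt_inv hs.ne').const_mul _) using 1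
  · ext y
    rw [Real.log_pow]
    push_cast
    ring
  · congr 1
    ring
  · ext1 v
    simp only [sub_apply, add_apply, smul_apply, ContinuousLinearMap.id_apply,
      InnerProductSpace.rankOne_apply, real_inner_smul_left, smul_smul]
    match_scalars <;> field

/-- `F` excludes the symmetric jets with `X + |p|² / 2 ≤ s (2 θ ⊗ θ - (1 - δ))` for a unit vector
`θ` and `s > 0`; these include the jets of `-ε * log |x|` for small `ε > 0`, up to bounded
perturbations. -/
def ExcludesRadialJets (F : E → (E →L[ℝ] E) → Prop) (δ : ℝ) : Prop :=
  ∀ s : ℝ, 0 < s → ∀ θ : E, ‖θ‖ = 1 → ∀ (p : E) (X : E →L[ℝ] E), (X : E →ₗ[ℝ] E).IsSymmetric →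
    (∀ v, ⟪X v, v⟫_ℝ + 1 / 2 * ‖p‖ ^ 2 * ‖v‖ ^ 2 ≤
      s * (2 * ⟪θ, v⟫_ℝ ^ 2 - (1 - δ) * ‖v‖ ^ 2)) → ¬ F p X

theorem norm_sq_add_add_le {V : Type*} [NormedAddCommGroup V] (u v w : V) :
    ‖u + v + w‖ ^ 2 ≤ 3 * (‖u‖ ^ 2 + ‖v‖ ^ 2 + ‖w‖ ^ 2) := by
  have htriangle := pow_le_pow_left₀ (norm_nonneg _) (norm_add₃_le (a := u) (b := v) (c := w)) 2
  nlinarith [sq_nonneg (‖u‖ - ‖v‖), sq_nonneg (‖u‖ - ‖w‖), sq_nonneg (‖v‖ - ‖w‖)]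

theorem ExcludesRadialJets.exists_hasTwoJetAt_sub_log (hF : ExcludesRadialJets F δ) (a : ℝ) {ε : ℝ}
    (hε : 0 < ε) (hεδ : 3 / 2 * ε ≤ δ) (hK : 3 / 2 * (‖p‖ ^ 2 + 1) ≤ K) (hx : x ≠ 0)
    (hKx : K * ‖x‖ ≤ 1) :
    ∃ P X, HasTwoJetAt (fun y => quadratic a 0 p (-K • ContinuousLinearMap.id ℝ E) y +
      -ε * Real.log ‖y‖) x P X ∧ ¬ F P X := by
  have hjet := (hasTwoJetAt_quadratic a 0 p (isSymmetric_smul_id (E := E) (-K)) x).add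
    (hasTwoJetAt_mul_log_norm hx (-ε))
  refine ⟨_, _, hjet, hF (ε / ‖x‖ ^ 2) (by positivity) (‖x‖⁻¹ • x)
    (norm_smul_inv_norm (𝕜 := ℝ) hx) _ _ hjet.isSymmetric fun v => ?_⟩
  set P := p + (-K • ContinuousLinearMap.id ℝ E) (x - 0) + (-ε / ‖x‖ ^ 2) • x
  have hgrad : ‖P‖ ^ 2 ≤ 3 * (‖p‖ ^ 2 + (K * ‖x‖) ^ 2 + ε * (ε / ‖x‖ ^ 2)) := by
    refine (norm_sq_add_add_le _ _ _).trans_eq ?_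
    simp only [smul_apply, ContinuousLinearMap.id_apply, sub_zero, norm_smul, mul_pow, div_pow,
      Real.norm_eq_abs, sq_abs, neg_sq]
    field
  have hKx' : (K * ‖x‖) ^ 2 ≤ 1 := by
    have hK₀ : 0 ≤ K := by nlinarith [sq_nonneg ‖p‖]
    exact pow_le_one₀ (by positivity) hKx
  have hcoeff : -K + 1 / 2 * ‖P‖ ^ 2 ≤ ε / ‖x‖ ^ 2 * δ := by
    have hmul := mul_le_mul_of_nonneg_right hεδ (show 0 ≤ ε / ‖x‖ ^ 2 by positivity)
    linarith
  have hcoeff' := mul_le_mul_of_nonneg_right hcoeff (sq_nonneg ‖v‖)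
  simp only [add_apply, sub_apply, smul_apply, ContinuousLinearMap.id_apply, inner_add_left,
    inner_sub_left, real_inner_smul_left, real_inner_self_eq_norm_sq,
    InnerProductSpace.rankOne_apply, neg_div]
  linarith

theorem eventually_quadratic_sub_le (a : ℝ) (p : E) (Z : E →L[ℝ] E) (K : ℝ) (hc : 0 < c) :
    ∀ᶠ y in 𝓝 0, quadratic a 0 p Z y - c * ‖y‖ ≤
      quadratic a 0 p (-K • ContinuousLinearMap.id ℝ E) y - c / 2 * ‖y‖ := by
  have hsmall : ∀ᶠ y : E in 𝓝 0, (‖Z‖ + K) * ‖y‖ < c :=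
    (by fun_prop : ContinuousAt (fun y : E => (‖Z‖ + K) * ‖y‖) 0).eventually_lt_const (by simpa)
  filter_upwards [hsmall] with y hy
  have hZ : ⟪Z y, y⟫_ℝ ≤ ‖Z‖ * ‖y‖ ^ 2 := by
    refine (real_inner_le_norm _ _).trans ?_
    nlinarith [mul_le_mul_of_nonneg_right (Z.le_opNorm y) (norm_nonneg y)]
  have hmul := mul_le_mul_of_nonneg_right hy.le (norm_nonneg y)
  simp only [quadratic, sub_zero, smul_apply, ContinuousLinearMap.id_apply, real_inner_smul_left,
    real_inner_self_eq_norm_sq]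
  linarith

end LogBarrier

section RadialJets

variable {n : ℕ} {Γ : Set (Fin n → ℝ)} {δ : ℝ}

theorem inner_sq_le_norm_sq_mul_norm_sq {V : Type*} [NormedAddCommGroup V] [InnerProductSpace ℝ V]
    (v w : V) : ⟪v, w⟫_ℝ ^ 2 ≤ ‖v‖ ^ 2 * ‖w‖ ^ 2 := by
  rw [← mul_pow, ← sq_abs]
  exact pow_le_pow_left₀ (abs_nonneg _) (abs_real_inner_le_norm v w) 2

theorem excludesRadialJets_closureCondition (hn : 0 < n) (hΓ : CondC Γ)
    (hmem : axialTuple n (1 + δ) (-1 + δ) ∉ closure Γ) :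
    ExcludesRadialJets (ClosureCondition Γ) δ := by
  intro s hs θ hθ p X _ hle hF
  have hsymm : ((-1 + δ) • ContinuousLinearMap.id ℝ (Euc n) +
      (2 : ℝ) • InnerProductSpace.rankOne ℝ θ θ : Euc n →ₗ[ℝ] Euc n).IsSymmetric :=
    (isSymmetric_smul_id _).add ((InnerProductSpace.isSymmetric_rankOne_self θ).smul rfl)
  have hmono := hF.mono (T' := s • ((-1 + δ) • ContinuousLinearMap.id ℝ (Euc n) +
    (2 : ℝ) • InnerProductSpace.rankOne ℝ θ θ)) (hsymm.smul rfl) hΓ.isPermInvariant.closure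
    hΓ.isUpperSet.closure fun v => ?_
  · refine (hasSpectrumIn_compl_iff hsymm hΓ.isPermInvariant.closure).1 ?_
      ((hasSpectrumIn_smul_iff hΓ.smul_mem_closure hs).1 hmono)
    exact hasSpectrumIn_smul_id_add_smul_rankOne hn hθ _ _ (by
      rwa [show -1 + δ + 2 = 1 + δ by ring])
  · rw [inner_conformalOperator_apply_self]
    simp only [smul_apply, add_apply, ContinuousLinearMap.id_apply, inner_add_left,
      real_inner_smul_left, InnerProductSpace.rankOne_apply, real_inner_self_eq_norm_sq]
    linarith [hle v, inner_sq_le_norm_sq_mul_norm_sq p v]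

theorem excludesRadialJets_complCondition (hn : 0 < n) (hΓ : CondC Γ)
    (hmem : axialTuple n (-1 - δ) (1 - δ) ∈ Γ) : ExcludesRadialJets (ComplCondition Γ) δ := by
  intro s hs θ hθ p X hX hle hF
  have hsymm := isSymmetric_conformalOperator p (isSymmetric_neg hX)
  refine (hasSpectrumIn_compl_iff hsymm hΓ.isPermInvariant).1 hF ?_
  refine HasSpectrumIn.mono (T := s • ((1 - δ) • ContinuousLinearMap.id ℝ (Euc n) +
    (-2 : ℝ) • InnerProductSpace.rankOne ℝ θ θ)) hsymm
    hΓ.isPermInvariant hΓ.isUpperSet (fun v => ?_) ?_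
  · rw [inner_conformalOperator_apply_self]
    simp only [smul_apply, add_apply, neg_apply, ContinuousLinearMap.id_apply, inner_add_left,
      inner_neg_left, real_inner_smul_left, InnerProductSpace.rankOne_apply,
      real_inner_self_eq_norm_sq]
    linarith [hle v, sq_nonneg ⟪p, v⟫_ℝ]
  · exact (hasSpectrumIn_smul_iff hΓ.smul_mem hs).2
      (hasSpectrumIn_smul_id_add_smul_rankOne hn hθ _ _ (by
        rwa [show 1 - δ + -2 = -1 - δ by ring]))

end RadialJets

section Extension

variable {E : Type*} [NormedAddCommGroup E] [InnerProductSpace ℝ E] [ProperSpace E]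
  {F : E → (E →L[ℝ] E) → Prop} {m : E → ℝ} {x p : E} {X Z : E →L[ℝ] E} {a c δ K r R : ℝ}

theorem IsViscositySolution.le_quadratic_sub (hF : ExcludesRadialJets F δ) (hδ : 0 < δ)
    (hm : IsViscositySolution F (ball 0 r \ {0}) m) (hmc : ContinuousOn m (closedBall 0 r \ {0}))
    (hc : 0 < c) (hr : r ≤ 1) (hK : 3 / 2 * (‖p‖ ^ 2 + 1) ≤ K) (hKr : K * r ≤ 1)
    (hle : ∀ y, y ≠ 0 → ‖y‖ ≤ r →
      m y ≤ quadratic a 0 p (-K • ContinuousLinearMap.id ℝ E) y - c * ‖y‖)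
    (hx : x ≠ 0) (hxr : ‖x‖ ≤ r) :
    m x ≤ quadratic a 0 p (-K • ContinuousLinearMap.id ℝ E) x - c * r := by
  set q := quadratic a 0 p (-K • ContinuousLinearMap.id ℝ E)
  have hr₀ : 0 < r := (norm_pos_iff.2 hx).trans_le hxr
  have hK₀ : 0 ≤ K := by nlinarith [sq_nonneg ‖p‖]
  have hbarrier : ∀ ε : ℝ, 0 < ε → 3 / 2 * ε ≤ δ →
      m x - (q x + -ε * Real.log ‖x‖) ≤ -(c * r) := fun ε hε hεδ => by
    have hs : 0 < min ‖x‖ (Real.exp (-(c * r) / ε)) := lt_min (norm_pos_iff.2 hx) (Real.exp_pos _)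
    refine hm.sub_le_of_annulus (Ψ := fun y => q y + -ε * Real.log ‖y‖) hmc hs (fun y hsy hyr =>
      hF.exists_hasTwoJetAt_sub_log a hε hεδ hK (norm_pos_iff.1 (hs.trans_le hsy))
        ((mul_le_mul_of_nonneg_left hyr hK₀).trans hKr)) (fun y hy => ?_) (fun y hy => ?_)
      (min_le_left _ _) hxr
    · have hlog : ε * Real.log ‖y‖ ≤ -(c * r) := by
        rw [mul_comm, ← le_div_iff₀ hε, Real.log_le_iff_le_exp (hs.trans_eq hy.symm), hy]
        exact min_le_right _ _
      have hgap := hle y (norm_pos_iff.1 (hs.trans_eq hy.symm))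
        (hy.trans_le ((min_le_left _ _).trans hxr))
      linarith [mul_nonneg hc.le (norm_nonneg y)]
    · have hlog := mul_nonpos_of_nonneg_of_nonpos hε.le (Real.log_nonpos hr₀.le hr)
      have hgap := hle y (norm_pos_iff.1 (hr₀.trans_eq hy.symm)) hy.le
      rw [hy] at hgap ⊢
      linarith
  have hlim : Tendsto (fun ε => m x - (q x + -ε * Real.log ‖x‖)) (𝓝[>] 0) (𝓝 (m x - q x)) := by
    have hcont : Continuous fun ε => m x - (q x + -ε * Real.log ‖x‖) := by fun_prop
    simpa using (hcont.tendsto 0).mono_left nhdsWithin_le_nhds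
  have hle₀ := le_of_tendsto hlim (by
    filter_upwards [Ioc_mem_nhdsGT (show 0 < 2 / 3 * δ by positivity)] with ε hε
    exact hbarrier ε hε.1 (by linarith [hε.2]))
  linarith

theorem IsViscositySolution.exists_eventually_le_sub (hF : ExcludesRadialJets F δ) (hδ : 0 < δ)
    (hR : 0 < R) (hm : IsViscositySolution F (ball 0 R \ {0}) m)
    (hmc : ContinuousOn m (ball 0 R \ {0})) (hc : 0 < c)
    (hle : ∀ᶠ y in 𝓝[≠] 0, m y ≤ quadratic a 0 p Z y - c * ‖y‖) :
    ∃ κ > 0, ∀ᶠ y in 𝓝[≠] 0, m y ≤ a - κ := by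
  obtain ⟨K, hK, hpK⟩ : ∃ K, 0 ≤ K ∧ 3 / 2 * (‖p‖ ^ 2 + 1) ≤ K := ⟨_, by positivity, le_rfl⟩
  obtain ⟨ρ, hρ, hgap⟩ := Metric.eventually_nhds_iff.1
    ((eventually_nhdsWithin_iff.1 hle).and (eventually_quadratic_sub_le a p Z K hc))
  obtain ⟨r, ⟨hr₀, hr⟩, hr'⟩ : ∃ r, r ∈ Ioo 0 (min ρ (min R 1)) ∧ K * r < 1 :=
    (Filter.Eventually.and (Ioo_mem_nhdsGT (lt_min hρ (lt_min hR one_pos))) (nhdsWithin_le_nhds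
      ((by fun_prop : ContinuousAt (fun r : ℝ => K * r) 0).eventually_lt_const (by simp)))).exists
  obtain ⟨hrρ, hrR, hr₁⟩ := by simpa only [lt_min_iff] using hr
  have hupper : ∀ x : E, x ≠ 0 → ‖x‖ ≤ r → m x ≤ a + ⟪p, x⟫_ℝ - c / 2 * r := fun x hx hxr => by
    have hle' := (hm.mono (sdiff_subset_sdiff_left (ball_subset_ball hrR.le))).le_quadratic_sub
      hF hδ (hmc.mono (sdiff_subset_sdiff_left (closedBall_subset_ball hrR))) (half_pos hc)
      hr₁.le hpK hr'.le (fun y hy hyr => by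
        have hy' : dist y 0 < ρ := by rw [dist_zero_right]; exact hyr.trans_lt hrρ
        exact ((hgap hy').1 hy).trans (hgap hy').2) hx hxr
    simp only [quadratic, sub_zero, smul_apply, ContinuousLinearMap.id_apply, real_inner_smul_left,
      real_inner_self_eq_norm_sq] at hle'
    linarith [mul_nonneg hK (sq_nonneg ‖x‖)]
  have hinner : ∀ᶠ y in 𝓝 (0 : E), ⟪p, y⟫_ℝ < c * r / 4 :=
    (by fun_prop : ContinuousAt (fun y => ⟪p, y⟫_ℝ) 0).eventually_lt_const
      (by simpa only [inner_zero_right] using by positivity)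
  refine ⟨c * r / 4, by positivity, ?_⟩
  filter_upwards [nhdsWithin_le_nhds hinner, nhdsWithin_le_nhds (closedBall_mem_nhds 0 hr₀),
    self_mem_nhdsWithin] with y hpy hyr hy
  linarith [hupper y hy (mem_closedBall_zero_iff.1 hyr)]

/-- The cone `-c * |·|` keeps the point where it touches `m` away from the origin. -/
theorem exists_isSuperjet_of_lt_quadratic_sub {ρ τ : ℝ} (hmc : ContinuousOn m (ball 0 R \ {0}))
    (hρR : ρ < R) (hZ : (Z : E →ₗ[ℝ] E).IsSymmetric) (hτ : 0 < τ) (hc : 0 < c) (hcρ : c < τ * ρ)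
    (hle : ∀ y, y ≠ 0 → ‖y‖ ≤ ρ → m y ≤ quadratic a 0 p Z y - τ * ‖y‖ ^ 2)
    (hx : x ≠ 0) (hxρ : ‖x‖ ≤ ρ) (hlt : quadratic a 0 p Z x - c * ‖x‖ < m x) :
    ∃ z ∈ ball 0 R \ {0}, ‖z‖ ≤ c / τ ∧
      IsSuperjet m z (p - c • (‖z‖⁻¹ • z) + Z z) Z := by
  set f : E → ℝ := fun y => m y - quadratic a 0 p Z y + c * ‖y‖ with hf
  have hfx : 0 < f x := by simp only [hf]; linarith
  have hfle : ∀ y, y ≠ 0 → ‖y‖ ≤ ρ → f y ≤ c * ‖y‖ - τ * ‖y‖ ^ 2 := fun y hy hyρ => by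
    linarith [hle y hy hyρ]
  set D : Set E := closedBall 0 ρ \ ball 0 (f x / c)
  have hmem : ∀ y, y ∈ D ↔ ‖y‖ ≤ ρ ∧ f x / c ≤ ‖y‖ := fun y => by simp [D]
  have hne : ∀ y ∈ D, y ≠ 0 := fun y hy =>
    norm_pos_iff.1 ((div_pos hfx hc).trans_le ((hmem y).1 hy).2)
  have hsub : D ⊆ ball 0 R \ {0} := fun y hy =>
    ⟨mem_ball_zero_iff.2 (((hmem y).1 hy).1.trans_lt hρR), hne y hy⟩
  have hxD : x ∈ D := (hmem x).2 ⟨hxρ, (div_le_iff₀' hc).2 (by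
    linarith [hfle x hx hxρ, mul_nonneg hτ.le (sq_nonneg ‖x‖)])⟩
  obtain ⟨z, hzD, hmax⟩ := ((isCompact_closedBall 0 ρ).diff isOpen_ball).exists_isMaxOn ⟨x, hxD⟩
    (((hmc.mono hsub).sub (contDiff_quadratic a 0 p Z).continuous.continuousOn).add
      (continuous_norm.const_mul c).continuousOn)
  have hz : 0 < ‖z‖ := norm_pos_iff.2 (hne z hzD)
  have hfz : f x ≤ c * ‖z‖ - τ * ‖z‖ ^ 2 := (hmax hxD).trans (hfle z (hne z hzD) ((hmem z).1 hzD).1)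
  have hzτ : ‖z‖ < c / τ := (lt_div_iff₀' hτ).2 (by nlinarith)
  have hD : D ∈ 𝓝 z := by
    filter_upwards [continuous_norm.continuousAt.eventually (gt_mem_nhds
      (hzτ.trans ((div_lt_iff₀' hτ).2 hcρ))), continuous_norm.continuousAt.eventually (lt_mem_nhds
      ((div_lt_iff₀' hc).2 (by linarith [mul_pos hτ (pow_pos hz 2)] : f x < c * ‖z‖)))]
      with y hyρ hfy
    exact (hmem y).2 ⟨hyρ.le, hfy.le⟩
  refine ⟨z, hsub hzD, hzτ.le, ?_⟩
  have hjet := hasTwoJetAt_quadratic a 0 (p - c • (‖z‖⁻¹ • z)) hZ z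
  rw [sub_zero] at hjet
  refine hjet.isSuperjet ((hmax.isLocalMax hD).mono fun y hy => ?_)
  have hunit : ‖‖z‖⁻¹ • z‖ = 1 := norm_smul_inv_norm (𝕜 := ℝ) (hne z hzD)
  have hyz : ⟪‖z‖⁻¹ • z, y⟫_ℝ ≤ ‖y‖ :=
    (real_inner_le_norm _ _).trans_eq (by rw [hunit, one_mul])
  have hzz : ⟪‖z‖⁻¹ • z, z⟫_ℝ = ‖z‖ := by
    rw [real_inner_smul_left, real_inner_self_eq_norm_sq, sq, inv_mul_cancel_left₀ hz.ne']
  have hmul := mul_le_mul_of_nonneg_left hyz hc.le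
  simp only [Pi.add_apply, Pi.sub_apply, quadratic, sub_zero] at hy
  simp only [quadratic, sub_zero, inner_sub_left, real_inner_smul_left (r := c), hzz]
  linarith

theorem IsViscositySolution.of_le_quadratic_sub {ρ τ : ℝ} (hFc : IsClosedCondition F)
    (hF : ExcludesRadialJets F δ) (hδ : 0 < δ) (hm : IsViscositySolution F (ball 0 R \ {0}) m)
    (hmc : ContinuousOn m (ball 0 R \ {0})) (hfreq : ∀ b < a, ∃ᶠ y in 𝓝[≠] 0, b < m y)
    (hρ : 0 < ρ) (hρR : ρ < R) (hτ : 0 < τ) (hZ : (Z : E →ₗ[ℝ] E).IsSymmetric)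
    (hle : ∀ y, y ≠ 0 → ‖y‖ ≤ ρ → m y ≤ quadratic a 0 p Z y - τ * ‖y‖ ^ 2) : F p Z := by
  suffices hclosure : (p, Z) ∈ closure {q : E × (E →L[ℝ] E) | F q.1 q.2} from
    hFc.closure_subset hclosure
  refine Metric.mem_closure_iff.2 fun ε hε => ?_
  obtain ⟨c, ⟨hc, hcρ⟩, hcε⟩ : ∃ c, c ∈ Ioo 0 (τ * ρ) ∧ c + ‖Z‖ * (c / τ) < ε :=
    (Filter.Eventually.and (Ioo_mem_nhdsGT (by positivity)) (nhdsWithin_le_nhds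
      ((by fun_prop : ContinuousAt (fun c : ℝ => c + ‖Z‖ * (c / τ)) 0).eventually_lt_const
        (by simpa)))).exists
  have hgap : ∃ᶠ y in 𝓝[≠] 0, quadratic a 0 p Z y - c * ‖y‖ < m y := fun h => by
    obtain ⟨κ, hκ, hlt⟩ := hm.exists_eventually_le_sub hF hδ (hρ.trans hρR) hmc hc
      (h.mono fun y hy => not_lt.1 hy)
    exact hfreq (a - κ) (sub_lt_self _ hκ) (hlt.mono fun y hy => not_lt.2 hy)
  obtain ⟨x, hx, hx₀, hxρ⟩ := (hgap.and_eventually (eventually_mem_nhdsWithin.and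
    (nhdsWithin_le_nhds (closedBall_mem_nhds 0 hρ)))).exists
  obtain ⟨z, hzR, hz, hzjet⟩ := exists_isSuperjet_of_lt_quadratic_sub hmc hρR hZ hτ hc hcρ hle hx₀
    (mem_closedBall_zero_iff.1 hxρ) hx
  refine ⟨(p - c • (‖z‖⁻¹ • z) + Z z, Z), hm z hzR _ _ hZ hzjet, ?_⟩
  rw [Prod.dist_eq, dist_self, max_eq_left dist_nonneg, dist_eq_norm,
    show p - (p - c • (‖z‖⁻¹ • z) + Z z) = c • (‖z‖⁻¹ • z) - Z z by abel]
  have hunit : ‖‖z‖⁻¹ • z‖ = 1 := norm_smul_inv_norm (𝕜 := ℝ) hzR.2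
  refine (norm_sub_le _ _).trans_lt ((add_le_add ?_ ?_).trans_lt hcε)
  · rw [norm_smul, hunit, mul_one, Real.norm_of_nonneg hc.le]
  · exact Z.le_opNorm_of_le hz

theorem IsViscositySolution.of_isSuperjet_zero (hFc : IsClosedCondition F)
    (hF : ExcludesRadialJets F δ) (hδ : 0 < δ) (hR : 0 < R)
    (hm : IsViscositySolution F (ball 0 R \ {0}) m) (hmc : ContinuousOn m (ball 0 R \ {0}))
    (hfreq : ∀ a < m 0, ∃ᶠ y in 𝓝[≠] 0, a < m y) (hX : (X : E →ₗ[ℝ] E).IsSymmetric)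
    (hjet : IsSuperjet m 0 p X) : F p X := by
  refine hFc.of_forall_add_smul_id fun τ hτ => ?_
  obtain ⟨ρ', hρ', hle⟩ := Metric.eventually_nhds_iff.1 (hjet (τ / 4) (by positivity))
  obtain ⟨ρ, hρ, hρlt⟩ := exists_between (lt_min hρ' hR)
  obtain ⟨hρρ', hρR⟩ := lt_min_iff.1 hρlt
  refine hm.of_le_quadratic_sub (τ := τ / 4) hFc hF hδ hmc hfreq hρ hρR (by positivity)
    (hX.add (isSymmetric_smul_id τ)) fun y _ hy => ?_
  have hle' := hle (show dist y 0 < ρ' by rw [dist_zero_right]; exact hy.trans_lt hρρ')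
  simp only [sub_zero] at hle'
  simp only [quadratic, sub_zero, add_apply, smul_apply, ContinuousLinearMap.id_apply,
    inner_add_left, real_inner_smul_left, real_inner_self_eq_norm_sq]
  linarith

theorem IsViscositySolution.of_punctured_ball (hFc : IsClosedCondition F)
    (hF : ExcludesRadialJets F δ) (hδ : 0 < δ) (hR : 0 < R)
    (hm : IsViscositySolution F (ball 0 R \ {0}) m) (hmc : ContinuousOn m (ball 0 R \ {0}))
    (hfreq : ∀ a < m 0, ∃ᶠ y in 𝓝[≠] 0, a < m y) : IsViscositySolution F (ball 0 R) m := by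
  intro x hx p X hX hjet
  rcases eq_or_ne x 0 with rfl | hx₀
  · exact hm.of_isSuperjet_zero hFc hF hδ hR hmc hfreq hX hjet
  · exact hm x ⟨hx, hx₀⟩ p X hX hjet

theorem IsViscositySolution.exists_upperSemicontinuousOn_extension [Nontrivial E]
    (hFc : IsClosedCondition F) (hF : ExcludesRadialJets F δ) (hδ : 0 < δ) (hR : 0 < R)
    (hm : IsViscositySolution F (ball 0 R \ {0}) m) (hmc : ContinuousOn m (ball 0 R \ {0}))
    (hle : IsBoundedUnder (· ≤ ·) (𝓝[≠] 0) m) (hge : IsBoundedUnder (· ≥ ·) (𝓝[≠] 0) m) :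
    ∃ m', EqOn m' m {0}ᶜ ∧ UpperSemicontinuousOn m' (ball 0 R) ∧
      IsViscositySolution F (ball 0 R) m' := by
  classical
  have hne : (𝓝[≠] (0 : E)).NeBot := Module.punctured_nhds_neBot ℝ E 0
  have hopen : IsOpen (ball (0 : E) R \ {0}) := isOpen_ball.sdiff isClosed_singleton
  have heq : EqOn (Function.update m 0 (limsup m (𝓝[≠] 0))) m {0}ᶜ := fun y hy =>
    Function.update_of_ne hy _ _
  refine ⟨_, heq, fun x hx a ha => nhdsWithin_le_nhds ?_, ?_⟩
  · rcases eq_or_ne x 0 with rfl | hx₀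
    · rw [Function.update_self] at ha
      filter_upwards [eventually_nhdsWithin_iff.1 (eventually_lt_of_limsup_lt ha hle)] with y hy
      rcases eq_or_ne y 0 with rfl | hy₀
      · rwa [Function.update_self]
      · rw [heq hy₀]
        exact hy hy₀
    · have ha' : m x < a := (heq hx₀).symm.trans_lt ha
      filter_upwards [(hmc.continuousAt (hopen.mem_nhds ⟨hx, hx₀⟩)).eventually_lt_const ha',
        isOpen_ne.mem_nhds hx₀] with y hy hy₀
      rwa [heq hy₀]
  · have heq' : EqOn m (Function.update m 0 (limsup m (𝓝[≠] 0))) (ball 0 R \ {0}) :=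
      fun y hy => (heq hy.2).symm
    refine (hm.congr hopen heq').of_punctured_ball hFc hF hδ hR (hmc.congr heq'.symm)
      fun a ha => ?_
    rw [Function.update_self] at ha
    refine ((frequently_lt_of_lt_limsup hge.isCoboundedUnder_le ha).and_eventually
      eventually_mem_nhdsWithin).mono fun y hy => ?_
    rw [heq hy.2]
    exact hy.1

end Extension

section Kelvin

open EuclideanGeometry (inversion)

variable {E : Type*} [NormedAddCommGroup E] [InnerProductSpace ℝ E]
  {ψ : E → ℝ} {c z k g : E} {H : E →L[ℝ] E} {lam : ℝ}

/-- The Kelvin transform with respect to the sphere of center `c` and radius `lam`, acting on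
`-2 / (n - 2) * log u` instead of `u`. -/
def kelvinTransform (c : E) (lam : ℝ) (ψ : E → ℝ) (y : E) : ℝ :=
  ψ (inversion c lam y) + Real.log (‖y - c‖ ^ 2 / lam ^ 2)

/-- The gradient of `kelvinTransform c lam ψ` at `c + k`, where `g` is the gradient of `ψ` at the
inverted point. -/
def kelvinGradient (lam : ℝ) (k g : E) : E :=
  (lam ^ 2 * (‖k‖ ^ 2)⁻¹) • g + (2 * (‖k‖ ^ 2)⁻¹ * (1 - lam ^ 2 * (‖k‖ ^ 2)⁻¹ * ⟪k, g⟫_ℝ)) • k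

/-- The Hessian of `kelvinTransform c lam ψ` at `c + k`, where `g` and `H` are the gradient and the
Hessian of `ψ` at the inverted point. -/
def kelvinHessian (lam : ℝ) (k g : E) (H : E →L[ℝ] E) : E →L[ℝ] E :=
  (lam ^ 2 * (‖k‖ ^ 2)⁻¹) ^ 2 • ((Submodule.span ℝ {k})ᗮ.reflection : E →L[ℝ] E) ∘L
      conformalOperator g H ∘L ((Submodule.span ℝ {k})ᗮ.reflection : E →L[ℝ] E) -
    InnerProductSpace.rankOne ℝ (kelvinGradient lam k g) (kelvinGradient lam k g) +
    (1 / 2 * ‖kelvinGradient lam k g‖ ^ 2) • ContinuousLinearMap.id ℝ E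

theorem conformalOperator_kelvin (lam : ℝ) (k g : E) (H : E →L[ℝ] E) :
    conformalOperator (kelvinGradient lam k g) (kelvinHessian lam k g H) =
      (lam ^ 2 * (‖k‖ ^ 2)⁻¹) ^ 2 • ((Submodule.span ℝ {k})ᗮ.reflection : E →L[ℝ] E) ∘L
        conformalOperator g H ∘L ((Submodule.span ℝ {k})ᗮ.reflection : E →L[ℝ] E) := by
  rw [conformalOperator, kelvinHessian]
  abel

theorem reflection_orthogonal_span_singleton_apply (k v : E) :
    ((Submodule.span ℝ {k})ᗮ.reflection : E →L[ℝ] E) v =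
      v - (2 * (‖k‖ ^ 2)⁻¹ * ⟪k, v⟫_ℝ) • k := by
  change (Submodule.span ℝ {k})ᗮ.reflection v = _
  rw [Submodule.reflection_orthogonal_apply, Submodule.reflection_singleton_apply]
  simp only [RCLike.ofReal_real_eq_id, id]
  module

theorem norm_kelvinGradient_sq (hk : k ≠ 0) (lam : ℝ) (g : E) :
    ‖kelvinGradient lam k g‖ ^ 2 = (lam ^ 2 * (‖k‖ ^ 2)⁻¹) ^ 2 * ‖g‖ ^ 2 + 4 * (‖k‖ ^ 2)⁻¹ -
      4 * lam ^ 2 * ((‖k‖ ^ 2)⁻¹) ^ 2 * ⟪k, g⟫_ℝ := by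
  have hk' : ‖k‖ ≠ 0 := norm_ne_zero_iff.2 hk
  rw [kelvinGradient, norm_add_sq_real]
  simp only [norm_smul, mul_pow, Real.norm_eq_abs, sq_abs, real_inner_smul_left,
    real_inner_smul_right, real_inner_comm k g]
  field

theorem kelvinHessian_apply (hk : k ≠ 0) (lam : ℝ) (g : E) (H : E →L[ℝ] E) (v : E) :
    kelvinHessian lam k g H v =
      (-2 * lam ^ 2 * ⟪k, v⟫_ℝ * ((‖k‖ ^ 2)⁻¹) ^ 2) • g +
      ((lam ^ 2 * (‖k‖ ^ 2)⁻¹) ^ 2) • H (((Submodule.span ℝ {k})ᗮ.reflection : E →L[ℝ] E) v) +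
      (8 * lam ^ 2 * ⟪k, v⟫_ℝ * ⟪k, g⟫_ℝ * ((‖k‖ ^ 2)⁻¹) ^ 3 -
        2 * lam ^ 2 * ((‖k‖ ^ 2)⁻¹) ^ 2 * (⟪g, v⟫_ℝ +
          lam ^ 2 * (‖k‖ ^ 2)⁻¹ * ⟪k, H (((Submodule.span ℝ {k})ᗮ.reflection : E →L[ℝ] E) v)⟫_ℝ) -
        4 * ⟪k, v⟫_ℝ * ((‖k‖ ^ 2)⁻¹) ^ 2) • k +
      (2 * (‖k‖ ^ 2)⁻¹ - 2 * lam ^ 2 * ⟪k, g⟫_ℝ * ((‖k‖ ^ 2)⁻¹) ^ 2) • v := by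
  have hk' : ‖k‖ ≠ 0 := norm_ne_zero_iff.2 hk
  rw [kelvinHessian, norm_kelvinGradient_sq hk]
  simp only [add_apply, sub_apply, smul_apply, ContinuousLinearMap.comp_apply,
    ContinuousLinearMap.id_apply, InnerProductSpace.rankOne_apply, conformalOperator_apply]
  generalize H (((Submodule.span ℝ {k})ᗮ.reflection : E →L[ℝ] E) v) = w
  simp only [reflection_orthogonal_span_singleton_apply, kelvinGradient, inner_add_left,
    inner_sub_right, inner_add_right, real_inner_smul_left, real_inner_smul_right,
    real_inner_self_eq_norm_sq, real_inner_comm k g]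
  match_scalars <;> field

theorem hasFDerivAt_kelvinTransform (hz : z ≠ c) (hlam : lam ≠ 0)
    (hg : HasFDerivAt ψ (innerSL ℝ g) (inversion c lam z)) :
    HasFDerivAt (kelvinTransform c lam ψ) (innerSL ℝ (kelvinGradient lam (z - c) g)) z := by
  have hk : ‖z - c‖ ≠ 0 := norm_ne_zero_iff.2 (sub_ne_zero.2 hz)
  have hnorm : HasFDerivAt (fun y => ‖y - c‖ ^ 2) (2 • innerSL ℝ (z - c)) z :=
    by simpa using ((hasFDerivAt_id (𝕜 := ℝ) z).sub_const c).norm_sq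
  refine ((hg.comp z (EuclideanGeometry.hasFDerivAt_inversion hz)).add
    ((Real.hasDerivAt_log (by positivity)).comp_hasFDerivAt z
      (hnorm.mul_const (lam ^ 2)⁻¹))).congr_fderiv ?_
  ext v
  simp only [dist_eq_norm, add_apply, smul_apply, ContinuousLinearMap.comp_apply,
    innerSL_apply_apply,
    reflection_orthogonal_span_singleton_apply, kelvinGradient, inner_add_left, inner_sub_right,
    real_inner_smul_left, real_inner_smul_right, real_inner_comm (z - c) g, nsmul_eq_mul,
    smul_eq_mul]
  push_cast
  field

theorem hasFDerivAt_kelvinGradient {G : E → E} (hz : z ≠ c)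
    (hG : HasFDerivAt G H (inversion c lam z)) :
    HasFDerivAt (fun y => kelvinGradient lam (y - c) (G (inversion c lam y)))
      (kelvinHessian lam (z - c) (G (inversion c lam z)) H) z := by
  have hk := sub_ne_zero.2 hz
  have hk' : ‖z - c‖ ≠ 0 := norm_ne_zero_iff.2 hk
  have hsub : HasFDerivAt (fun y => y - c) (ContinuousLinearMap.id ℝ E) z :=
    (hasFDerivAt_id z).sub_const c
  have hinv : HasFDerivAt (fun y : E => (‖y - c‖ ^ 2)⁻¹) _ z :=
    (hasDerivAt_inv (by positivity)).comp_hasFDerivAt z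
      hsub.norm_sq
  have hGI : HasFDerivAt (fun y => G (inversion c lam y)) _ z :=
    hG.comp z (EuclideanGeometry.hasFDerivAt_inversion hz)
  refine (((hinv.const_mul (lam ^ 2)).smul hGI).add (((hinv.const_mul 2).mul
    (((hinv.const_mul (lam ^ 2)).mul (hsub.inner ℝ hGI)).const_sub 1)).smul hsub)).congr_fderiv ?_
  ext1 v
  rw [kelvinHessian_apply hk]
  simp only [dist_eq_norm, add_apply, neg_apply, smul_apply, ContinuousLinearMap.comp_apply,
    innerSL_apply_apply,
    ContinuousLinearMap.id_apply, map_smul, fderivInnerCLM_apply, nsmul_eq_mul, smul_eq_mul,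
    ContinuousLinearMap.smulRight_apply, ContinuousLinearMap.prod_apply, real_inner_smul_right,
    Pi.mul_apply, real_inner_comm v]
  generalize H (((Submodule.span ℝ {z - c})ᗮ.reflection : E →L[ℝ] E) v) = w
  push_cast
  match_scalars <;> field

theorem HasTwoJetAt.kelvinTransform (hz : z ≠ c) (hlam : lam ≠ 0)
    (h : HasTwoJetAt ψ (inversion c lam z) g H) :
    HasTwoJetAt (kelvinTransform c lam ψ) z (kelvinGradient lam (z - c) g)
      (kelvinHessian lam (z - c) g H) := by
  obtain ⟨G, hG, rfl, hGH⟩ := h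
  refine ⟨fun y => kelvinGradient lam (y - c) (G (inversion c lam y)), ?_, rfl,
    hasFDerivAt_kelvinGradient hz hGH⟩
  have hI : ContinuousAt (inversion c lam) z :=
    (EuclideanGeometry.hasFDerivAt_inversion hz).continuousAt
  filter_upwards [hI.eventually hG, isOpen_ne.mem_nhds hz] with y hy hyc
  exact hasFDerivAt_kelvinTransform hyc hlam hy

theorem log_norm_inversion_sub_sq_div (c : E) (lam : ℝ) (y : E) :
    Real.log (‖inversion c lam y - c‖ ^ 2 / lam ^ 2) = -Real.log (‖y - c‖ ^ 2 / lam ^ 2) := by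
  rw [← dist_eq_norm, EuclideanGeometry.dist_inversion_center, dist_eq_norm, ← Real.log_inv]
  congr 1
  field

theorem complCondition_of_isSuperjet_inversion {n : ℕ} {Γ : Set (Fin n → ℝ)} (hΓ : CondC Γ)
    {c x p : Euc n} (hx : x ≠ c) {lam : ℝ} (hlam : lam ≠ 0) {m : Euc n → ℝ}
    (hm : ∀ (q : Euc n) (Y : Euc n →L[ℝ] Euc n), (Y : Euc n →ₗ[ℝ] Euc n).IsSymmetric →
      IsSuperjet m (inversion c lam x) q Y → ComplCondition Γ q Y)
    {X : Euc n →L[ℝ] Euc n} (hX : (X : Euc n →ₗ[ℝ] Euc n).IsSymmetric)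
    (hjet : IsSuperjet (fun y => m (inversion c lam y) - Real.log (‖y - c‖ ^ 2 / lam ^ 2)) x p X) :
    ComplCondition Γ p X := by
  refine (isClosedCondition_complCondition hΓ.isOpen).of_forall_add_smul_id fun τ hτ => ?_
  set X' := X + τ • ContinuousLinearMap.id ℝ (Euc n)
  have hX' : (X' : Euc n →ₗ[ℝ] Euc n).IsSymmetric := hX.add (isSymmetric_smul_id τ)
  set z := inversion c lam x
  have hzx : inversion c lam z = x := EuclideanGeometry.inversion_inversion c hlam x
  have hzc : z ≠ c := mt (EuclideanGeometry.inversion_eq_center hlam).1 hx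
  have hle := hjet.eventually_le_quadratic hτ
  set q := quadratic (m z - Real.log (‖x - c‖ ^ 2 / lam ^ 2)) x p X'
  have hq : HasTwoJetAt (fun y => -q y) (inversion c lam z) (-p) (-X') := by
    simpa [hzx] using (hasTwoJetAt_quadratic _ x p hX' x).neg
  have hK := hq.kelvinTransform hzc hlam
  have htouch : IsLocalMax (fun y => m y - (-kelvinTransform c lam (-q)) y) z := by
    have hI : Tendsto (inversion c lam) (𝓝 z) (𝓝 x) := by
      have := (EuclideanGeometry.hasFDerivAt_inversion (R := lam) hzc).continuousAt.tendsto
      rwa [hzx] at this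
    filter_upwards [hI.eventually hle] with y hy
    have hyz : inversion c lam (inversion c lam y) = y :=
      EuclideanGeometry.inversion_inversion c hlam y
    have hqx : q x = m z - Real.log (‖x - c‖ ^ 2 / lam ^ 2) := quadratic_self _ _ _ _
    have hlogz := log_norm_inversion_sub_sq_div c lam z
    simp only [hyz, log_norm_inversion_sub_sq_div] at hy
    rw [hzx] at hlogz
    change m y - -(-q _ + _) ≤ m z - -(-q _ + _)
    rw [hzx, hqx, hlogz]
    linarith
  have hF := hm _ _ (isSymmetric_neg hK.isSymmetric) (hK.neg.isSuperjet htouch)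
  rw [ComplCondition, conformalOperator_neg_left, neg_neg, conformalOperator_kelvin,
    hasSpectrumIn_smul_iff hΓ.smul_mem_compl
      (by have := sub_ne_zero.2 hzc; positivity), conformalOperator_neg_left] at hF
  refine hF.map (Submodule.span ℝ {z - c})ᗮ.reflection fun v => ?_
  exact ((Submodule.span ℝ {z - c})ᗮ.reflection_reflection _).symm

end Kelvin

section DoublingLimit

theorem exists_subseq_tendsto_of_mul_sq_add_sq_le {E : Type*} [NormedAddCommGroup E]
    {D : Set E} (hD : IsCompact D) {x y z : ℕ → E} (hx : ∀ k, x k ∈ D) {c : ℝ}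
    (hc : ∀ k : ℕ, ((k : ℝ) + 1) * (‖x k - z k‖ ^ 2 + ‖y k - z k‖ ^ 2) ≤ c) :
    ∃ w ∈ D, ∃ φ : ℕ → ℕ, StrictMono φ ∧ Tendsto (x ∘ φ) atTop (𝓝 w) ∧
      Tendsto (y ∘ φ) atTop (𝓝 w) ∧ Tendsto (z ∘ φ) atTop (𝓝 w) := by
  have hlim : Tendsto (fun k : ℕ => c / ((k : ℝ) + 1)) atTop (𝓝 0) :=
    tendsto_const_nhds.div_atTop (tendsto_natCast_atTop_atTop.atTop_add tendsto_const_nhds)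
  have hzero : ∀ w : ℕ → E, (∀ k : ℕ, ((k : ℝ) + 1) * ‖w k‖ ^ 2 ≤ c) → Tendsto w atTop (𝓝 0) := by
    intro w hw
    rw [tendsto_zero_iff_norm_tendsto_zero]
    have hsq : Tendsto (fun k => ‖w k‖ ^ 2) atTop (𝓝 0) :=
      squeeze_zero (fun k => by positivity)
        (fun k => (le_div_iff₀' (by positivity)).2 (hw k)) hlim
    simpa using hsq.sqrt
  have hxz : Tendsto (fun k => x k - z k) atTop (𝓝 0) := hzero _ fun k =>
    le_trans (by gcongr; exact le_add_of_nonneg_right (by positivity)) (hc k)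
  have hyz : Tendsto (fun k => y k - z k) atTop (𝓝 0) := hzero _ fun k =>
    le_trans (by gcongr; exact le_add_of_nonneg_left (by positivity)) (hc k)
  obtain ⟨w, hw, φ, hφ, hxw⟩ := hD.tendsto_subseq hx
  have hzw : Tendsto (z ∘ φ) atTop (𝓝 w) := by
    simpa [Function.comp_def] using hxw.sub (hxz.comp hφ.tendsto_atTop)
  have hyw : Tendsto (y ∘ φ) atTop (𝓝 w) := by
    simpa [Function.comp_def] using hzw.add (hyz.comp hφ.tendsto_atTop)
  exact ⟨w, hw, φ, hφ, hxw, hyw, hzw⟩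

variable {E : Type*} [NormedAddCommGroup E] [InnerProductSpace ℝ E] {D U : Set E} {a b : E → ℝ}

theorem IsDoublingPoint.mul_sq_add_sq_le {N η K C : ℝ} {x y z t : E} {X Y : E →L[ℝ] E}
    (h : IsDoublingPoint D a b N η x y z X Y) (hN : 1 ≤ N) (hη : η ≤ 1)
    (hK : ∀ s ∈ D, ‖s‖ ≤ K) (ht : t ∈ D) (hC : a x + b y ≤ a t + b t + C) :
    N * (‖x - z‖ ^ 2 + ‖y - z‖ ^ 2) ≤ 4 * C + 8 * K + 4 := by
  have hdist : η * ‖t - z‖ ≤ 2 * K + ‖x - z‖ :=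
    calc η * ‖t - z‖ ≤ ‖t - z‖ := mul_le_of_le_one_left (norm_nonneg _) hη
      _ ≤ ‖t - x‖ + ‖x - z‖ := norm_sub_le_norm_sub_add_norm_sub _ _ _
      _ ≤ 2 * K + ‖x - z‖ := by linarith [norm_sub_le t x, hK t ht, hK x h.left_mem]
  nlinarith [h.add_sub_le t ht, sq_nonneg (‖x - z‖ - 2), sq_nonneg ‖x - z‖, sq_nonneg ‖y - z‖]

theorem add_le_add_of_tendsto_isDoublingPoint (ha : UpperSemicontinuousOn a D)
    (hb : UpperSemicontinuousOn b D) {N η : ℕ → ℝ} {x y z : ℕ → E} {X Y : ℕ → E →L[ℝ] E}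
    (h : ∀ k, IsDoublingPoint D a b (N k) (η k) (x k) (y k) (z k) (X k) (Y k))
    (hN : ∀ k, 0 ≤ N k) (hη : Tendsto η atTop (𝓝 0)) {w : E} (hw : w ∈ D)
    (hx : Tendsto x atTop (𝓝 w)) (hy : Tendsto y atTop (𝓝 w)) (hz : Tendsto z atTop (𝓝 w))
    {t : E} (ht : t ∈ D) : a t + b t ≤ a w + b w := by
  by_contra! hlt
  set e := (a t + b t - (a w + b w)) / 3 with he
  have hη' : Tendsto (fun k => η k * ‖t - z k‖) atTop (𝓝 0) := by
    simpa using hη.mul (hz.const_sub t).norm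
  have hxD : Tendsto x atTop (𝓝[D] w) :=
    tendsto_nhdsWithin_iff.2 ⟨hx, .of_forall fun k => (h k).left_mem⟩
  have hyD : Tendsto y atTop (𝓝[D] w) :=
    tendsto_nhdsWithin_iff.2 ⟨hy, .of_forall fun k => (h k).right_mem⟩
  obtain ⟨k, hak, hbk, hηk⟩ := ((hxD.eventually (ha w hw (a w + e) (by linarith))).and
    ((hyD.eventually (hb w hw (b w + e) (by linarith))).and
      (hη'.eventually_lt_const (show 0 < e by linarith)))).exists
  have hpenalty : 0 ≤ N k / 2 * (‖x k - z k‖ ^ 2 + ‖y k - z k‖ ^ 2) := by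
    have := hN k
    positivity
  linarith [(h k).add_sub_le t ht]

theorem mul_two_mul_norm_add_le {N c : ℝ} (hN : 1 ≤ N) {w : E} (hw : N * ‖w‖ ^ 2 ≤ c) :
    1 / N ^ 2 * (2 * ‖N • w‖ + 1 / N ^ 2) ≤ (2 + c) * (1 / N) := by
  have hN₀ : 0 < N := by linarith
  have hsq : ‖N • w‖ ^ 2 ≤ c * N := by
    rw [norm_smul, mul_pow, Real.norm_of_nonneg hN₀.le]
    nlinarith
  have hη : 1 / N ^ 2 ≤ 1 := by
    rw [div_le_one (by positivity)]
    nlinarith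
  calc 1 / N ^ 2 * (2 * ‖N • w‖ + 1 / N ^ 2) ≤ 1 / N ^ 2 * ((2 + c) * N) := by
        gcongr
        nlinarith [sq_nonneg (‖N • w‖ - 1)]
    _ = (2 + c) * (1 / N) := by field

theorem exists_isDoublingPoint_mem [FiniteDimensional ℝ E] (hD : IsCompact D) (hU : IsOpen U)
    (ha : UpperSemicontinuousOn a D) (hb : UpperSemicontinuousOn b D) {t : E} (ht : t ∈ D)
    (hlt : ∀ s ∈ D \ U, a s + b s < a t + b t) {ε : ℝ} (hε : 0 < ε) :
    ∃ N η x y z X Y, IsDoublingPoint D a b N η x y z X Y ∧ x ∈ U ∧ y ∈ U ∧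
      η * (2 * ‖N • (x - z)‖ + η) < ε := by
  have hne : D.Nonempty := ⟨t, ht⟩
  obtain ⟨s, -, hs⟩ := ha.exists_isMaxOn hne hD
  obtain ⟨s', -, hs'⟩ := hb.exists_isMaxOn hne hD
  obtain ⟨K, hK⟩ := hD.isBounded.exists_norm_le
  have hone : ∀ k : ℕ, (1 : ℝ) ≤ (k : ℝ) + 1 := fun k => by linarith [k.cast_nonneg (α := ℝ)]
  choose x y z X Y h using fun k : ℕ => exists_isDoublingPoint hD hne ha hb
    (show (0 : ℝ) < (k : ℝ) + 1 by positivity) (show (0 : ℝ) < 1 / ((k : ℝ) + 1) ^ 2 by positivity)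
  have hbound := fun k => (h k).mul_sq_add_sq_le (C := a s + b s' - (a t + b t)) (hone k)
    (by rw [div_le_one (by positivity)]; nlinarith [hone k]) hK ht
    (by linarith [isMaxOn_iff.1 hs _ (h k).left_mem, isMaxOn_iff.1 hs' _ (h k).right_mem])
  set c := 4 * (a s + b s' - (a t + b t)) + 8 * K + 4
  obtain ⟨w, hw, φ, hφ, hxw, hyw, hzw⟩ :=
    exists_subseq_tendsto_of_mul_sq_add_sq_le hD (fun k => (h k).left_mem) hbound
  have hinv : Tendsto (fun k => 1 / ((φ k : ℝ) + 1)) atTop (𝓝 0) :=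
    (tendsto_one_div_add_atTop_nhds_zero_nat (𝕜 := ℝ)).comp hφ.tendsto_atTop
  have hwU : w ∈ U := by
    by_contra hwU
    refine (hlt w ⟨hw, hwU⟩).not_ge ?_
    exact add_le_add_of_tendsto_isDoublingPoint ha hb (fun k => h (φ k)) (fun k => by positivity)
      (by simpa using hinv.pow 2) hw hxw hyw hzw ht
  have hsmall : Tendsto (fun k => (2 + c) * (1 / ((φ k : ℝ) + 1))) atTop (𝓝 0) := by
    simpa using hinv.const_mul (2 + c)
  obtain ⟨k, hxk, hyk, hk⟩ := ((hxw.eventually (hU.mem_nhds hwU)).and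
    ((hyw.eventually (hU.mem_nhds hwU)).and (hsmall.eventually_lt_const hε))).exists
  refine ⟨_, _, _, _, _, _, _, h (φ k), hxk, hyk, lt_of_le_of_lt ?_ hk⟩
  exact mul_two_mul_norm_add_le (hone _)
    (le_trans (by gcongr; exact le_add_of_nonneg_right (by positivity)) (hbound (φ k)))

end DoublingLimit

section StrictComparison

theorem inner_sq_sub_le_of_norm_sub_le {E : Type*} [NormedAddCommGroup E] [InnerProductSpace ℝ E]
    {p q : E} {ε : ℝ} (hpq : ‖q - p‖ ≤ ε) (v : E) :
    (⟪p, v⟫_ℝ ^ 2 - 1 / 2 * ‖p‖ ^ 2 * ‖v‖ ^ 2) - (⟪q, v⟫_ℝ ^ 2 - 1 / 2 * ‖q‖ ^ 2 * ‖v‖ ^ 2) ≤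
      3 / 2 * (ε * (2 * ‖p‖ + ε)) * ‖v‖ ^ 2 := by
  have hε : 0 ≤ ε := (norm_nonneg _).trans hpq
  have hq : ‖q‖ ≤ ‖p‖ + ε := by linarith [norm_le_norm_add_norm_sub' q p]
  have hinner : ⟪p, v⟫_ℝ ^ 2 - ⟪q, v⟫_ℝ ^ 2 ≤ ε * (2 * ‖p‖ + ε) * ‖v‖ ^ 2 :=
    calc ⟪p, v⟫_ℝ ^ 2 - ⟪q, v⟫_ℝ ^ 2 = -⟪q - p, v⟫_ℝ * ⟪q + p, v⟫_ℝ := by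
          rw [inner_sub_left, inner_add_left]; ring
      _ ≤ |⟪q - p, v⟫_ℝ| * |⟪q + p, v⟫_ℝ| := by
          rw [← abs_neg, ← abs_mul]; exact le_abs_self _
      _ ≤ (ε * ‖v‖) * ((2 * ‖p‖ + ε) * ‖v‖) := by
          gcongr
          · exact (abs_real_inner_le_norm _ _).trans (by gcongr)
          · refine (abs_real_inner_le_norm _ _).trans ?_
            gcongr
            linarith [norm_add_le q p]
      _ = ε * (2 * ‖p‖ + ε) * ‖v‖ ^ 2 := by ring
  have hnorm : ‖q‖ ^ 2 - ‖p‖ ^ 2 ≤ ε * (2 * ‖p‖ + ε) := by nlinarith [norm_nonneg q]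
  nlinarith [sq_nonneg ‖v‖]

variable {n : ℕ} {Γ : Set (Fin n → ℝ)}

/-- `ClosureCondition` with a margin `κ`: the eigenvalues lowered by `κ` still form a tuple in
`closure Γ`. -/
def StrictClosureCondition (κ : ℝ) (Γ : Set (Fin n → ℝ)) (p : Euc n) (X : Euc n →L[ℝ] Euc n) :
    Prop :=
  HasSpectrumIn (conformalOperator p X - κ • ContinuousLinearMap.id ℝ (Euc n)) (closure Γ)

theorem isClosedCondition_strictClosureCondition (κ : ℝ) (Γ : Set (Fin n → ℝ)) :
    IsClosedCondition (StrictClosureCondition κ Γ) :=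
  (isClosed_setOf_hasSpectrumIn isClosed_closure).preimage
    (continuous_conformalOperator.sub continuous_const)

theorem StrictClosureCondition.not_complCondition {p q : Euc n} {X Y : Euc n →L[ℝ] Euc n} {κ ε : ℝ}
    (hF : StrictClosureCondition κ Γ p X) (hΓ : CondC Γ)
    (hY : (Y : Euc n →ₗ[ℝ] Euc n).IsSymmetric)
    (hXY : ∀ v, ⟪X v, v⟫_ℝ + ⟪Y v, v⟫_ℝ ≤ 0) (hpq : ‖p + q‖ ≤ ε)
    (hε : 3 / 2 * (ε * (2 * ‖p‖ + ε)) < κ) : ¬ComplCondition Γ q Y := by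
  have hsymm := isSymmetric_conformalOperator q (isSymmetric_neg hY)
  rw [ComplCondition, hasSpectrumIn_compl_iff hsymm hΓ.isPermInvariant, not_not]
  refine hΓ.hasSpectrumIn_of_closure hsymm (sub_pos.2 hε) (fun v => ?_) hF
  have hgrad := inner_sq_sub_le_of_norm_sub_le (p := p) (q := -q) (ε := ε)
    (by rwa [← norm_neg, neg_sub, sub_neg_eq_add]) v
  rw [inner_neg_left, neg_sq, norm_neg] at hgrad
  simp only [sub_apply, smul_apply, neg_apply, ContinuousLinearMap.id_apply, inner_sub_left,
    inner_neg_left, real_inner_smul_left, real_inner_self_eq_norm_sq,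
    inner_conformalOperator_apply_self]
  linarith [hXY v]

theorem exists_add_le_add_of_strict (hΓ : CondC Γ) {D U : Set (Euc n)} (hD : IsCompact D)
    (hU : IsOpen U) (hUD : U ⊆ D) {a b : Euc n → ℝ} (ha : UpperSemicontinuousOn a D)
    (hb : UpperSemicontinuousOn b D) {κ : ℝ} (hκ : 0 < κ)
    (hva : IsViscositySolution (StrictClosureCondition κ Γ) U a)
    (hvb : IsViscositySolution (ComplCondition Γ) U b) {t : Euc n} (ht : t ∈ D) :
    ∃ s ∈ D \ U, a t + b t ≤ a s + b s := by
  by_contra! hlt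
  obtain ⟨N, η, x, y, z, X, Y, h, hx, hy, hsmall⟩ := exists_isDoublingPoint_mem hD hU ha hb ht hlt
    (show 0 < 2 / 3 * κ by positivity)
  have hnhds : ∀ s ∈ U, D ∈ 𝓝 s := fun s hs => mem_of_superset (hU.mem_nhds hs) hUD
  refine (hva x hx _ _ h.isSymmetric_left (h.superjet_left.isSuperjet (hnhds x hx))
    ).not_complCondition hΓ h.isSymmetric_right h.hessian_add_nonpos
    h.norm_gradient_add_le (by linarith) ?_
  exact hvb y hy _ _ h.isSymmetric_right (h.superjet_right.isSuperjet (hnhds y hy))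

end StrictComparison

section Comparison

theorem upperSemicontinuousOn_log_exp_add {E : Type*} [TopologicalSpace E] {D : Set E}
    {l h : E → ℝ} (hl : UpperSemicontinuousOn l D) (hh : ContinuousOn h D)
    (hpos : ∀ y ∈ D, 0 < h y) :
    UpperSemicontinuousOn (fun y => Real.log (Real.exp (l y) + h y)) D := by
  have hsum : UpperSemicontinuousOn (fun y => Real.exp (l y) + h y) D :=
    (Real.continuous_exp.comp_upperSemicontinuousOn hl Real.exp_monotone).add
      hh.upperSemicontinuousOn
  intro x hx t ht
  rw [Real.log_lt_iff_lt_exp (add_pos (Real.exp_pos _) (hpos x hx))] at ht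
  filter_upwards [hsum x hx _ ht, self_mem_nhdsWithin] with y hy hyD
  rwa [Real.log_lt_iff_lt_exp (add_pos (Real.exp_pos _) (hpos y hyD))]

section Logarithm

variable {E : Type*} [NormedAddCommGroup E] [InnerProductSpace ℝ E]

theorem norm_add_sq_div_le {w h : ℝ} (hw : 0 < w) (hh : 0 < h) (P Q : E) :
    ‖P + Q‖ ^ 2 / (w + h) ≤ ‖P‖ ^ 2 / w + ‖Q‖ ^ 2 / h := by
  have hsq : 0 ≤ ‖h • P - w • Q‖ ^ 2 / (w * h * (w + h)) := by positivity
  rw [norm_sub_sq_real, norm_smul, norm_smul, real_inner_smul_left, real_inner_smul_right,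
    Real.norm_of_nonneg hw.le, Real.norm_of_nonneg hh.le] at hsq
  rw [norm_add_sq_real, ← sub_nonneg]
  convert hsq using 1
  field

theorem conformalOperator_log (w : ℝ) (P : E) (Y : E →L[ℝ] E) :
    conformalOperator (w⁻¹ • P) (w⁻¹ • Y + -(w ^ 2)⁻¹ • InnerProductSpace.rankOne ℝ P P) =
      w⁻¹ • Y - (1 / 2 * (w⁻¹ ^ 2 * ‖P‖ ^ 2)) • ContinuousLinearMap.id ℝ E := by
  ext1 v
  simp only [conformalOperator_apply, add_apply, sub_apply, smul_apply,
    InnerProductSpace.rankOne_apply, ContinuousLinearMap.id_apply, real_inner_smul_left, norm_smul,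
    mul_pow, Real.norm_eq_abs, sq_abs]
  module

theorem HasTwoJetAt.log_exp_sub {q h : E → ℝ} {x p Q : E} {X S : E →L[ℝ] E} {w : ℝ}
    (hq : HasTwoJetAt q x p X) (hh : HasTwoJetAt h x Q S) (hw : 0 < w)
    (heq : Real.exp (q x) = w + h x) :
    HasTwoJetAt (fun y => Real.log (Real.exp (q y) - h y)) x
      (w⁻¹ • ((w + h x) • p - Q))
      (w⁻¹ • ((w + h x) • (X + InnerProductSpace.rankOne ℝ p p) - S) +
        -(w ^ 2)⁻¹ • InnerProductSpace.rankOne ℝ ((w + h x) • p - Q) ((w + h x) • p - Q)) := by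
  have hexp := hq.comp (F := Real.exp) (F' := Real.exp) (F'' := Real.exp (q x))
    (.of_forall Real.hasDerivAt_exp) (Real.hasDerivAt_exp _)
  have hval : Real.exp (q x) + -h x = w := by rw [heq]; ring
  have hlog := (hexp.add hh.neg).comp (F := Real.log) (F' := fun t => t⁻¹) (F'' := -(w ^ 2)⁻¹)
    (by
      rw [hval]
      filter_upwards [lt_mem_nhds hw] with t ht using Real.hasDerivAt_log ht.ne')
    (by rw [hval]; exact hasDerivAt_inv hw.ne')
  simpa only [heq, add_sub_cancel_right, ← sub_eq_add_neg, ← smul_add] using hlog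

end Logarithm

variable {n : ℕ} {Γ : Set (Fin n → ℝ)}

theorem strictClosureCondition_of_log (hΓ : CondC Γ) {p Q : Euc n} {X : Euc n →L[ℝ] Euc n}
    (hX : (X : Euc n →ₗ[ℝ] Euc n).IsSymmetric) {w h s κ : ℝ} (hw : 0 < w) (hh : 0 < h)
    (hQ : ‖Q‖ ^ 2 ≤ s * h) (hκ : 2 * κ * (w + h) ≤ s)
    (hF : ClosureCondition Γ (w⁻¹ • ((w + h) • p - Q))
      (w⁻¹ • ((w + h) • (X + InnerProductSpace.rankOne ℝ p p) - s • ContinuousLinearMap.id ℝ _) +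
        -(w ^ 2)⁻¹ • InnerProductSpace.rankOne ℝ ((w + h) • p - Q) ((w + h) • p - Q))) :
    StrictClosureCondition κ Γ p X := by
  have hW : 0 < w + h := add_pos hw hh
  rw [ClosureCondition, conformalOperator_log] at hF
  set P := (w + h) • p - Q with hP
  have hgrad : (w + h) * ‖p‖ ^ 2 ≤ ‖P‖ ^ 2 / w + s := by
    have hle := norm_add_sq_div_le hw hh P Q
    have hQ' : ‖Q‖ ^ 2 / h ≤ s := (div_le_iff₀ hh).2 hQ
    rw [hP, sub_add_cancel, norm_smul, Real.norm_of_nonneg hW.le, ← hP, mul_pow, sq (w + h),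
      mul_assoc, mul_div_cancel_left₀ _ hW.ne'] at hle
    linarith
  refine HasSpectrumIn.mono ((isSymmetric_conformalOperator p hX).sub (isSymmetric_smul_id κ))
    hΓ.isPermInvariant.closure hΓ.isUpperSet.closure (fun v => ?_)
    (hF.smul (hΓ.smul_mem_closure (w / (w + h)) (by positivity)))
  have hcoef : κ + 1 / 2 * ‖p‖ ^ 2 ≤ s / (w + h) + 1 / 2 * (‖P‖ ^ 2 / w) / (w + h) := by
    rw [← add_div, le_div_iff₀ hW]
    linarith
  have hscaled : w / (w + h) * (w⁻¹ * ((w + h) * (⟪X v, v⟫_ℝ + ⟪p, v⟫_ℝ ^ 2) - s * ‖v‖ ^ 2) -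
      1 / 2 * (w⁻¹ ^ 2 * ‖P‖ ^ 2) * ‖v‖ ^ 2) = ⟪X v, v⟫_ℝ + ⟪p, v⟫_ℝ ^ 2 -
        (s / (w + h) + 1 / 2 * (‖P‖ ^ 2 / w) / (w + h)) * ‖v‖ ^ 2 := by field
  simp only [sub_apply, smul_apply, add_apply, ContinuousLinearMap.id_apply, inner_sub_left,
    inner_add_left, real_inner_smul_left, InnerProductSpace.rankOne_apply,
    real_inner_self_eq_norm_sq, inner_conformalOperator_apply_self, ← sq, hscaled]
  linarith [mul_le_mul_of_nonneg_right hcoef (sq_nonneg ‖v‖)]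

theorem strictClosureCondition_of_isSuperjet_log_exp_add (hΓ : CondC Γ) {l h : Euc n → ℝ}
    {x p Q : Euc n} {X : Euc n →L[ℝ] Euc n} {s κ : ℝ}
    (hl : ∀ (q : Euc n) (Y : Euc n →L[ℝ] Euc n), (Y : Euc n →ₗ[ℝ] Euc n).IsSymmetric →
      IsSuperjet l x q Y → ClosureCondition Γ q Y)
    (hpos : ∀ y, 0 < h y) (hh : HasTwoJetAt h x Q (s • ContinuousLinearMap.id ℝ (Euc n)))
    (hQ : ‖Q‖ ^ 2 ≤ s * h x) (hκ : 2 * κ * (Real.exp (l x) + h x) ≤ s)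
    (hX : (X : Euc n →ₗ[ℝ] Euc n).IsSymmetric)
    (hjet : IsSuperjet (fun y => Real.log (Real.exp (l y) + h y)) x p X) :
    StrictClosureCondition κ Γ p X := by
  refine (isClosedCondition_strictClosureCondition κ Γ).of_forall_add_smul_id fun τ hτ => ?_
  set X' := X + τ • ContinuousLinearMap.id ℝ (Euc n)
  have hX' : (X' : Euc n →ₗ[ℝ] Euc n).IsSymmetric := hX.add (isSymmetric_smul_id τ)
  have hexp_pos : ∀ y, 0 < Real.exp (l y) + h y := fun y => add_pos (Real.exp_pos _) (hpos y)
  have hle := hjet.eventually_le_quadratic hτ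
  set q := quadratic (Real.log (Real.exp (l x) + h x)) x p X' with hq_def
  have hqx : Real.exp (q x) = Real.exp (l x) + h x := by
    rw [hq_def, quadratic_self, Real.exp_log (hexp_pos x)]
  have hq : HasTwoJetAt q x p X' := by
    simpa using hasTwoJetAt_quadratic _ x p hX' x
  have htwo := hq.log_exp_sub hh (Real.exp_pos _) hqx
  refine strictClosureCondition_of_log hΓ hX' (Real.exp_pos _) (hpos x) hQ hκ
    (hl _ _ htwo.isSymmetric (htwo.isSuperjet ?_))
  filter_upwards [hle] with y hy
  rw [Real.log_le_iff_le_exp (hexp_pos y)] at hy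
  have hlog : l y ≤ Real.log (Real.exp (q y) - h y) := by
    rw [Real.le_log_iff_exp_le (by linarith [Real.exp_pos (l y)])]
    linarith
  rw [hqx, add_sub_cancel_right, Real.log_exp, sub_self]
  linarith

theorem hasTwoJetAt_mul_add_norm_sq {E : Type*} [NormedAddCommGroup E] [InnerProductSpace ℝ E]
    (ε K : ℝ) (x : E) :
    HasTwoJetAt (fun y : E => ε * (K + ‖y‖ ^ 2)) x ((2 * ε) • x)
      ((2 * ε) • ContinuousLinearMap.id ℝ E) := by
  have h := hasTwoJetAt_quadratic (ε * K) 0 0 (isSymmetric_smul_id (E := E) (2 * ε)) x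
  convert h using 1
  · funext y
    simp only [quadratic, inner_zero_left, smul_apply, ContinuousLinearMap.id_apply,
      real_inner_smul_left, real_inner_self_eq_norm_sq, sub_zero]
    ring
  · simp

theorem add_le_of_forall_mem_diff (hΓ : CondC Γ) {D U : Set (Euc n)} (hD : IsCompact D)
    (hU : IsOpen U) (hUD : U ⊆ D) {a b : Euc n → ℝ} (ha : UpperSemicontinuousOn a D)
    (hb : UpperSemicontinuousOn b D) (hva : IsViscositySolution (ClosureCondition Γ) U a)
    (hvb : IsViscositySolution (ComplCondition Γ) U b) {A C : ℝ} (hA : ∀ x ∈ D, |a x| ≤ A)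
    (hC : ∀ x ∈ D \ U, a x + b x ≤ C) {t : Euc n} (ht : t ∈ D) : a t + b t ≤ C := by
  refine le_of_forall_pos_le_add fun δ hδ => ?_
  obtain ⟨K, hK₀, hK⟩ := hD.isBounded.exists_pos_norm_le
  have hKsq : ∀ x ∈ D, ‖x‖ ^ 2 ≤ K ^ 2 := fun x hx => by gcongr; exact hK x hx
  set ε := Real.exp (-A) * δ / (2 * K ^ 2) with hε
  have hε₀ : 0 < ε := by positivity
  have hεK : 2 * ε * K ^ 2 = Real.exp (-A) * δ := by rw [hε]; field
  set h : Euc n → ℝ := fun y => ε * (K ^ 2 + ‖y‖ ^ 2)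
  have hpos : ∀ y, 0 < h y := fun y => by positivity
  have hle : ∀ x ∈ D, h x ≤ Real.exp (-A) * δ := fun x hx => by
    nlinarith [hKsq x hx]
  have hmax : 0 < Real.exp A + Real.exp (-A) * δ := by positivity
  obtain ⟨s, hs, hts⟩ := exists_add_le_add_of_strict hΓ hD hU hUD
    (κ := ε / (Real.exp A + Real.exp (-A) * δ))
    (upperSemicontinuousOn_log_exp_add ha (by fun_prop) fun y _ => hpos y) hb (by positivity)
    (fun x hx p X hX hjet => strictClosureCondition_of_isSuperjet_log_exp_add hΓ (hva x hx) hpos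
      (hasTwoJetAt_mul_add_norm_sq ε (K ^ 2) x)
      (by
        rw [norm_smul, Real.norm_of_nonneg (by positivity)]
        nlinarith [hKsq x (hUD hx), sq_nonneg ε, mul_pos hε₀ (hpos x)])
      (by
        have hexp := Real.exp_le_exp.2 (le_of_abs_le (hA x (hUD hx)))
        rw [mul_assoc, div_mul_eq_mul_div]
        gcongr
        exact div_le_of_le_mul₀ hmax.le hε₀.le (by gcongr; exact hle x (hUD hx)))
      hX hjet) hvb ht
  have hlower : a t ≤ Real.log (Real.exp (a t) + h t) := by
    rw [Real.le_log_iff_exp_le (add_pos (Real.exp_pos _) (hpos t))]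
    linarith [hpos t]
  have hupper : Real.log (Real.exp (a s) + h s) ≤ a s + δ := by
    have hexp := Real.exp_le_exp.2 (neg_le_of_abs_le (hA s hs.1))
    rw [Real.log_le_iff_le_exp (add_pos (Real.exp_pos _) (hpos s)), Real.exp_add]
    nlinarith [hle s hs.1, Real.add_one_le_exp δ, Real.exp_pos (a s)]
  linarith [hC s hs]

end Comparison

section MovingSpheres

open EuclideanGeometry (inversion)

section Inversion

variable {E : Type*} [NormedAddCommGroup E] [InnerProductSpace ℝ E] {c z : E} {lam R : ℝ}

theorem norm_inversion_sub_center (c : E) (lam : ℝ) (z : E) :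
    ‖inversion c lam z - c‖ = lam ^ 2 / ‖z - c‖ := by
  simpa only [dist_eq_norm] using EuclideanGeometry.dist_inversion_center c z lam

theorem inversion_mem_closedBall (hlam : 0 < lam) (hz : lam ≤ ‖z - c‖) :
    inversion c lam z ∈ closedBall c lam := by
  rw [mem_closedBall_iff_norm, norm_inversion_sub_center, div_le_iff₀ (hlam.trans_le hz), sq]
  gcongr

theorem upperSemicontinuousOn_inversion_sub_log (hlam : 0 < lam) {m : E → ℝ}
    (hm : UpperSemicontinuousOn m (closedBall c lam)) :
    UpperSemicontinuousOn (fun y => m (inversion c lam y) - Real.log (‖y - c‖ ^ 2 / lam ^ 2))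
      (ball c lam)ᶜ := by
  have hle : ∀ z ∈ (ball c lam)ᶜ, lam ≤ ‖z - c‖ := fun z hz =>
    not_lt.1 (mt mem_ball_iff_norm.2 hz)
  have hpos : ∀ z ∈ (ball c lam)ᶜ, 0 < ‖z - c‖ := fun z hz => hlam.trans_le (hle z hz)
  have hinv : UpperSemicontinuousOn (fun y => m (inversion c lam y)) (ball c lam)ᶜ := by
    intro z hz t ht
    have htendsto : Tendsto (inversion c lam) (𝓝[(ball c lam)ᶜ] z)
        (𝓝[closedBall c lam] (inversion c lam z)) :=
      tendsto_nhdsWithin_iff.2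
        ⟨(EuclideanGeometry.hasFDerivAt_inversion
          (sub_ne_zero.1 (norm_pos_iff.1 (hpos z hz)))).continuousAt.tendsto.mono_left
          nhdsWithin_le_nhds,
        eventually_mem_nhdsWithin.mono fun w hw => inversion_mem_closedBall hlam (hle w hw)⟩
    exact htendsto.eventually (hm _ (inversion_mem_closedBall hlam (hle z hz)) t ht)
  have hlog : ContinuousOn (fun z : E => -Real.log (‖z - c‖ ^ 2 / lam ^ 2)) (ball c lam)ᶜ :=
    (ContinuousOn.log (by fun_prop) fun z hz => by have := hpos z hz; positivity).neg
  exact hinv.add hlog.upperSemicontinuousOn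

theorem inversion_sub_smul_add_smul {v : E} (hv : ‖v‖ = 1) {r d : ℝ} (hr : 0 < r) (hd : 0 < d)
    (a : E) : inversion (a - r • v) √(r * (r + d)) (a + d • v) = a := by
  have hsub : a + d • v - (a - r • v) = (r + d) • v := by module
  rw [EuclideanGeometry.inversion, dist_eq_norm, vsub_eq_sub, hsub, norm_smul, hv, mul_one,
    Real.norm_of_nonneg (by positivity), div_pow, Real.sq_sqrt (by positivity), smul_smul,
    show r * (r + d) / (r + d) ^ 2 * (r + d) = r by field, vadd_eq_add, add_sub_cancel]

-- The two candidate spheres meet only on `‖p - a‖ ^ 2 = 0`, and neither passes through `a`.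
theorem exists_norm_sub_ne_sqrt {v : E} (hv : ‖v‖ = 1) {ρ d : ℝ} (hρ : 0 < ρ) (hd : 0 < d)
    (a p : E) : ∃ r ∈ Icc (ρ / 2) ρ, ‖p - (a - r • v)‖ ≠ √(r * (r + d)) := by
  by_contra! hsphere
  have hexpand : ∀ r ∈ Icc (ρ / 2) ρ, ‖p - a‖ ^ 2 + 2 * (r * ⟪p - a, v⟫_ℝ) = r * d := by
    intro r hr
    have hr₀ : 0 < r := (half_pos hρ).trans_le hr.1
    have hsq := congrArg (· ^ 2) (hsphere r hr)
    simp only [show p - (a - r • v) = p - a + r • v by abel, norm_add_sq_real,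
      real_inner_smul_right, norm_smul, hv, mul_one, Real.norm_eq_abs, sq_abs,
      Real.sq_sqrt (show 0 ≤ r * (r + d) by positivity)] at hsq
    linarith
  have h₁ := hexpand (ρ / 2) ⟨le_rfl, by linarith⟩
  have h₂ := hexpand ρ ⟨by linarith, le_rfl⟩
  have hpa : p - a = 0 := norm_eq_zero.1 (pow_eq_zero_iff two_ne_zero |>.1 (by linarith))
  rw [hpa] at h₂
  simp only [norm_zero, inner_zero_left] at h₂
  nlinarith [mul_pos hρ hd]

theorem exists_inversion_eq_of_ne {a b : E} (hab : a ≠ b) (p : E) {ρ : ℝ} (hρ : 0 < ρ) :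
    ∃ c, ∃ r ∈ Icc (ρ / 2) ρ, ‖a - c‖ = r ∧ ‖b - c‖ = r + ‖b - a‖ ∧
      inversion c √(r * (r + ‖b - a‖)) b = a ∧ ‖p - c‖ ≠ √(r * (r + ‖b - a‖)) := by
  have hd : 0 < ‖b - a‖ := norm_sub_pos_iff.2 hab.symm
  obtain ⟨v, hv, hb⟩ : ∃ v : E, ‖v‖ = 1 ∧ a + ‖b - a‖ • v = b :=
    ⟨‖b - a‖⁻¹ • (b - a), norm_smul_inv_norm (𝕜 := ℝ) (sub_ne_zero.2 hab.symm), by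
      rw [smul_inv_smul₀ hd.ne', add_sub_cancel]⟩
  obtain ⟨r, hr, hp⟩ := exists_norm_sub_ne_sqrt hv hρ hd a p
  have hr₀ : 0 < r := (half_pos hρ).trans_le hr.1
  refine ⟨a - r • v, r, hr, ?_, ?_, ?_, hp⟩
  · rw [sub_sub_cancel, norm_smul, hv, mul_one, Real.norm_of_nonneg hr₀.le]
  · have hsub : b - (a - r • v) = (r + ‖b - a‖) • v := by
      nth_rw 1 [← hb]
      module
    rw [hsub, norm_smul, hv, mul_one, Real.norm_of_nonneg (by positivity)]
  · nth_rw 2 [← hb]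
    exact inversion_sub_smul_add_smul hv hr₀ hd a

end Inversion

variable {n : ℕ} {Γ : Set (Fin n → ℝ)} {c p : Euc n} {lam R A : ℝ} {l m : Euc n → ℝ}

theorem add_inversion_le_log (hΓ : CondC Γ) (hlam : 0 < lam) (hlamR : lam < R)
    (hl : UpperSemicontinuousOn l (closedBall c R)) (hm : UpperSemicontinuousOn m (closedBall c R))
    (hvl : IsViscositySolution (ClosureCondition Γ) (closedBall c R) l)
    (hvm : IsViscositySolution (ComplCondition Γ) (closedBall c R) m)
    (hA : ∀ y ∈ closedBall c R, |l y| ≤ A) (hinner : ∀ y, ‖y - c‖ = lam → l y + m y ≤ 0)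
    (houter : ∀ y, ‖y - c‖ = R → l y + m (inversion c lam y) ≤ Real.log (R ^ 2 / lam ^ 2))
    {y : Euc n} (hy : lam ≤ ‖y - c‖) (hyR : ‖y - c‖ ≤ R) :
    l y + m (inversion c lam y) ≤ Real.log (‖y - c‖ ^ 2 / lam ^ 2) := by
  have hinv : ∀ z, lam ≤ ‖z - c‖ → inversion c lam z ∈ closedBall c R := fun z hz =>
    closedBall_subset_closedBall hlamR.le (inversion_mem_closedBall hlam hz)
  have hD : IsCompact (closedBall c R \ ball c lam) := (isCompact_closedBall c R).diff isOpen_ball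
  have hU : IsOpen (ball c R \ closedBall c lam) := isOpen_ball.sdiff isClosed_closedBall
  have hUD : ball c R \ closedBall c lam ⊆ closedBall c R \ ball c lam :=
    sdiff_subset_sdiff ball_subset_closedBall ball_subset_closedBall
  have hvb : IsViscositySolution (ComplCondition Γ) (ball c R \ closedBall c lam)
      fun y => m (inversion c lam y) - Real.log (‖y - c‖ ^ 2 / lam ^ 2) := by
    intro x hx q X hX hjet
    have hxlam : lam < ‖x - c‖ := not_le.1 (mt mem_closedBall_iff_norm.2 hx.2)
    exact complCondition_of_isSuperjet_inversion hΓ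
      (sub_ne_zero.1 (norm_pos_iff.1 (hlam.trans hxlam))) hlam.ne' (hvm _ (hinv x hxlam.le)) hX hjet
  have hboundary : ∀ z ∈ (closedBall c R \ ball c lam) \ (ball c R \ closedBall c lam),
      l z + (m (inversion c lam z) - Real.log (‖z - c‖ ^ 2 / lam ^ 2)) ≤ 0 := by
    rintro z ⟨⟨hzR, hzlam⟩, hzU⟩
    rw [mem_closedBall_iff_norm] at hzR
    rw [mem_ball_iff_norm, not_lt] at hzlam
    rcases hzlam.eq_or_lt' with heq | hlt
    · rw [EuclideanGeometry.inversion_of_mem_sphere (mem_sphere_iff_norm.2 heq), heq,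
        div_self (by positivity), Real.log_one, sub_zero]
      exact hinner z heq
    · have heq : ‖z - c‖ = R := hzR.eq_of_not_lt fun hlt' => hzU
        ⟨mem_ball_iff_norm.2 hlt', mt mem_closedBall_iff_norm.1 hlt.not_ge⟩
      have := houter z heq
      rw [heq]
      linarith
  have hle := add_le_of_forall_mem_diff hΓ hD hU hUD (hl.mono sdiff_subset)
    ((upperSemicontinuousOn_inversion_sub_log hlam
      (hm.mono (closedBall_subset_closedBall hlamR.le))).mono fun z hz => hz.2)
    (hvl.mono fun z hz => (hUD hz).1) hvb (fun z hz => hA z hz.1) hboundary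
    (t := y) ⟨mem_closedBall_iff_norm.2 hyR, mt mem_ball_iff_norm.1 hy.not_gt⟩
  linarith

theorem add_inversion_le_log_of_le_mul_exp (hΓ : CondC Γ) (hlam : 0 < lam) (hA₀ : 0 < A)
    (hlamR : lam ≤ R * Real.exp (-A)) (hl : UpperSemicontinuousOn l (closedBall c R))
    (hm : UpperSemicontinuousOn m (closedBall c R))
    (hvl : IsViscositySolution (ClosureCondition Γ) (closedBall c R) l)
    (hvm : IsViscositySolution (ComplCondition Γ) (closedBall c R) m)
    (hAl : ∀ y ∈ closedBall c R, |l y| ≤ A) (hAm : ∀ y ∈ closedBall c R, m y ≤ A)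
    (hinner : ∀ y, ‖y - c‖ = lam → l y + m y ≤ 0) {y : Euc n} (hy : lam ≤ ‖y - c‖)
    (hyR : ‖y - c‖ ≤ R) :
    l y + m (inversion c lam y) ≤ Real.log (‖y - c‖ ^ 2 / lam ^ 2) := by
  have hR : 0 < R := pos_of_mul_pos_left (hlam.trans_le hlamR) (Real.exp_pos _).le
  have hlt : lam < R := hlamR.trans_lt
    (mul_lt_of_lt_one_right hR (Real.exp_lt_one_iff.2 (neg_lt_zero.2 hA₀)))
  refine add_inversion_le_log hΓ hlam hlt hl hm hvl hvm hAl hinner (fun z hz => ?_) hy hyR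
  have hl_le : l z ≤ A := le_of_abs_le (hAl z (mem_closedBall_iff_norm.2 hz.le))
  have hm_le : m (inversion c lam z) ≤ A :=
    hAm _ (closedBall_subset_closedBall hlt.le
      (inversion_mem_closedBall hlam (hlt.le.trans_eq hz.symm)))
  calc l z + m (inversion c lam z) ≤ 2 * A := by linarith
    _ = Real.log (R ^ 2 / (R * Real.exp (-A)) ^ 2) := by
      rw [mul_pow, ← Real.exp_nat_mul, div_mul_cancel_left₀ (by positivity), ← Real.exp_neg,
        Real.log_exp]
      push_cast
      ring
    _ ≤ Real.log (R ^ 2 / lam ^ 2) := by gcongr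

theorem log_add_sq_div_le {r d : ℝ} (hr : 0 < r) (hd : 0 < d) :
    Real.log ((r + d) ^ 2 / (r * (r + d))) ≤ d / r := by
  rw [show (r + d) ^ 2 / (r * (r + d)) = 1 + d / r by field]
  linarith [Real.log_le_sub_one_of_pos (show 0 < 1 + d / r by positivity)]

theorem add_le_mul_norm_sub (hΓ : CondC Γ) (hR : 0 < R) (hA₀ : 0 < A) {x₀ : Euc n}
    (hl : UpperSemicontinuousOn l (closedBall x₀ (4 * R)))
    (hm : UpperSemicontinuousOn m (closedBall x₀ (4 * R)))
    (hvl : IsViscositySolution (ClosureCondition Γ) (closedBall x₀ (4 * R)) l)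
    (hvm : IsViscositySolution (ComplCondition Γ) (closedBall x₀ (4 * R)) m)
    (hAl : ∀ y ∈ closedBall x₀ (4 * R), |l y| ≤ A) (hAm : ∀ y ∈ closedBall x₀ (4 * R), m y ≤ A)
    (hle : ∀ y ∈ closedBall x₀ (4 * R), y ≠ p → l y + m y ≤ 0) {ρ : ℝ}
    (hρ : 2 * ρ = R * Real.exp (-A)) {a b : Euc n} (ha : a ∈ ball x₀ (ρ / 4))
    (hb : b ∈ ball x₀ (ρ / 4)) (hab : a ≠ b) : l b + m a ≤ 2 / ρ * ‖b - a‖ := by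
  have hρ₀ : 0 < ρ := by linarith [mul_pos hR (Real.exp_pos (-A))]
  have hρR : 2 * ρ < R := hρ.trans_lt
    (mul_lt_of_lt_one_right hR (Real.exp_lt_one_iff.2 (neg_lt_zero.2 hA₀)))
  rw [mem_ball_iff_norm] at ha hb
  obtain ⟨c, r, ⟨hρr, hrρ⟩, hac, hbc, hinv, hp⟩ := exists_inversion_eq_of_ne hab p hρ₀
  set d := ‖b - a‖
  have hd : 0 < d := norm_sub_pos_iff.2 hab.symm
  have hdρ : d ≤ ρ / 2 := by
    linarith [norm_sub_le_norm_sub_add_norm_sub b x₀ a, norm_sub_rev x₀ a]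
  have hr : 0 < r := by linarith
  set lam := √(r * (r + d))
  have hlamsq : lam ^ 2 = r * (r + d) := Real.sq_sqrt (by positivity)
  have hsub : closedBall c R ⊆ closedBall x₀ (4 * R) := by
    refine closedBall_subset_closedBall' ?_
    rw [dist_eq_norm]
    linarith [norm_sub_le_norm_sub_add_norm_sub c a x₀, norm_sub_rev c a]
  have hlamR : lam ≤ R * Real.exp (-A) := by
    rw [← hρ]
    exact Real.sqrt_le_left (by positivity) |>.2 (by nlinarith)
  have hinner : ∀ y, ‖y - c‖ = lam → l y + m y ≤ 0 := fun y hy =>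
    hle y (hsub (mem_closedBall_iff_norm.2 (hy.trans_le (by linarith))))
      fun hyp => hp (hyp ▸ hy)
  have hlog := add_inversion_le_log_of_le_mul_exp hΓ (Real.sqrt_pos.2 (by positivity)) hA₀ hlamR
    (hl.mono hsub) (hm.mono hsub) (hvl.mono hsub) (hvm.mono hsub) (fun y hy => hAl y (hsub hy))
    (fun y hy => hAm y (hsub hy)) hinner (y := b)
    (by rw [hbc]; exact Real.sqrt_le_left (by positivity) |>.2 (by nlinarith))
    (by rw [hbc]; linarith)
  rw [hbc, hlamsq, hinv] at hlog
  calc l b + m a ≤ d / r := hlog.trans (log_add_sq_div_le hr hd)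
    _ ≤ d / (ρ / 2) := by gcongr
    _ = 2 / ρ * d := by field

theorem exists_forall_abs_le_and_le {α : Type*} [TopologicalSpace α] {K : Set α} {l m : α → ℝ}
    {p : α} (hK : IsCompact K) (hl : UpperSemicontinuousOn l K) (hm : UpperSemicontinuousOn m K)
    (heq : ∀ y ∈ K, y ≠ p → l y + m y = 0) :
    ∃ A, 0 < A ∧ (∀ y ∈ K, |l y| ≤ A) ∧ ∀ y ∈ K, m y ≤ A := by
  obtain ⟨A₁, hA₁⟩ := hl.bddAbove_of_isCompact hK
  obtain ⟨A₂, hA₂⟩ := hm.bddAbove_of_isCompact hK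
  rw [mem_upperBounds, forall_mem_image] at hA₁ hA₂
  have h₁ := le_abs_self A₁
  have h₂ := le_abs_self A₂
  have h₃ := abs_nonneg (l p)
  refine ⟨|A₁| + |A₂| + |l p| + 1, by positivity, fun y hy => ?_,
    fun y hy => by linarith [hA₂ hy, abs_nonneg A₁]⟩
  rcases eq_or_ne y p with rfl | hyp
  · linarith [abs_nonneg A₁, abs_nonneg A₂]
  · have := heq y hy hyp
    rw [abs_le]
    constructor <;> linarith [hA₁ hy, hA₂ hy, abs_nonneg A₁, abs_nonneg A₂]

theorem exists_lipschitzOnWith_ball_diff_singleton (hΓ : CondC Γ) {Ω : Set (Euc n)}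
    (hΩ : IsOpen Ω) (hl : UpperSemicontinuousOn l Ω) (hm : UpperSemicontinuousOn m Ω)
    (hvl : IsViscositySolution (ClosureCondition Γ) Ω l)
    (hvm : IsViscositySolution (ComplCondition Γ) Ω m) (heq : ∀ y ∈ Ω, y ≠ p → l y + m y = 0)
    {x₀ : Euc n} (hx₀ : x₀ ∈ Ω) : ∃ ρ > 0, ∃ K, LipschitzOnWith K l (ball x₀ ρ \ {p}) := by
  obtain ⟨r, hr, hrΩ⟩ := nhds_basis_closedBall.mem_iff.1 (hΩ.mem_nhds hx₀)
  obtain ⟨R, hR, rfl⟩ : ∃ R, 0 < R ∧ r = 4 * R := ⟨r / 4, by positivity, by ring⟩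
  obtain ⟨A, hA₀, hAl, hAm⟩ := exists_forall_abs_le_and_le (isCompact_closedBall x₀ (4 * R))
    (hl.mono hrΩ) (hm.mono hrΩ) fun y hy => heq y (hrΩ hy)
  obtain ⟨ρ, hρ⟩ : ∃ ρ, 2 * ρ = R * Real.exp (-A) := ⟨R * Real.exp (-A) / 2, by ring⟩
  have hρ₀ : 0 < ρ := by linarith [mul_pos hR (Real.exp_pos (-A))]
  have hρR : ρ / 4 ≤ 4 * R := by
    nlinarith [Real.exp_lt_one_iff.2 (neg_lt_zero.2 hA₀)]
  refine ⟨ρ / 4, by positivity, ⟨2 / ρ, by positivity⟩,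
    LipschitzOnWith.of_le_add_mul _ fun b hb a ha => ?_⟩
  rcases eq_or_ne a b with rfl | hab
  · simp
  have hadd := add_le_mul_norm_sub hΓ hR hA₀ (hl.mono hrΩ) (hm.mono hrΩ) (hvl.mono hrΩ)
    (hvm.mono hrΩ) hAl hAm (fun y hy hyp => (heq y (hrΩ hy) hyp).le) hρ ha.1 hb.1 hab
  have := heq a (hrΩ (ball_subset_closedBall.trans (closedBall_subset_closedBall hρR) ha.1)) ha.2
  rw [dist_eq_norm]
  change l b ≤ l a + 2 / ρ * ‖b - a‖
  linarith

end MovingSpheres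

section Removability

theorem exists_eqOn_compl_forall_lipschitzOnWith {X : Type*} [PseudoMetricSpace X] [T1Space X]
    {f : X → ℝ} {s : Set X} {p : X} (hp : p ∈ s)
    (hf : ∀ x ∈ s, ∃ ρ > 0, ∃ K, LipschitzOnWith K f (ball x ρ \ {p})) :
    ∃ g, EqOn g f {p}ᶜ ∧ ∀ x ∈ s, ∃ K, ∃ t ∈ 𝓝 x, LipschitzOnWith K g t := by
  classical
  obtain ⟨ρ₀, hρ₀, K₀, hK₀⟩ := hf p hp
  obtain ⟨g, hg, hfg⟩ := hK₀.extend_real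
  have heq : EqOn (Function.update f p (g p)) f {p}ᶜ := fun y hy => Function.update_of_ne hy _ _
  have heq₀ : EqOn (Function.update f p (g p)) g (ball p ρ₀) := fun y hy => by
    rcases eq_or_ne y p with rfl | hyp
    · rw [Function.update_self]
    · rw [heq hyp, hfg ⟨hy, hyp⟩]
  refine ⟨_, heq, fun x hx => ?_⟩
  rcases eq_or_ne x p with rfl | hxp
  · exact ⟨K₀, ball x ρ₀, ball_mem_nhds x hρ₀, fun a ha b hb => by
      rw [heq₀ ha, heq₀ hb]; exact hg a b⟩
  · obtain ⟨ρ, hρ, K, hK⟩ := hf x hx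
    exact ⟨K, ball x ρ \ {p}, (isOpen_ball.sdiff isClosed_singleton).mem_nhds
      ⟨mem_ball_self hρ, hxp⟩, fun a ha b hb => by rw [heq ha.2, heq hb.2]; exact hK ha hb⟩

theorem exists_lipschitzOnWith_comp {X Y Z : Type*} [PseudoEMetricSpace X] [PseudoEMetricSpace Y]
    [PseudoEMetricSpace Z] {F : Y → Z} (hF : LocallyLipschitz F) {v : X → Y} {x : X}
    (hv : ∃ K, ∃ s ∈ 𝓝 x, LipschitzOnWith K v s) :
    ∃ K, ∃ s ∈ 𝓝 x, LipschitzOnWith K (fun y => F (v y)) s := by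
  obtain ⟨K, s, hs, hK⟩ := hv
  obtain ⟨K', t, ht, hK'⟩ := hF (v x)
  exact ⟨K' * K, s ∩ v ⁻¹' t, inter_mem hs (hK.continuousOn.continuousAt hs ht),
    hK'.comp (hK.mono inter_subset_left) fun y hy => hy.2⟩

theorem isBoundedUnder_le_of_le_sphere {E : Type*} [NormedAddCommGroup E] [ProperSpace E]
    {f : E → ℝ} {r : ℝ} (hr : 0 < r) (hf : ContinuousOn f (sphere 0 r))
    (hmax : ∀ M, (∀ y, ‖y‖ = r → f y ≤ M) → ∀ y, y ≠ 0 → ‖y‖ ≤ r → f y ≤ M) :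
    IsBoundedUnder (· ≤ ·) (𝓝[≠] 0) f := by
  obtain ⟨M, hM⟩ := ((isCompact_sphere (0 : E) r).image_of_continuousOn hf).bddAbove
  refine isBoundedUnder_of_eventually_le (a := M) ?_
  filter_upwards [self_mem_nhdsWithin, nhdsWithin_le_nhds (closedBall_mem_nhds (0 : E) hr)]
    with y hy₀ hyr
  exact hmax M (fun z hz => hM (mem_image_of_mem f (mem_sphere_zero_iff_norm.2 hz))) y hy₀
    (mem_closedBall_zero_iff.1 hyr)

variable {n : ℕ} {Γ : Set (Fin n → ℝ)}

theorem tendsto_neg_conformalLog_add_two_mul_log (hn : 2 < n) {u : Euc n → ℝ}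
    (hu : ∀ᶠ y in 𝓝[≠] 0, 0 < u y) (hlittleo : u =o[𝓝[≠] 0] fun x => ‖x‖ ^ ((2 : ℝ) - n)) :
    Tendsto (fun y => -conformalLog n (u y) + 2 * Real.log ‖y‖) (𝓝[≠] 0) atBot := by
  have hn' : (0 : ℝ) < n - 2 := sub_pos.2 (by exact_mod_cast hn)
  refine tendsto_atBot.2 fun C => ?_
  filter_upwards [hlittleo.bound (Real.exp_pos (C * ((n - 2) / 2))), hu, self_mem_nhdsWithin]
    with y hy huy hy₀
  have hnorm : 0 < ‖y‖ := norm_pos_iff.2 hy₀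
  rw [Real.norm_of_nonneg huy.le, Real.norm_of_nonneg (by positivity)] at hy
  have hlog := Real.log_le_log huy hy
  rw [Real.log_mul (by positivity) (by positivity), Real.log_exp, Real.log_rpow hnorm] at hlog
  calc -conformalLog n (u y) + 2 * Real.log ‖y‖
      = 2 / (n - 2) * Real.log (u y) + 2 * Real.log ‖y‖ := by rw [conformalLog]; ring
    _ ≤ 2 / (n - 2) * (C * ((n - 2) / 2) + (2 - n) * Real.log ‖y‖) + 2 * Real.log ‖y‖ := by gcongr
    _ = C := by field_simp; ring

section LogarithmicEquation

variable {δ R : ℝ} {l : Euc n → ℝ}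

theorem isBoundedUnder_le_and_ge_of_tendsto (hn : 0 < n) (hΓ : CondC Γ) (hδ : 0 < δ)
    (hR : 0 < R) (hplus : axialTuple n (1 + δ) (-1 + δ) ∉ closure Γ)
    (hminus : axialTuple n (-1 - δ) (1 - δ) ∈ Γ)
    (hl : IsViscositySolution (ClosureCondition Γ) (ball 0 R \ {0}) l)
    (hnl : IsViscositySolution (ComplCondition Γ) (ball 0 R \ {0}) (-l))
    (hlc : ContinuousOn l (ball 0 R \ {0}))
    (hlim : Tendsto (fun y => -l y + 2 * Real.log ‖y‖) (𝓝[≠] 0) atBot) :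
    IsBoundedUnder (· ≤ ·) (𝓝[≠] 0) l ∧ IsBoundedUnder (· ≥ ·) (𝓝[≠] 0) l := by
  have hball : closedBall (0 : Euc n) (R / 2) ⊆ ball 0 R :=
    closedBall_subset_ball (half_lt_self hR)
  have hpunctured : ball (0 : Euc n) (R / 2) \ {0} ⊆ ball 0 R \ {0} :=
    sdiff_subset_sdiff_left (ball_subset_closedBall.trans hball)
  have hc := hlc.mono (sdiff_subset_sdiff_left hball)
  have hsphere : sphere (0 : Euc n) (R / 2) ⊆ closedBall 0 (R / 2) \ {0} := fun y hy =>
    ⟨sphere_subset_closedBall hy, ne_of_mem_sphere hy (half_pos hR).ne'⟩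
  exact ⟨isBoundedUnder_le_of_le_sphere (half_pos hR) (hc.mono hsphere) fun M hM y =>
      (hl.mono hpunctured).le_of_closureCondition hn hΓ hδ hplus hc hM,
    isBoundedUnder_le_neg.1 <| isBoundedUnder_le_of_le_sphere (half_pos hR) (hc.mono hsphere).neg
      fun M hM y => (hnl.mono hpunctured).le_of_complCondition hn hΓ hδ hminus hc.neg hlim hM⟩

theorem exists_lipschitz_extension (hn : 0 < n) (hΓ : CondC Γ) (hstar : lamStar n ∉ closure Γ)
    (hstar' : (fun i => -(lamStar n i)) ∈ Γ) (hR : 0 < R)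
    (hl : IsViscositySolution (ClosureCondition Γ) (ball 0 R \ {0}) l)
    (hnl : IsViscositySolution (ComplCondition Γ) (ball 0 R \ {0}) (-l))
    (hlc : ContinuousOn l (ball 0 R \ {0}))
    (hlim : Tendsto (fun y => -l y + 2 * Real.log ‖y‖) (𝓝[≠] 0) atBot) :
    ∃ v, EqOn v l {0}ᶜ ∧ (∀ x ∈ ball 0 R, ∃ K, ∃ s ∈ 𝓝 x, LipschitzOnWith K v s) ∧
      IsViscositySolution (ClosureCondition Γ) (ball 0 R) v ∧
      IsViscositySolution (ComplCondition Γ) (ball 0 R) (-v) := by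
  have : NeZero n := ⟨hn.ne'⟩
  have : Nontrivial (Euc n) := by unfold Euc; infer_instance
  have : (𝓝[≠] (0 : Euc n)).NeBot := Module.punctured_nhds_neBot ℝ (Euc n) 0
  have hopen : IsOpen (ball (0 : Euc n) R \ {0}) := isOpen_ball.sdiff isClosed_singleton
  obtain ⟨δ, hδ, hplus, hminus⟩ := exists_axialTuple_margin hΓ.isOpen hstar hstar'
  have hFc := isClosedCondition_closureCondition Γ
  have hGc := isClosedCondition_complCondition hΓ.isOpen
  have hF := excludesRadialJets_closureCondition hn hΓ hplus
  have hG := excludesRadialJets_complCondition hn hΓ hminus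
  obtain ⟨hle, hge⟩ := isBoundedUnder_le_and_ge_of_tendsto hn hΓ hδ hR hplus hminus
    hl hnl hlc hlim
  obtain ⟨l', hl'eq, hl'usc, hl'⟩ :=
    hl.exists_upperSemicontinuousOn_extension hFc hF hδ hR hlc hle hge
  obtain ⟨m', hm'eq, hm'usc, hm'⟩ :=
    hnl.exists_upperSemicontinuousOn_extension hGc hG hδ hR hlc.neg
      (isBoundedUnder_le_neg.2 hge) (isBoundedUnder_ge_neg.2 hle)
  have hsum : ∀ y ∈ ball (0 : Euc n) R, y ≠ 0 → l' y + m' y = 0 := fun y _ hy => by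
    rw [hl'eq hy, hm'eq hy, Pi.neg_apply, add_neg_cancel]
  obtain ⟨v, hv, hLip⟩ := exists_eqOn_compl_forall_lipschitzOnWith (mem_ball_self hR) fun _ =>
    exists_lipschitzOnWith_ball_diff_singleton hΓ isOpen_ball hl'usc hm'usc hl' hm' hsum
  have hvl : EqOn v l {0}ᶜ := hv.trans hl'eq
  have hvl' : EqOn v l (ball 0 R \ {0}) := hvl.mono fun y hy => hy.2
  obtain ⟨K, s, hs, hK⟩ := hLip 0 (mem_ball_self hR)
  have hv₀ : Tendsto v (𝓝[≠] 0) (𝓝 (v 0)) :=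
    (hK.continuousOn.continuousAt hs).tendsto.mono_left nhdsWithin_le_nhds
  exact ⟨v, hvl, hLip,
    (hl.congr hopen hvl'.symm).of_punctured_ball hFc hF hδ hR (hlc.congr hvl') fun a ha =>
      (hv₀.eventually_const_lt ha).frequently,
    (hnl.congr hopen fun y hy => by simp [hvl' hy]).of_punctured_ball hGc hG hδ hR
      (hlc.congr hvl').neg fun a ha => (hv₀.neg.eventually_const_lt ha).frequently⟩

end LogarithmicEquation

end Removability

/-- **Removability of isolated singularities** (Theorem 1.18): for `n ≥ 3` and a cone `Γ`
satisfying condition (C) with `λ* ∉ closure Γ` and `-λ* ∈ Γ`, every positive continuous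
viscosity solution `u` of `λ(A^u) ∈ ∂Γ` in `B ∖ {0}` with `u(x) = o(|x|^{2-n})` as `x → 0`
extends to a positive locally Lipschitz viscosity solution on all of `B`. -/
theorem removable_singularity
    {n : ℕ} (hn : 3 ≤ n) (Γ : Set (Fin n → ℝ)) (hΓ : CondC Γ)
    (hstar : lamStar n ∉ closure Γ) (hstar' : (fun i => -(lamStar n i)) ∈ Γ)
    (B : Set (Euc n)) (hB : B = Metric.ball (0 : Euc n) 1)
    (u : Euc n → ℝ) (hpos : ∀ x ∈ B \ {0}, 0 < u x)
    (hcont : ContinuousOn u (B \ {0}))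
    (hsup : SupersolU Γ (B \ {0}) u) (hsub : SubsolU Γ (B \ {0}) u)
    (hlittleo : u =o[𝓝[B \ {0}] (0 : Euc n)] fun x => ‖x‖ ^ ((2 : ℝ) - n)) :
    ∃ w : Euc n → ℝ, Set.EqOn w u (B \ {0}) ∧ (∀ x ∈ B, 0 < w x) ∧
      (∀ x ∈ B, ∃ K : ℝ≥0, ∃ s ∈ 𝓝[B] x, LipschitzOnWith K w s) ∧
      SupersolU Γ B w ∧ SubsolU Γ B w := by
  subst hB
  have hopen : IsOpen (ball (0 : Euc n) 1 \ {0}) := isOpen_ball.sdiff isClosed_singleton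
  have hmem : ball (0 : Euc n) 1 \ {0} ∈ 𝓝[≠] 0 :=
    sdiff_mem_nhdsWithin_compl (ball_mem_nhds 0 one_pos) {0}
  obtain ⟨v, hvu, hLip, hvsup, hvsub⟩ := exists_lipschitz_extension
    (l := fun x => conformalLog n (u x)) (by lia) hΓ hstar hstar' one_pos
    ((supersolU_iff hn hΓ hopen hpos).1 hsup) ((subsolU_iff hn hΓ hopen hpos).1 hsub)
    ((hcont.log fun x hx => (hpos x hx).ne').const_mul _)
    (tendsto_neg_conformalLog_add_two_mul_log hn (mem_of_superset hmem hpos)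
      (hlittleo.mono (nhdsWithin_le_of_mem hmem)))
  set F : ℝ → ℝ := fun t => Real.exp (-((n - 2) / 2) * t)
  have hF : LocallyLipschitz F := ContDiff.locallyLipschitz (by fun_prop)
  have hFpos : ∀ x ∈ ball (0 : Euc n) 1, 0 < F (v x) := fun x _ => Real.exp_pos _
  have hlog : ∀ x, conformalLog n (F (v x)) = v x := fun x => conformalLog_exp hn (v x)
  refine ⟨fun x => F (v x), fun x hx => ?_, hFpos, fun x hx => ?_,
    (supersolU_iff hn hΓ isOpen_ball hFpos).2 (by simpa only [hlog]),
    (subsolU_iff hn hΓ isOpen_ball hFpos).2 (by simpa only [hlog])⟩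
  · simp only [F, hvu hx.2, exp_conformalLog hn (hpos x hx)]
  · obtain ⟨K, s, hs, hK⟩ := exists_lipschitzOnWith_comp hF (hLip x hx)
    exact ⟨K, s, nhdsWithin_le_nhds hs, hK⟩
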